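/- For every nonnegative integer n, the number of partitions of 5n+1 without repeated odd parts whose M₂-rank is congruent to 1 modulo 5 equals the number of partitions of 5n+1 without repeated odd parts whose M₂-rank is congruent to 2 modulo 5; that is, N₂(1,5,5n+1) = N₂(2,5,5n+1). -/

import Mathlib

/-!
Write `D(x) = ∑ (N₂(1,5,n) - N₂(2,5,n)) xⁿ`. The theorem says that `D` has no terms with exponent
`≡ 1 mod 5`; all series are treated as convergent series for `‖x‖ < 1/2`.

*Generating function.* Remove the largest part of a partition, add `2` to the remaining parts, and
pad with parts `2` and at most one part `1`. This maps the partitions with M₂-rank `≥ -m-1`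
bijectively to those with rank `≤ -m` and changes the size by `2m+1` (`gf_shift`). The resulting
recurrences have a unique bounded solution, a partial theta series (`gfGe_eq`, `gfLe_eq`), and
summing over the rank gives (`gfDiff_eq`), with sums over `n ∈ ℤ`,
`(∑ q^{2n²+n}) D(-q) = 2 ∑_{n≠0} q^{2n²+3n}/(1-q^{10n}) - ∑_{n≠0} q^{2n²+n}/(1-q^{10n})`.

*Partial fractions.* Splitting `n` modulo `5` turns the right-hand side into bilateral Lambert
series `∑ w^{m²} yᵐ/(1 - wᵐ x)` with `Q = q⁵`, `w = Q¹⁰` and `x`, `y` powers of `Q`. A quotient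
`θ(at)/(θ(bt)θ(ct)θ(dt))` of theta functions of nome `w` minus its expansion into three such series
has only removable singularities and satisfies `Φ(wt) = κ t² Φ(t) + α + β t`; such a function is
bounded on the punctured plane, hence zero (`zero_of_quasiperiodic`), and `α = 0` as well. This
gives linear relations between Lambert series (`partial_fractions`, and `partial_fractions_one` when
a pole is at `t = 1`) and between theta series (`pfDefect_eq_zero`).

*Dissection.* These relations eliminate all Lambert series but two. The remaining theta quotients
and logarithmic derivatives are compared with Weierstrass' three-term relation (`weierstrass`) and
its infinitesimal form (`weierstrass_deriv`), and it follows that `D(-q)` is a combination of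
`1, q², q³, q⁴` with coefficients depending on `q⁵` only (`dissection`). Averaging over the fifth
roots of unity and uniqueness of power series coefficients finish the proof.
-/

/-- The infinite q-Pochhammer symbol `(a; q)_∞ = ∏_{k ≥ 0} (1 - a qᵏ)`. -/
noncomputable def qPoch (a q : ℂ) : ℂ := ∏' k : ℕ, (1 - a * q ^ k)

/-- A partition has no repeated odd parts: each odd number occurs at most once as a part. -/
def Nat.Partition.noRepeatedOdd {n : ℕ} (p : n.Partition) : Prop :=
  ∀ i, Odd i → p.parts.count i ≤ 1

/-- The M₂-rank of a partition: ⌈(largest part)/2⌉ minus the number of parts. -/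
def Nat.Partition.m2Rank {n : ℕ} (p : n.Partition) : ℤ :=
  (((p.parts.sup + 1) / 2 : ℕ) : ℤ) - (Multiset.card p.parts : ℤ)

/-- `N2 s ℓ n` is the number of partitions of `n` without repeated odd parts whose
M₂-rank is congruent to `s` modulo `ℓ`. -/
noncomputable def N2 (s ℓ n : ℕ) : ℕ :=
  Nat.card {p : n.Partition // p.noRepeatedOdd ∧ p.m2Rank ≡ (s : ℤ) [ZMOD (ℓ : ℤ)]}

open Filter Topology

/-! ### Removable singularities and multiplicatively periodic functions -/

/-- Every orbit of `t ↦ w t` on the punctured plane meets the annulus `‖w‖ ≤ ‖t‖ ≤ 1`. -/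
lemma exists_zpow_annulus {w : ℂ} (h0 : w ≠ 0) (h1 : ‖w‖ < 1) {t : ℂ} (ht : t ≠ 0) :
    ∃ n : ℤ, ‖w‖ ≤ ‖w ^ n * t‖ ∧ ‖w ^ n * t‖ ≤ 1 := by
  have hw : 0 < ‖w‖ := norm_pos_iff.mpr h0
  obtain ⟨n, hn1, hn2⟩ := exists_mem_Ioc_zpow (x := ‖t‖) (y := ‖w‖⁻¹) (norm_pos_iff.mpr ht)
    ((one_lt_inv₀ hw).mpr h1)
  refine ⟨n + 1, ?_, ?_⟩
  · rw [norm_mul, norm_zpow, zpow_add₀ hw.ne', zpow_one]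
    rw [inv_zpow, inv_lt_iff_one_lt_mul₀ (zpow_pos hw n)] at hn1
    nlinarith
  · rw [norm_mul, norm_zpow]
    rw [inv_zpow] at hn2
    have := zpow_pos hw (n + 1)
    calc ‖w‖ ^ (n+1) * ‖t‖ ≤ ‖w‖ ^ (n+1) * (‖w‖ ^ (n+1))⁻¹ := by gcongr
      _ = 1 := mul_inv_cancel₀ this.ne.symm

/-- Liouville's theorem on the punctured plane. -/
lemma const_of_bounded_punctured {f : ℂ → ℂ} (hf : ∀ t, t ≠ 0 → DifferentiableAt ℂ f t)
    {M : ℝ} (hM : ∀ t, t ≠ 0 → ‖f t‖ ≤ M) : ∃ c, ∀ t, t ≠ 0 → f t = c := by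
  have hd : DifferentiableOn ℂ (Function.update f 0 (limUnder (𝓝[≠] 0) f)) Set.univ := by
    apply Complex.differentiableOn_update_limUnder_of_bddAbove (univ_mem)
    · intro t ht
      exact (hf t (by simpa using ht.2)).differentiableWithinAt
    · refine ⟨M, ?_⟩
      rintro _ ⟨t, ht, rfl⟩
      exact hM t (by simpa using ht.2)
  have hd' : Differentiable ℂ (Function.update f 0 (limUnder (𝓝[≠] 0) f)) :=
    differentiableOn_univ.mp hd
  refine ⟨f 1, fun t ht => ?_⟩
  have hb : Bornology.IsBounded (Set.range (Function.update f 0 (limUnder (𝓝[≠] 0) f))) := by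
    rw [isBounded_iff_forall_norm_le]
    refine ⟨max M ‖limUnder (𝓝[≠] (0:ℂ)) f‖, ?_⟩
    rintro _ ⟨s, rfl⟩
    by_cases hs : s = 0
    · subst hs; simp
    · rw [Function.update_of_ne hs]
      exact (hM s hs).trans (le_max_left _ _)
  have := hd'.apply_eq_apply_of_bounded hb t 1
  rwa [Function.update_of_ne ht, Function.update_of_ne one_ne_zero] at this

/-- `Extends Φ t`: near `t`, away from `t` itself, `Φ` agrees with a function analytic at `t`. -/
def Extends (Φ : ℂ → ℂ) (t : ℂ) : Prop := ∃ g : ℂ → ℂ, AnalyticAt ℂ g t ∧ Φ =ᶠ[𝓝[≠] t] g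

lemma Extends.of_analyticAt {Φ : ℂ → ℂ} {t : ℂ} (h : AnalyticAt ℂ Φ t) : Extends Φ t :=
  ⟨Φ, h, Filter.EventuallyEq.rfl⟩

/-- Local analytic extensions glue to one function, since they agree near each point. -/
lemma Extends.exists_global {Φ : ℂ → ℂ} (h : ∀ t, t ≠ 0 → Extends Φ t) :
    ∃ Ψ : ℂ → ℂ, (∀ t, t ≠ 0 → DifferentiableAt ℂ Ψ t) ∧ ∀ t, t ≠ 0 → Φ =ᶠ[𝓝[≠] t] Ψ := by
  choose! g hg1 hg2 using h
  have key : ∀ t, t ≠ 0 → (fun s => g s s) =ᶠ[𝓝 t] g t := by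
    intro t ht
    have e1 : ∀ᶠ s in 𝓝[≠] t, Φ s = g t s := hg2 t ht
    rw [eventually_nhdsWithin_iff] at e1
    have e2 := e1.eventually_nhds
    have e3 : ∀ᶠ s in 𝓝 t, AnalyticAt ℂ (g t) s := (hg1 t ht).eventually_analyticAt
    have e4 : ∀ᶠ s in 𝓝 t, s ≠ 0 := eventually_ne_nhds ht
    filter_upwards [e2, e3, e4] with s h2 h3 h4
    by_cases hst : s = t
    · subst hst; rfl
    have h5 : Φ =ᶠ[𝓝[≠] s] g t := by
      rw [EventuallyEq, eventually_nhdsWithin_iff]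
      filter_upwards [h2, eventually_ne_nhds hst] with u hu hu' _
      exact hu hu'
    have h6 : g s =ᶠ[𝓝[≠] s] g t := (hg2 s h4).symm.trans h5
    exact tendsto_nhds_unique
      ((hg1 s h4).continuousAt.tendsto.mono_left nhdsWithin_le_nhds)
      ((h3.continuousAt.tendsto.mono_left nhdsWithin_le_nhds).congr' h6.symm)
  refine ⟨fun s => g s s, fun t ht => ?_, fun t ht => ?_⟩
  · exact ((hg1 t ht).differentiableAt).congr_of_eventuallyEq (key t ht)
  · exact (hg2 t ht).trans ((key t ht).filter_mono nhdsWithin_le_nhds).symm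

lemma compact_annulus (a b : ℝ) : IsCompact {t : ℂ | a ≤ ‖t‖ ∧ ‖t‖ ≤ b} := by
  have : {t : ℂ | a ≤ ‖t‖ ∧ ‖t‖ ≤ b} = {t : ℂ | a ≤ ‖t‖} ∩ Metric.closedBall 0 b := by
    ext t; simp
  rw [this]
  exact (isCompact_closedBall 0 b).inter_left (isClosed_le continuous_const continuous_norm)

lemma bounded_on_annulus {f : ℂ → ℂ} (hf : ∀ t, t ≠ 0 → DifferentiableAt ℂ f t) {a : ℝ}
    (ha : 0 < a) (b : ℝ) : ∃ M : ℝ, ∀ t, a ≤ ‖t‖ → ‖t‖ ≤ b → ‖f t‖ ≤ M := by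
  obtain ⟨M, hM⟩ := (compact_annulus a b).exists_bound_of_continuousOn (f := f) (fun t ht => by
    have : t ≠ 0 := norm_pos_iff.mp (ha.trans_le ht.1)
    exact (hf t this).continuousAt.continuousWithinAt)
  exact ⟨M, fun t h1 h2 => hM t ⟨h1, h2⟩⟩

lemma eq_of_eventuallyEq_ne {f g : ℂ → ℂ} {t : ℂ} (hf : ContinuousAt f t) (hg : ContinuousAt g t)
    (h : f =ᶠ[𝓝[≠] t] g) : f t = g t :=
  tendsto_nhds_unique (hf.tendsto.mono_left nhdsWithin_le_nhds)
    ((hg.tendsto.mono_left nhdsWithin_le_nhds).congr' h.symm)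

lemma tendsto_mul_punctured {w : ℂ} (hw : w ≠ 0) (t : ℂ) :
    Tendsto (fun s => w * s) (𝓝[≠] t) (𝓝[≠] (w * t)) := by
  apply tendsto_nhdsWithin_of_tendsto_nhds_of_eventually_within
  · exact ((continuous_const.mul continuous_id).tendsto t).mono_left nhdsWithin_le_nhds
  · filter_upwards [self_mem_nhdsWithin] with s hs
    simpa [hw] using hs

/-- A function on the punctured plane with removable singularities which is invariant under
`t ↦ w t` is constant. -/
lemma const_of_periodic {w : ℂ} (h0 : w ≠ 0) (h1 : ‖w‖ < 1) {Φ : ℂ → ℂ}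
    (hext : ∀ t, t ≠ 0 → Extends Φ t)
    (hper : ∀ t, t ≠ 0 → ∀ᶠ s in 𝓝[≠] t, Φ (w * s) = Φ s) :
    ∃ c, ∀ t, t ≠ 0 → ∀ᶠ s in 𝓝[≠] t, Φ s = c := by
  obtain ⟨Ψ, hΨ, hΦ⟩ := Extends.exists_global hext
  have hw : 0 < ‖w‖ := norm_pos_iff.mpr h0
  have hfe : ∀ t, t ≠ 0 → Ψ (w * t) = Ψ t := by
    intro t ht
    have hwt : w * t ≠ 0 := mul_ne_zero h0 ht
    refine eq_of_eventuallyEq_ne (f := fun s => Ψ (w * s)) (g := Ψ)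
      ((hΨ _ hwt).continuousAt.comp (f := fun s => w * s) (by fun_prop))
      (hΨ t ht).continuousAt ?_
    filter_upwards [hper t ht, hΦ t ht, (tendsto_mul_punctured h0 t).eventually (hΦ _ hwt)]
      with s a b c
    rw [← c, a, b]
  have hz : ∀ (n : ℤ) t, t ≠ 0 → Ψ (w ^ n * t) = Ψ t := by
    intro n
    induction n using Int.induction_on with
    | zero => intro t _; simp
    | succ n ih =>
      intro t ht
      rw [← ih t ht, ← hfe (w ^ (n:ℤ) * t) (mul_ne_zero (zpow_ne_zero _ h0) ht), zpow_add₀ h0,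
        zpow_one]
      congr 1; ring
    | pred n ih =>
      intro t ht
      rw [← ih t ht, ← hfe (w ^ (-(n:ℤ) - 1) * t) (mul_ne_zero (zpow_ne_zero _ h0) ht),
        zpow_sub₀ h0, zpow_one]
      congr 1; field_simp
  obtain ⟨M, hM⟩ := bounded_on_annulus hΨ hw 1
  obtain ⟨c, hc⟩ := const_of_bounded_punctured hΨ (M := M) (fun t ht => by
    obtain ⟨n, hn1, hn2⟩ := exists_zpow_annulus h0 h1 ht
    rw [← hz n t ht]
    exact hM _ hn1 hn2)
  refine ⟨c, fun t ht => ?_⟩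
  have : ∀ᶠ s in 𝓝[≠] t, s ≠ 0 := (eventually_ne_nhds ht).filter_mono nhdsWithin_le_nhds
  filter_upwards [hΦ t ht, this] with s a b
  rw [a, hc s b]

/-- Singularities move along `t ↦ w t` through a functional equation. -/
lemma Extends.zpow_mul {w : ℂ} (h0 : w ≠ 0) {Φ : ℂ → ℂ} {κ α β : ℂ} (hκ : κ ≠ 0)
    (hfe : ∀ t, t ≠ 0 → ∀ᶠ s in 𝓝[≠] t, Φ (w * s) = κ * s ^ 2 * Φ s + α + β * s)
    {t : ℂ} (ht : t ≠ 0) (h : Extends Φ t) (n : ℤ) : Extends Φ (w ^ n * t) := by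
  have up : ∀ t, t ≠ 0 → Extends Φ t → Extends Φ (w * t) := by
    rintro t ht ⟨g, hg, hΦ⟩
    have hw : w⁻¹ * (w * t) = t := by field_simp
    refine ⟨fun s => κ * (w⁻¹ * s) ^ 2 * g (w⁻¹ * s) + α + β * (w⁻¹ * s), ?_, ?_⟩
    · have : AnalyticAt ℂ (fun s => g (w⁻¹ * s)) (w * t) := by
        apply AnalyticAt.fun_comp (f := fun s => w⁻¹ * s)
        · rwa [hw]
        · fun_prop
      have h2 : AnalyticAt ℂ (fun s => κ * (w⁻¹ * s) ^ 2) (w * t) := by fun_prop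
      have h3 : AnalyticAt ℂ (fun s => β * (w⁻¹ * s)) (w * t) := by fun_prop
      exact ((h2.fun_mul this).fun_add analyticAt_const).fun_add h3
    · have e := tendsto_mul_punctured (inv_ne_zero h0) (w * t)
      rw [hw] at e
      filter_upwards [e.eventually hΦ, e.eventually (hfe t ht)] with s a b
      rw [← a, ← b]
      congr 1; field_simp
  have down : ∀ t, t ≠ 0 → Extends Φ (w * t) → Extends Φ t := by
    rintro t ht ⟨g, hg, hΦ⟩
    refine ⟨fun s => (g (w * s) - α - β * s) / (κ * s ^ 2), ?_, ?_⟩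
    · have : AnalyticAt ℂ (fun s => g (w * s)) t := by
        apply AnalyticAt.fun_comp (f := fun s => w * s) hg
        fun_prop
      apply AnalyticAt.div (by fun_prop) (by fun_prop)
      exact mul_ne_zero hκ (pow_ne_zero _ ht)
    · have : ∀ᶠ s in 𝓝[≠] t, s ≠ 0 := (eventually_ne_nhds ht).filter_mono nhdsWithin_le_nhds
      filter_upwards [(tendsto_mul_punctured h0 t).eventually hΦ, hfe t ht, this] with s a b c
      rw [← a, b]
      field_simp
      ring
  induction n using Int.induction_on with
  | zero => simpa using h
  | succ n ih =>
    have := up _ (mul_ne_zero (zpow_ne_zero _ h0) ht) ih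
    rwa [← mul_assoc, ← zpow_one_add₀ h0, add_comm] at this
  | pred n ih =>
    apply down _ (mul_ne_zero (zpow_ne_zero _ h0) ht)
    rwa [← mul_assoc, ← zpow_one_add₀ h0, add_sub_cancel]

/-- A function on the punctured plane with removable singularities, satisfying
`Φ (w t) = κ t² Φ t + α + β t`, is bounded near `0` and near `∞`, hence constant, hence zero;
in particular `α = 0`. -/
lemma zero_of_quasiperiodic {w : ℂ} (h0 : w ≠ 0) (h1 : ‖w‖ < 1) {Φ : ℂ → ℂ} {κ α β : ℂ}
    (hκ : κ ≠ 0) (hext : ∀ t, t ≠ 0 → Extends Φ t)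
    (hfe : ∀ t, t ≠ 0 → ∀ᶠ s in 𝓝[≠] t, Φ (w * s) = κ * s ^ 2 * Φ s + α + β * s) :
    (∀ t, t ≠ 0 → ∀ᶠ s in 𝓝[≠] t, Φ s = 0) ∧ α = 0 := by
  obtain ⟨Ψ, hΨ, hΦ⟩ := Extends.exists_global hext
  have hw : 0 < ‖w‖ := norm_pos_iff.mpr h0
  have hκ' : 0 < ‖κ‖ := norm_pos_iff.mpr hκ
  have hfe : ∀ t, t ≠ 0 → Ψ (w * t) = κ * t ^ 2 * Ψ t + α + β * t := by
    intro t ht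
    have hwt : w * t ≠ 0 := mul_ne_zero h0 ht
    have := (hΨ t ht).continuousAt
    refine eq_of_eventuallyEq_ne (f := fun s => Ψ (w * s))
      (g := fun t => κ * t ^ 2 * Ψ t + α + β * t)
      ((hΨ _ hwt).continuousAt.comp (f := fun s => w * s) (by fun_prop)) (by fun_prop) ?_
    filter_upwards [hfe t ht, hΦ t ht, (tendsto_mul_punctured h0 t).eventually (hΦ _ hwt)]
      with s a b c
    rw [← c, a, b]
  -- `N` is so large that the factor `κ t²` is at most `1/2` below `‖w‖ ^ N` and at least `2`
  -- above `‖w‖ ^ (-N)`.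
  obtain ⟨N, hN⟩ : ∃ N : ℕ, ‖w‖ ^ N < min 1 (min (1 / (2 * ‖κ‖)) (‖κ‖ / 2)) := by
    apply exists_pow_lt_of_lt_one _ h1
    positivity
  rw [lt_min_iff, lt_min_iff] at hN
  obtain ⟨hN1, hN2, hN3⟩ := hN
  have hwN : 0 < ‖w‖ ^ N := pow_pos hw N
  obtain ⟨M, hM⟩ := bounded_on_annulus hΨ (a := ‖w‖ ^ (N + 1)) (by positivity) (‖w‖ ^ N)⁻¹
  set K : ℝ := max M (max (2 * (‖α‖ + ‖β‖)) (2 * ((‖α‖ + ‖β‖) / ‖κ‖))) with hK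
  have hK1 : M ≤ K := le_max_left _ _
  have hK2 : 2 * (‖α‖ + ‖β‖) ≤ K := (le_max_left _ _).trans (le_max_right _ _)
  have hK3 : 2 * ((‖α‖ + ‖β‖) / ‖κ‖) ≤ K := (le_max_right _ _).trans (le_max_right _ _)
  have hK0 : 0 ≤ K := le_trans (by positivity) hK2
  have small : ∀ t, t ≠ 0 → ‖t‖ ≤ ‖w‖ ^ N → ‖Ψ t‖ ≤ K → ‖Ψ (w * t)‖ ≤ K := by
    intro t ht h2 h3
    rw [hfe t ht]
    have ht1 : ‖t‖ ≤ 1 := h2.trans hN1.le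
    have ht2 : ‖κ‖ * ‖t‖ ^ 2 ≤ 1 / 2 := by
      have : ‖t‖ ^ 2 ≤ 1 / (2 * ‖κ‖) := by nlinarith [norm_nonneg t]
      calc ‖κ‖ * ‖t‖ ^ 2 ≤ ‖κ‖ * (1 / (2 * ‖κ‖)) := by gcongr
        _ = 1 / 2 := by field_simp
    calc ‖κ * t ^ 2 * Ψ t + α + β * t‖ ≤ ‖κ * t ^ 2 * Ψ t‖ + ‖α‖ + ‖β * t‖ := norm_add₃_le
      _ = ‖κ‖ * ‖t‖ ^ 2 * ‖Ψ t‖ + ‖α‖ + ‖β‖ * ‖t‖ := by simp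
      _ ≤ 1 / 2 * K + ‖α‖ + ‖β‖ * 1 := by gcongr
      _ ≤ K := by linarith
  have large : ∀ t, t ≠ 0 → (‖w‖ ^ N)⁻¹ ≤ ‖t‖ → ‖Ψ (w * t)‖ ≤ K → ‖Ψ t‖ ≤ K := by
    intro t ht h2 h3
    have ht1 : 1 ≤ ‖t‖ := le_trans ((one_le_inv₀ hwN).mpr hN1.le) h2
    have ht2 : 2 ≤ ‖κ‖ * ‖t‖ := by
      have : 2 / ‖κ‖ ≤ ‖t‖ := by
        refine le_trans ?_ h2
        rw [← inv_div]
        exact inv_anti₀ hwN hN3.le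
      rwa [div_le_iff₀ hκ', mul_comm] at this
    have e : Ψ t = (Ψ (w * t) - α - β * t) / (κ * t ^ 2) := by
      rw [hfe t ht]; field_simp; ring
    rw [e, norm_div, norm_mul, norm_pow, div_le_iff₀ (by positivity)]
    have hab : 2 * (‖α‖ + ‖β‖) ≤ K * ‖κ‖ := by
      rwa [← mul_div_assoc, div_le_iff₀ hκ'] at hK3
    calc ‖Ψ (w * t) - α - β * t‖ ≤ ‖Ψ (w * t)‖ + ‖α‖ + ‖β * t‖ :=
          (norm_sub_le _ _).trans (by gcongr; exact norm_sub_le _ _)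
      _ ≤ K + ‖α‖ + ‖β‖ * ‖t‖ := by rw [norm_mul]; gcongr
      _ ≤ K * ‖t‖ + (‖α‖ + ‖β‖) * ‖t‖ ^ 2 := by
        nlinarith [norm_nonneg α, norm_nonneg β, mul_nonneg (norm_nonneg α) (norm_nonneg t),
          mul_nonneg (norm_nonneg β) (norm_nonneg t)]
      _ ≤ K * (‖κ‖ * ‖t‖ ^ 2) := by
        have h4 : K * ‖t‖ * 2 ≤ K * ‖t‖ * (‖κ‖ * ‖t‖) := by gcongr
        have h5 : 2 * (‖α‖ + ‖β‖) * ‖t‖ ^ 2 ≤ K * ‖κ‖ * ‖t‖ ^ 2 := by gcongr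
        nlinarith
  have hbd : ∀ t, t ≠ 0 → ‖Ψ t‖ ≤ K := by
    intro t ht
    obtain ⟨n, hn1, hn2⟩ := exists_zpow_annulus h0 h1 ht
    obtain ⟨s, hs⟩ : ∃ s, s = w ^ n * t := ⟨_, rfl⟩
    rw [← hs] at hn1 hn2
    have hs0 : s ≠ 0 := norm_pos_iff.mp (hw.trans_le hn1)
    have hts : t = w ^ (-n) * s := by rw [hs, zpow_neg]; field_simp
    have hz : ∀ m : ℤ, w ^ m * s ≠ 0 := fun m => mul_ne_zero (zpow_ne_zero _ h0) hs0
    have hpos : ∀ m : ℤ, (N : ℤ) ≤ m → ‖Ψ (w ^ m * s)‖ ≤ K := by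
      intro m hm
      induction m, hm using Int.leInduction with
      | base =>
        refine (hM _ ?_ ?_).trans hK1
        · rw [norm_mul, norm_zpow, zpow_natCast, pow_succ]; gcongr
        · rw [norm_mul, norm_zpow, zpow_natCast]
          have : 1 ≤ (‖w‖ ^ N)⁻¹ := (one_le_inv₀ hwN).mpr hN1.le
          nlinarith
      | succ m hm ih =>
        rw [add_comm, zpow_one_add₀ h0, mul_assoc]
        refine small _ (hz m) ?_ ih
        rw [norm_mul, norm_zpow]
        have : ‖w‖ ^ m ≤ ‖w‖ ^ (N : ℤ) := zpow_le_zpow_right_of_le_one₀ hw h1.le hm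
        rw [zpow_natCast] at this
        nlinarith
    have hneg : ∀ m : ℤ, m ≤ (N : ℤ) → ‖Ψ (w ^ m * s)‖ ≤ K := by
      intro m hm
      by_cases hm2 : -(N : ℤ) ≤ m
      · refine (hM _ ?_ ?_).trans hK1
        · rw [norm_mul, norm_zpow, pow_succ]
          have : ‖w‖ ^ (N : ℤ) ≤ ‖w‖ ^ m := zpow_le_zpow_right_of_le_one₀ hw h1.le hm
          rw [zpow_natCast] at this
          gcongr
        · rw [norm_mul, norm_zpow]
          have : ‖w‖ ^ m ≤ ‖w‖ ^ (-(N : ℤ)) := zpow_le_zpow_right_of_le_one₀ hw h1.le hm2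
          rw [zpow_neg, zpow_natCast] at this
          have h3 : 0 < (‖w‖ ^ N)⁻¹ := by positivity
          nlinarith [norm_nonneg s]
      · push Not at hm2
        have hm2' : m ≤ -(N : ℤ) := hm2.le
        clear hm2 hm
        induction m, hm2' using Int.leInductionDown with
        | base =>
          refine (hM _ ?_ ?_).trans hK1
          · rw [norm_mul, norm_zpow, zpow_neg, zpow_natCast, pow_succ]
            have : 1 ≤ (‖w‖ ^ N)⁻¹ := (one_le_inv₀ hwN).mpr hN1.le
            gcongr
            exact hN1.le.trans this
          · rw [norm_mul, norm_zpow, zpow_neg, zpow_natCast]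
            have : 0 < (‖w‖ ^ N)⁻¹ := by positivity
            nlinarith
        | pred m hm ih =>
          apply large _ (hz _)
          · rw [norm_mul, norm_zpow, zpow_sub₀ hw.ne', zpow_one]
            have : ‖w‖ ^ (-(N : ℤ)) ≤ ‖w‖ ^ m := zpow_le_zpow_right_of_le_one₀ hw h1.le hm
            rw [zpow_neg, zpow_natCast] at this
            refine this.trans ?_
            rw [div_mul_eq_mul_div, le_div_iff₀ hw]
            gcongr
          · rwa [← mul_assoc, ← zpow_one_add₀ h0, add_sub_cancel]
    rw [hts]
    rcases le_total (-n) N with h | h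
    · exact hneg _ h
    · exact hpos _ h
  obtain ⟨c, hc⟩ := const_of_bounded_punctured hΨ hbd
  have hcc : ∀ t, t ≠ 0 → c = κ * t ^ 2 * c + α + β * t := by
    intro t ht
    rw [← hc t ht]
    conv_lhs => rw [hc t ht, ← hc _ (mul_ne_zero h0 ht)]
    exact hfe t ht
  -- a constant satisfying the equation vanishes: compare `t = 1, -1, 2, -2`
  have c1 := hcc 1 one_ne_zero
  have c2 := hcc (-1) (by norm_num)
  have c3 := hcc 2 (by norm_num)
  have c4 := hcc (-2) (by norm_num)
  have hc0 : c = 0 := by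
    have : κ * c = 0 := by linear_combination (1 / 6) * (c1 + c2 - c3 - c4)
    simpa [hκ] using this
  subst hc0
  refine ⟨fun t ht => ?_, ?_⟩
  · have : ∀ᶠ s in 𝓝[≠] t, s ≠ 0 := (eventually_ne_nhds ht).filter_mono nhdsWithin_le_nhds
    filter_upwards [hΦ t ht, this] with s a b
    rw [a, hc s b]
  · linear_combination (-1 / 2) * (c1 + c2)

/-! ### The theta function -/

lemma summable_qPoch {w : ℂ} (h1 : ‖w‖ < 1) (a : ℂ) : Summable fun k : ℕ => ‖-(a * w ^ k)‖ := by
  simp only [norm_neg, norm_mul, norm_pow]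
  exact (summable_geometric_of_lt_one (norm_nonneg _) h1).mul_left _

lemma multipliable_qPoch {w : ℂ} (h1 : ‖w‖ < 1) (a : ℂ) :
    Multipliable fun k : ℕ => 1 - a * w ^ k := by
  simpa [sub_eq_add_neg] using multipliable_one_add_of_summable (summable_qPoch h1 a)

lemma qPoch_ne_zero {w : ℂ} (h1 : ‖w‖ < 1) {a : ℂ} (h : ∀ k : ℕ, a * w ^ k ≠ 1) :
    qPoch a w ≠ 0 := by
  have := tprod_one_add_ne_zero_of_summable (f := fun k : ℕ => -(a * w ^ k))
    (fun k => by rw [← sub_eq_add_neg, sub_ne_zero]; exact (h k).symm) (summable_qPoch h1 a)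
  simpa [sub_eq_add_neg, qPoch] using this

lemma qPoch_eq {w : ℂ} (h1 : ‖w‖ < 1) (a : ℂ) : qPoch a w = (1 - a) * qPoch (a * w) w := by
  rw [qPoch, tprod_eq_zero_mul' (by
    simpa [pow_succ', mul_assoc] using multipliable_qPoch h1 (a * w))]
  simp [qPoch, pow_succ', mul_assoc]

lemma differentiable_qPoch {w : ℂ} (h1 : ‖w‖ < 1) : Differentiable ℂ fun a => qPoch a w := by
  intro a
  have h : HasProdLocallyUniformlyOn (fun (k : ℕ) (x : ℂ) => 1 + -(x * w ^ k))
      (fun x => ∏' k : ℕ, (1 + -(x * w ^ k))) (Metric.ball 0 (‖a‖ + 1)) := by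
    apply Summable.hasProdLocallyUniformlyOn_nat_one_add (u := fun k => (‖a‖ + 1) * ‖w‖ ^ k)
      Metric.isOpen_ball
    · exact (summable_geometric_of_lt_one (norm_nonneg _) h1).mul_left _
    · refine Eventually.of_forall fun k x hx => ?_
      rw [norm_neg, norm_mul, norm_pow]
      gcongr
      simpa using (mem_ball_zero_iff.mp hx).le
    · intro k; fun_prop
  have hd := h.differentiableOn (Eventually.of_forall fun s => by
    simp only
    fun_prop) Metric.isOpen_ball
  have := hd.differentiableAt (Metric.isOpen_ball.mem_nhds (x := a) (by simp))
  simpa [qPoch, sub_eq_add_neg] using this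

lemma analyticAt_qPoch {w : ℂ} (h1 : ‖w‖ < 1) (a : ℂ) : AnalyticAt ℂ (fun a => qPoch a w) a :=
  (differentiable_qPoch h1).analyticAt a

/-- The theta function `θ(x) = ∏_{k ≥ 0} (1 - x wᵏ)(1 - wᵏ⁺¹ / x)` of nome `w`. -/
noncomputable def theta (w x : ℂ) : ℂ := qPoch x w * qPoch (w / x) w

/-- The quotient `θ(x) / (1 - x)`, without its removable singularity at `x = 1`. -/
noncomputable def thetaR (w x : ℂ) : ℂ := qPoch (x * w) w * qPoch (w / x) w

section
variable {w : ℂ}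

lemma theta_eq (h1 : ‖w‖ < 1) (x : ℂ) : theta w x = (1 - x) * thetaR w x := by
  rw [theta, thetaR, qPoch_eq h1 x, mul_assoc]

lemma theta_one (h1 : ‖w‖ < 1) : theta w 1 = 0 := by simp [theta_eq h1]

lemma thetaR_inv (x : ℂ) : thetaR w x⁻¹ = thetaR w x := by
  rw [thetaR, thetaR, mul_comm]
  congr 2 <;> field_simp

lemma theta_inv (h1 : ‖w‖ < 1) {x : ℂ} (hx : x ≠ 0) : theta w x⁻¹ = -(theta w x / x) := by
  rw [theta_eq h1, theta_eq h1, thetaR_inv]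
  field_simp
  ring

lemma theta_w_div (x : ℂ) (h0 : w ≠ 0) : theta w (w / x) = theta w x := by
  by_cases hx : x = 0
  · subst hx; simp [theta]
  rw [theta, theta, mul_comm]
  congr 2
  field_simp

lemma theta_w_mul (h0 : w ≠ 0) (h1 : ‖w‖ < 1) {x : ℂ} (hx : x ≠ 0) :
    theta w (w * x) = -(theta w x / x) := by
  rw [← theta_inv h1 hx, ← theta_w_div x⁻¹ h0, div_inv_eq_mul]

lemma theta_zpow_mul_eq_zero (h0 : w ≠ 0) (h1 : ‖w‖ < 1) {x : ℂ} (hx : x ≠ 0) (n : ℤ) :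
    theta w (w ^ n * x) = 0 ↔ theta w x = 0 := by
  have step : ∀ y, y ≠ 0 → (theta w (w * y) = 0 ↔ theta w y = 0) := by
    intro y hy
    rw [theta_w_mul h0 h1 hy]
    simp [hy]
  induction n using Int.induction_on with
  | zero => simp
  | succ n ih =>
    refine Iff.trans ?_ ih
    rw [← step (w ^ (n:ℤ) * x) (mul_ne_zero (zpow_ne_zero _ h0) hx), ← mul_assoc,
      ← zpow_one_add₀ h0, add_comm]
  | pred n ih =>
    refine Iff.trans ?_ ih
    rw [← step (w ^ (-(n:ℤ)-1) * x) (mul_ne_zero (zpow_ne_zero _ h0) hx), ← mul_assoc,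
      ← zpow_one_add₀ h0, add_sub_cancel]

lemma theta_eq_zero_of_zpow (h0 : w ≠ 0) (h1 : ‖w‖ < 1) {x : ℂ} {n : ℤ} (h : w ^ n * x = 1) :
    theta w x = 0 := by
  have hx : x ≠ 0 := by rintro rfl; simp at h
  rw [← theta_zpow_mul_eq_zero h0 h1 hx n, h, theta_one h1]

lemma exists_zpow_of_theta_eq_zero (h1 : ‖w‖ < 1) {x : ℂ} (hx : x ≠ 0)
    (h : theta w x = 0) : ∃ n : ℤ, w ^ n * x = 1 := by
  by_contra! hc
  refine mul_ne_zero (qPoch_ne_zero h1 fun k hk => ?_) (qPoch_ne_zero h1 fun k hk => ?_) h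
  · exact hc k (by rw [zpow_natCast, mul_comm]; exact hk)
  · apply hc (-(k + 1))
    rw [zpow_neg, ← Nat.cast_one (R := ℤ), ← Nat.cast_add, zpow_natCast]
    have : w ^ (k+1) = x := by
      rw [pow_succ']; field_simp at hk; exact hk
    rw [this, inv_mul_cancel₀ hx]

lemma theta_ne_zero_of_norm (h1 : ‖w‖ < 1) {x : ℂ} (hx1 : ‖x‖ < 1) (hx2 : ‖w‖ < ‖x‖) :
    theta w x ≠ 0 := by
  have hx : x ≠ 0 := norm_pos_iff.mp ((norm_nonneg _).trans_lt hx2)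
  have aux : ∀ y : ℂ, ‖y‖ < 1 → ∀ k : ℕ, y * w ^ k ≠ 1 := by
    intro y hy k hk
    have := congrArg norm hk
    rw [norm_mul, norm_pow, norm_one] at this
    have h2 : ‖w‖ ^ k ≤ 1 := pow_le_one₀ (norm_nonneg _) h1.le
    nlinarith [norm_nonneg y]
  refine mul_ne_zero (qPoch_ne_zero h1 (aux _ hx1)) (qPoch_ne_zero h1 (aux _ ?_))
  rw [norm_div, div_lt_one (norm_pos_iff.mpr hx)]
  exact hx2

lemma thetaR_one_ne_zero (h1 : ‖w‖ < 1) : thetaR w 1 ≠ 0 := by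
  have : qPoch w w ≠ 0 := qPoch_ne_zero h1 fun k hk => by
    have := congrArg norm hk
    rw [norm_mul, norm_pow, norm_one] at this
    have h2 : ‖w‖ ^ k ≤ 1 := pow_le_one₀ (norm_nonneg _) h1.le
    nlinarith [norm_nonneg w]
  simp [thetaR, this]

lemma analyticAt_thetaR (h1 : ‖w‖ < 1) {x : ℂ} (hx : x ≠ 0) : AnalyticAt ℂ (thetaR w) x := by
  have a : AnalyticAt ℂ (fun y => qPoch (y * w) w) x :=
    (analyticAt_qPoch h1 _).fun_comp (f := fun y => y * w) (by fun_prop)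
  have b : AnalyticAt ℂ (fun y => qPoch (w / y) w) x :=
    (analyticAt_qPoch h1 _).fun_comp (f := fun y => w / y) (by fun_prop (disch := exact hx))
  exact a.fun_mul b

lemma analyticAt_theta (h1 : ‖w‖ < 1) {x : ℂ} (hx : x ≠ 0) : AnalyticAt ℂ (theta w) x := by
  have : theta w = fun x => (1 - x) * thetaR w x := funext (theta_eq h1)
  rw [this]
  exact AnalyticAt.fun_mul (by fun_prop) (analyticAt_thetaR h1 hx)

lemma analyticAt_theta_mul (h1 : ‖w‖ < 1) {b t : ℂ} (hb : b ≠ 0) (ht : t ≠ 0) :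
    AnalyticAt ℂ (fun t => theta w (b * t)) t :=
  (analyticAt_theta h1 (mul_ne_zero hb ht)).fun_comp (f := fun t => b * t) (by fun_prop)

lemma eventually_theta_ne_zero (h0 : w ≠ 0) (h1 : ‖w‖ < 1) {x : ℂ} (hx : x ≠ 0) :
    ∀ᶠ s in 𝓝[≠] x, theta w s ≠ 0 := by
  by_cases h : theta w x = 0
  · obtain ⟨n, hn⟩ := exists_zpow_of_theta_eq_zero h1 hx h
    have hR : ∀ᶠ y in 𝓝[≠] (1:ℂ), theta w y ≠ 0 := by
      have h2 : ∀ᶠ y in 𝓝 (1:ℂ), thetaR w y ≠ 0 :=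
        (analyticAt_thetaR h1 one_ne_zero).continuousAt.eventually_ne (thetaR_one_ne_zero h1)
      filter_upwards [h2.filter_mono nhdsWithin_le_nhds, self_mem_nhdsWithin] with y hy hy1
      rw [theta_eq h1]
      exact mul_ne_zero (sub_ne_zero.mpr (Ne.symm hy1)) hy
    have e := tendsto_mul_punctured (zpow_ne_zero n h0) x
    rw [hn] at e
    have h3 : ∀ᶠ s in 𝓝[≠] x, s ≠ 0 := (eventually_ne_nhds hx).filter_mono nhdsWithin_le_nhds
    filter_upwards [e.eventually hR, h3] with s hs hs0
    rwa [ne_eq, theta_zpow_mul_eq_zero h0 h1 hs0] at hs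
  · exact ((analyticAt_theta h1 hx).continuousAt.eventually_ne h).filter_mono nhdsWithin_le_nhds

lemma eventually_theta_mul_ne_zero (h0 : w ≠ 0) (h1 : ‖w‖ < 1) {b x : ℂ} (hb : b ≠ 0)
    (hx : x ≠ 0) : ∀ᶠ s in 𝓝[≠] x, theta w (b * s) ≠ 0 :=
  (tendsto_mul_punctured hb x).eventually
    (eventually_theta_ne_zero h0 h1 (mul_ne_zero hb hx))

end

/-! ### Bilateral Lambert series -/

lemma summable_gauss_nat {r s : ℝ} (hr0 : 0 < r) (hr1 : r < 1) (hs : 0 < s) :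
    Summable fun n : ℕ => r ^ (n ^ 2) * s ^ n := by
  have h : Tendsto (fun n : ℕ => r ^ n * s) atTop (𝓝 0) := by
    simpa using (tendsto_pow_atTop_nhds_zero_of_lt_one hr0.le hr1).mul_const s
  refine Summable.of_norm_bounded_eventually_nat (g := fun n => (1 / 2 : ℝ) ^ n)
    (summable_geometric_of_lt_one (by norm_num) (by norm_num)) ?_
  filter_upwards [h.eventually_le_const (by norm_num : (0 : ℝ) < 1 / 2)] with n hn
  rw [Real.norm_of_nonneg (by positivity), pow_two, pow_mul, ← mul_pow]
  gcongr

lemma summable_gauss {r s : ℝ} (hr0 : 0 < r) (hr1 : r < 1) (hs : 0 < s) :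
    Summable fun m : ℤ => r ^ (m ^ 2) * s ^ m := by
  apply Summable.of_nat_of_neg
  · refine (summable_gauss_nat hr0 hr1 hs).congr fun n => ?_
    norm_cast
  · refine (summable_gauss_nat hr0 hr1 (inv_pos.mpr hs)).congr fun n => ?_
    rw [neg_sq, zpow_neg, ← inv_zpow]
    norm_cast

/-- The term of index `m` of the bilateral Lambert series `lam`. -/
noncomputable def lamTerm (w x y : ℂ) (m : ℤ) : ℂ := w ^ (m ^ 2) * y ^ m / (1 - w ^ m * x)

/-- The bilateral Lambert series `∑_m w^{m²} y^m / (1 - w^m x)`. -/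
noncomputable def lam (w x y : ℂ) : ℂ := ∑' m : ℤ, lamTerm w x y m

/-- The bilateral Lambert series `lam` without its term of index `0`. -/
noncomputable def lamReg (w x y : ℂ) : ℂ := ∑' m : ℤ, if m = 0 then 0 else lamTerm w x y m

/-- The theta series `∑_m w^{m²} y^m`. -/
noncomputable def gauss (w y : ℂ) : ℂ := ∑' m : ℤ, w ^ (m ^ 2) * y ^ m

lemma pos_lower_bound {a : ℕ → ℝ} (ha : ∀ n, 0 < a n) {l : ℝ} (hl : 0 < l)
    (h : Tendsto a atTop (𝓝 l)) : ∃ δ > 0, ∀ n, δ ≤ a n := by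
  obtain ⟨N, hN⟩ := eventually_atTop.mp (h.eventually_const_le (half_lt_self hl))
  obtain ⟨k, -, hk⟩ := Finset.exists_min_image (Finset.range (N + 1)) a ⟨0, by simp⟩
  refine ⟨min (l / 2) (a k), lt_min (by linarith) (ha k), fun n => ?_⟩
  rcases le_total N n with hn | hn
  · exact (min_le_left _ _).trans (hN n hn)
  · exact (min_le_right _ _).trans (hk n (by simp; omega))

section
variable {w : ℂ}

lemma summable_gaussC (h0 : w ≠ 0) (h1 : ‖w‖ < 1) {y : ℂ} (hy : y ≠ 0) :
    Summable fun m : ℤ => ‖w ^ (m ^ 2) * y ^ m‖ := by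
  simp only [norm_mul, norm_zpow]
  exact summable_gauss (norm_pos_iff.mpr h0) h1 (norm_pos_iff.mpr hy)

/-- The denominators of the Lambert series are bounded away from `0` near a regular point. -/
lemma lam_lower_bound (h0 : w ≠ 0) (h1 : ‖w‖ < 1) {x₀ : ℂ} (hx : x₀ ≠ 0)
    (h : ∀ m : ℤ, m ≠ 0 → w ^ m * x₀ ≠ 1) :
    ∃ δ > 0, ∀ m : ℤ, m ≠ 0 → ∀ x ∈ Metric.ball x₀ δ, δ ≤ ‖1 - w ^ m * x‖ := by
  have hlim : Tendsto (fun n : ℕ => w ^ (n + 1)) atTop (𝓝 0) :=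
    (tendsto_pow_atTop_nhds_zero_of_norm_lt_one h1).comp (tendsto_add_atTop_nat 1)
  obtain ⟨δ₁, hδ₁, hb₁⟩ := pos_lower_bound (a := fun n => ‖1 - w ^ (n + 1) * x₀‖) (l := 1)
    (fun n => norm_pos_iff.mpr (sub_ne_zero.mpr (Ne.symm (by
      have := h ((n + 1 : ℕ) : ℤ) (by positivity)
      rwa [zpow_natCast] at this)))) one_pos (by
      simpa using ((hlim.mul_const x₀).const_sub 1).norm)
  obtain ⟨δ₂, hδ₂, hb₂⟩ := pos_lower_bound (a := fun n => ‖w ^ (n + 1) - x₀‖) (l := ‖x₀‖)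
    (fun n => norm_pos_iff.mpr (sub_ne_zero.mpr (fun hn => by
      apply h (-((n + 1 : ℕ) : ℤ)) (by omega)
      rw [zpow_neg, zpow_natCast, hn, inv_mul_cancel₀ hx]))) (norm_pos_iff.mpr hx) (by
      simpa using (hlim.sub_const x₀).norm)
  refine ⟨min δ₁ δ₂ / 2, by positivity, fun m hm x hxb => ?_⟩
  have hd : ‖x - x₀‖ < min δ₁ δ₂ / 2 := by simpa [dist_eq_norm] using hxb
  have l1 := min_le_left δ₁ δ₂
  have l2 := min_le_right δ₁ δ₂
  have hw1 : ∀ n : ℕ, ‖w ^ (n + 1)‖ ≤ 1 := fun n => by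
    rw [norm_pow]; exact pow_le_one₀ (norm_nonneg _) h1.le
  obtain ⟨n, rfl | rfl⟩ : ∃ n : ℕ, m = ((n + 1 : ℕ) : ℤ) ∨ m = -((n + 1 : ℕ) : ℤ) :=
    ⟨m.natAbs - 1, by omega⟩
  · rw [zpow_natCast]
    have e : 1 - w ^ (n + 1) * x₀ = (1 - w ^ (n + 1) * x) + w ^ (n + 1) * (x - x₀) := by ring
    have := hb₁ n
    simp only [e] at this
    have h3 := norm_add_le (1 - w ^ (n + 1) * x) (w ^ (n + 1) * (x - x₀))
    rw [norm_mul] at h3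
    nlinarith [hw1 n, norm_nonneg (x - x₀)]
  · rw [zpow_neg, zpow_natCast]
    have hwn : 0 < ‖w ^ (n + 1)‖ := norm_pos_iff.mpr (pow_ne_zero _ h0)
    have e : w ^ (n + 1) - x₀ = w ^ (n + 1) * (1 - (w ^ (n + 1))⁻¹ * x) + (x - x₀) := by
      field_simp; ring
    have := hb₂ n
    simp only [e] at this
    have h3 := norm_add_le (w ^ (n + 1) * (1 - (w ^ (n + 1))⁻¹ * x)) (x - x₀)
    rw [norm_mul] at h3
    nlinarith [hw1 n, norm_nonneg (1 - (w ^ (n + 1))⁻¹ * x)]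

/-- A summable majorant for the Lambert series, uniform near `x₀`. -/
lemma lamReg_bound (h0 : w ≠ 0) (h1 : ‖w‖ < 1) {x₀ y : ℂ} (hx : x₀ ≠ 0) (hy : y ≠ 0)
    (h : ∀ m : ℤ, m ≠ 0 → w ^ m * x₀ ≠ 1) :
    ∃ δ > 0, (∀ m : ℤ, m ≠ 0 → ∀ x ∈ Metric.ball x₀ δ, 1 - w ^ m * x ≠ 0) ∧
    ∃ u : ℤ → ℝ, Summable u ∧ ∀ (m : ℤ), ∀ x ∈ Metric.ball x₀ δ,
      ‖if m = 0 then 0 else lamTerm w x y m‖ ≤ u m := by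
  obtain ⟨δ, hδ, hb⟩ := lam_lower_bound h0 h1 hx h
  refine ⟨δ, hδ, fun m hm x hxb => norm_pos_iff.mp (hδ.trans_le (hb m hm x hxb)),
    fun m => ‖w ^ (m ^ 2) * y ^ m‖ / δ, (summable_gaussC h0 h1 hy).div_const δ,
    fun m x hxb => ?_⟩
  split_ifs with hm
  · rw [norm_zero]; positivity
  · rw [lamTerm, norm_div]
    exact div_le_div_of_nonneg_left (norm_nonneg _) hδ (hb m hm x hxb)

lemma summable_lamReg (h0 : w ≠ 0) (h1 : ‖w‖ < 1) {x y : ℂ} (hx : x ≠ 0) (hy : y ≠ 0)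
    (h : ∀ m : ℤ, m ≠ 0 → w ^ m * x ≠ 1) :
    Summable fun m : ℤ => if m = 0 then 0 else lamTerm w x y m := by
  obtain ⟨δ, hδ, -, u, hu, hb⟩ := lamReg_bound h0 h1 hx hy h
  exact Summable.of_norm_bounded hu fun m => hb m x (Metric.mem_ball_self hδ)

lemma analyticAt_lamReg (h0 : w ≠ 0) (h1 : ‖w‖ < 1) {x y : ℂ} (hx : x ≠ 0) (hy : y ≠ 0)
    (h : ∀ m : ℤ, m ≠ 0 → w ^ m * x ≠ 1) : AnalyticAt ℂ (fun x => lamReg w x y) x := by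
  obtain ⟨δ, hδ, hne, u, hu, hb⟩ := lamReg_bound h0 h1 hx hy h
  have := Complex.differentiableOn_tsum_of_summable_norm hu (fun m => ?_) Metric.isOpen_ball hb
  · exact this.analyticAt (Metric.isOpen_ball.mem_nhds (Metric.mem_ball_self hδ))
  · by_cases hm : m = 0
    · simp only [hm, if_true]; fun_prop
    · simp only [hm, if_false, lamTerm]
      intro z hz
      have := hne m hm z hz
      fun_prop (disch := assumption)

lemma summable_lam (h0 : w ≠ 0) (h1 : ‖w‖ < 1) {x y : ℂ} (hx : x ≠ 0) (hy : y ≠ 0)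
    (h : ∀ m : ℤ, m ≠ 0 → w ^ m * x ≠ 1) : Summable fun m : ℤ => lamTerm w x y m := by
  refine (summable_lamReg h0 h1 hx hy h).congr_cofinite ?_
  filter_upwards [Set.Finite.compl_mem_cofinite (Set.finite_singleton (0 : ℤ))] with m hm
  simp at hm
  simp [hm]

lemma lam_eq (h0 : w ≠ 0) (h1 : ‖w‖ < 1) {x y : ℂ} (hx : x ≠ 0) (hy : y ≠ 0)
    (h : ∀ m : ℤ, m ≠ 0 → w ^ m * x ≠ 1) : lam w x y = 1 / (1 - x) + lamReg w x y := by
  rw [lam, (summable_lam h0 h1 hx hy h).tsum_eq_add_tsum_ite 0]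
  simp [lamTerm, lamReg]

lemma ne_one_of_theta (h0 : w ≠ 0) (h1 : ‖w‖ < 1) {x : ℂ} (h : theta w x ≠ 0) (m : ℤ) :
    w ^ m * x ≠ 1 := fun hm => h (theta_eq_zero_of_zpow h0 h1 hm)

lemma analyticAt_lam (h0 : w ≠ 0) (h1 : ‖w‖ < 1) {x y : ℂ} (hx : x ≠ 0) (hy : y ≠ 0)
    (h : theta w x ≠ 0) : AnalyticAt ℂ (fun x => lam w x y) x := by
  have hne := ne_one_of_theta h0 h1 h
  have h2 : AnalyticAt ℂ (fun x => 1 / (1 - x) + lamReg w x y) x := by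
    refine AnalyticAt.fun_add ?_ (analyticAt_lamReg h0 h1 hx hy fun m _ => hne m)
    have : 1 - x ≠ 0 := sub_ne_zero.mpr (Ne.symm (by simpa using hne 0))
    fun_prop (disch := assumption)
  refine h2.congr ?_
  filter_upwards [(analyticAt_theta h1 hx).continuousAt.eventually_ne h, eventually_ne_nhds hx]
    with z hz hz0
  exact (lam_eq h0 h1 hz0 hy fun m _ => ne_one_of_theta h0 h1 hz m).symm

/-- The quasi-periodicity of the Lambert series under `x ↦ w x`: shifting the summation index and
dividing out `1 - wᵐ x` leaves the remainder terms given by the theta series `gauss`. -/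
lemma lam_w_mul (h0 : w ≠ 0) (h1 : ‖w‖ < 1) {x y : ℂ} (hx : x ≠ 0) (hy : y ≠ 0)
    (h : theta w x ≠ 0) :
    lam w (w * x) y = w / y * x ^ 2 * lam w x y + gauss w y +
      x * (w / y * gauss w (y / w)) := by
  have hne := ne_one_of_theta h0 h1 h
  have hyw : y / w ≠ 0 := div_ne_zero hy h0
  have s1 := summable_lam h0 h1 hx hy fun m _ => hne m
  have s2 := (summable_gaussC h0 h1 hy).of_norm
  have s3 := (summable_gaussC h0 h1 hyw).of_norm
  have s2' := (Equiv.subRight (1:ℤ)).summable_iff.mpr s2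
  have e : lam w (w * x) y = ∑' m : ℤ, (w / y * x ^ 2 * lamTerm w x y m +
      w ^ ((m - 1) ^ 2) * y ^ (m - 1) + x * (w / y) * (w ^ (m ^ 2) * (y / w) ^ m)) := by
    rw [lam, ← (Equiv.subRight (1:ℤ)).tsum_eq]
    refine tsum_congr fun m => ?_
    simp only [Equiv.subRight_apply, lamTerm]
    have hm : 1 - w ^ m * x ≠ 0 := sub_ne_zero.mpr (hne m).symm
    have e1 : w ^ (m - 1) * (w * x) = w ^ m * x := by
      rw [zpow_sub_one₀ h0]; field_simp
    have e2 : w ^ ((m - 1) ^ 2) = w ^ (m ^ 2) * w / (w ^ m) ^ 2 := by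
      rw [show (m - 1) ^ 2 = m ^ 2 + 1 - (m + m) by ring, zpow_sub₀ h0, zpow_add₀ h0 m m,
        zpow_add₀ h0, zpow_one, pow_two (w ^ m)]
    rw [e1, e2, zpow_sub_one₀ hy, div_zpow]
    have hwm : w ^ m ≠ 0 := zpow_ne_zero _ h0
    have hym : y ^ m ≠ 0 := zpow_ne_zero _ hy
    field_simp
    ring
  rw [e, Summable.tsum_add, Summable.tsum_add, tsum_mul_left, tsum_mul_left]
  · have : ∑' m : ℤ, w ^ ((m - 1) ^ 2) * y ^ (m - 1) = gauss w y :=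
      (Equiv.subRight (1:ℤ)).tsum_eq (fun m => w ^ (m ^ 2) * y ^ m)
    rw [this, gauss, gauss, lam]
    ring
  · exact s1.mul_left _
  · exact s2'
  · exact (s1.mul_left _).add s2'
  · exact s3.mul_left _
end

/-! ### Partial fractions of theta quotients -/

lemma analyticAt_dslope {g : ℂ → ℂ} {t₀ : ℂ} (hg : AnalyticAt ℂ g t₀) :
    AnalyticAt ℂ (dslope g t₀) t₀ := by
  obtain ⟨p, hp⟩ := hg
  exact ⟨_, hp.has_fpower_series_dslope_fslope⟩

lemma Extends.add {f g : ℂ → ℂ} {t : ℂ} (hf : Extends f t) (hg : Extends g t) :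
    Extends (fun s => f s + g s) t := by
  obtain ⟨f', hf1, hf2⟩ := hf
  obtain ⟨g', hg1, hg2⟩ := hg
  exact ⟨fun s => f' s + g' s, hf1.fun_add hg1, by
    filter_upwards [hf2, hg2] with s h1 h2; rw [h1, h2]⟩

lemma Extends.congr {f g : ℂ → ℂ} {t : ℂ} (hf : Extends f t) (h : ∀ s, f s = g s) :
    Extends g t := by
  rwa [← (funext h : f = g)]

section
variable {w : ℂ}

/-- The theta quotient `(w;w)² θ(at) / (θ(bt) θ(ct) θ(dt))`. -/
noncomputable def thetaQuot (w a b c d t : ℂ) : ℂ :=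
  thetaR w 1 * theta w (a * t) / (theta w (b * t) * theta w (c * t) * theta w (d * t))

/-- The regular part at `t = 1/b` of `thetaQuot`, i.e. its product with `1 - bt`. -/
noncomputable def thetaQuotReg (w a b c d t : ℂ) : ℂ :=
  thetaR w 1 * theta w (a * t) / (thetaR w (b * t) * theta w (c * t) * theta w (d * t))

/-- The residue of `thetaQuot` at `t = 1/b`, normalised as the coefficient of `1 / (1 - bt)`. -/
noncomputable def thetaRes (w a b c d : ℂ) : ℂ :=
  theta w (a / b) / (theta w (c / b) * theta w (d / b))

lemma analyticAt_thetaR_mul (h1 : ‖w‖ < 1) {b t : ℂ} (hb : b ≠ 0) (ht : t ≠ 0) :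
    AnalyticAt ℂ (fun t => thetaR w (b * t)) t :=
  (analyticAt_thetaR h1 (mul_ne_zero hb ht)).fun_comp (f := fun t => b * t) (by fun_prop)

lemma thetaQuotReg_inv (h1 : ‖w‖ < 1) {a b c d : ℂ} (hb : b ≠ 0) :
    thetaQuotReg w a b c d b⁻¹ = thetaRes w a b c d := by
  have := thetaR_one_ne_zero h1
  rw [thetaQuotReg, thetaRes, mul_inv_cancel₀ hb, ← div_eq_mul_inv, ← div_eq_mul_inv,
    ← div_eq_mul_inv, mul_assoc, mul_div_mul_left _ _ this]

lemma analyticAt_thetaQuotReg (h1 : ‖w‖ < 1) {a b c d : ℂ} (ha : a ≠ 0) (hb : b ≠ 0)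
    (hc : c ≠ 0) (hd : d ≠ 0) (hcb : theta w (c / b) ≠ 0) (hdb : theta w (d / b) ≠ 0) :
    AnalyticAt ℂ (thetaQuotReg w a b c d) b⁻¹ := by
  have ht : b⁻¹ ≠ 0 := inv_ne_zero hb
  refine AnalyticAt.fun_div (analyticAt_const.fun_mul (analyticAt_theta_mul h1 ha ht))
    (((analyticAt_thetaR_mul h1 hb ht).fun_mul (analyticAt_theta_mul h1 hc ht)).fun_mul
      (analyticAt_theta_mul h1 hd ht)) ?_
  rw [mul_inv_cancel₀ hb, ← div_eq_mul_inv, ← div_eq_mul_inv]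
  exact mul_ne_zero (mul_ne_zero (thetaR_one_ne_zero h1) hcb) hdb

/-- Subtracting a Lambert series removes the singularity of the theta quotient at `1/b`. -/
lemma thetaQuot_local (h0 : w ≠ 0) (h1 : ‖w‖ < 1) {a b c d y : ℂ} (ha : a ≠ 0) (hb : b ≠ 0)
    (hc : c ≠ 0) (hd : d ≠ 0) (hcb : theta w (c / b) ≠ 0) (hdb : theta w (d / b) ≠ 0)
    (hy : y ≠ 0) :
    ∃ g : ℂ → ℂ, AnalyticAt ℂ g b⁻¹ ∧
      (fun t => thetaQuot w a b c d t - thetaRes w a b c d * lam w (b * t) y) =ᶠ[𝓝[≠] b⁻¹] g ∧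
      g b⁻¹ = -b⁻¹ * deriv (thetaQuotReg w a b c d) b⁻¹ - thetaRes w a b c d * lamReg w 1 y := by
  have ht : b⁻¹ ≠ 0 := inv_ne_zero hb
  have hone : ∀ m : ℤ, m ≠ 0 → w ^ m * 1 ≠ 1 := by
    intro m hm h
    have := congrArg norm h
    rw [mul_one, norm_zpow, norm_one, zpow_eq_one_iff_right₀ (norm_nonneg _) h1.ne] at this
    exact hm this
  refine ⟨fun t => -b⁻¹ * dslope (thetaQuotReg w a b c d) b⁻¹ t -
    thetaRes w a b c d * lamReg w (b * t) y, ?_, ?_, ?_⟩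
  · refine (analyticAt_const.fun_mul (analyticAt_dslope
      (analyticAt_thetaQuotReg h1 ha hb hc hd hcb hdb))).fun_sub (analyticAt_const.fun_mul ?_)
    apply AnalyticAt.fun_comp (g := fun x => lamReg w x y) (f := fun t => b * t)
    · rw [mul_inv_cancel₀ hb]
      exact analyticAt_lamReg h0 h1 one_ne_zero hy hone
    · fun_prop
  · filter_upwards [eventually_theta_mul_ne_zero h0 h1 hb ht, self_mem_nhdsWithin,
      (eventually_ne_nhds ht).filter_mono nhdsWithin_le_nhds] with t h2 h3 h4
    rw [lam_eq h0 h1 (mul_ne_zero hb h4) hy fun m _ => ne_one_of_theta h0 h1 h2 m]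
    have h5 := sub_smul_dslope (thetaQuotReg w a b c d) b⁻¹ t
    rw [thetaQuotReg_inv h1 hb, smul_eq_mul] at h5
    have h6 : t - b⁻¹ ≠ 0 := sub_ne_zero.mpr h3
    have h8 : 1 - b * t = -b * (t - b⁻¹) := by field_simp; ring
    have h9 : 1 - b * t ≠ 0 := by rw [h8]; exact mul_ne_zero (neg_ne_zero.mpr hb) h6
    have h7 : thetaQuot w a b c d t = thetaQuotReg w a b c d t / (1 - b * t) := by
      rw [thetaQuot, thetaQuotReg, theta_eq h1 (b * t), div_div]
      congr 1
      ring
    have h10 : -b⁻¹ * dslope (thetaQuotReg w a b c d) b⁻¹ t =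
        (thetaQuotReg w a b c d t - thetaRes w a b c d) / (1 - b * t) := by
      rw [eq_div_iff h9, ← h5, h8]
      field_simp
    rw [h7, h10]
    ring
  · simp only [dslope_same, mul_inv_cancel₀ hb]

lemma thetaQuot_swap (a b c d t : ℂ) : thetaQuot w a b c d t = thetaQuot w a c b d t := by
  rw [thetaQuot, thetaQuot, mul_comm (theta w (b * t))]

lemma thetaQuot_rot (a b c d t : ℂ) : thetaQuot w a b c d t = thetaQuot w a d b c t := by
  rw [thetaQuot, thetaQuot]; congr 1; ring

/-- Theta quotient minus its expansion into three Lambert series. -/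
noncomputable def pfDefect (w a b c d t : ℂ) : ℂ :=
  thetaQuot w a b c d t - thetaRes w a b c d * lam w (b * t) (w * b ^ 2 * a / (b * c * d))
    - thetaRes w a c b d * lam w (c * t) (w * c ^ 2 * a / (b * c * d))
    - thetaRes w a d b c * lam w (d * t) (w * d ^ 2 * a / (b * c * d))

lemma analyticAt_lam_mul (h0 : w ≠ 0) (h1 : ‖w‖ < 1) {b t y : ℂ} (hb : b ≠ 0) (ht : t ≠ 0)
    (hy : y ≠ 0) (h : theta w (b * t) ≠ 0) : AnalyticAt ℂ (fun t => lam w (b * t) y) t :=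
  (analyticAt_lam h0 h1 (mul_ne_zero hb ht) hy h).fun_comp (g := fun x => lam w x y)
    (f := fun t => b * t) (by fun_prop)

lemma theta_div_ne_zero (h1 : ‖w‖ < 1) {b c : ℂ} (hb : b ≠ 0) (hc : c ≠ 0)
    (h : theta w (c / b) ≠ 0) : theta w (b / c) ≠ 0 := by
  rw [← inv_div, theta_inv h1 (div_ne_zero hc hb)]
  exact neg_ne_zero.mpr (div_ne_zero h (div_ne_zero hc hb))

lemma analyticAt_thetaQuot (h1 : ‖w‖ < 1) {a b c d t : ℂ} (ha : a ≠ 0)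
    (hb : b ≠ 0) (hc : c ≠ 0) (hd : d ≠ 0) (ht : t ≠ 0) (hbt : theta w (b * t) ≠ 0)
    (hct : theta w (c * t) ≠ 0) (hdt : theta w (d * t) ≠ 0) :
    AnalyticAt ℂ (thetaQuot w a b c d) t :=
  AnalyticAt.fun_div (analyticAt_const.fun_mul (analyticAt_theta_mul h1 ha ht))
    (((analyticAt_theta_mul h1 hb ht).fun_mul (analyticAt_theta_mul h1 hc ht)).fun_mul
      (analyticAt_theta_mul h1 hd ht)) (mul_ne_zero (mul_ne_zero hbt hct) hdt)

/-- Partial fractions: the theta quotient equals its Lambert series expansion, and a linear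
relation between theta series holds. -/
lemma pfDefect_eq_zero (h0 : w ≠ 0) (h1 : ‖w‖ < 1) {a b c d : ℂ} (ha : a ≠ 0)
    (hb : b ≠ 0) (hc : c ≠ 0) (hd : d ≠ 0) (hcb : theta w (c / b) ≠ 0)
    (hdb : theta w (d / b) ≠ 0) (hdc : theta w (d / c) ≠ 0) :
    (∀ t, t ≠ 0 → ∀ᶠ s in 𝓝[≠] t, pfDefect w a b c d s = 0) ∧
    thetaRes w a b c d * gauss w (w * b ^ 2 * a / (b * c * d))
    + thetaRes w a c b d * gauss w (w * c ^ 2 * a / (b * c * d))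
    + thetaRes w a d b c * gauss w (w * d ^ 2 * a / (b * c * d)) = 0 := by
  have hbc := theta_div_ne_zero h1 hb hc hcb
  have hbd := theta_div_ne_zero h1 hb hd hdb
  have hcd := theta_div_ne_zero h1 hc hd hdc
  set y₁ := w * b ^ 2 * a / (b * c * d) with hy₁
  set y₂ := w * c ^ 2 * a / (b * c * d) with hy₂
  set y₃ := w * d ^ 2 * a / (b * c * d) with hy₃
  have n₁ : y₁ ≠ 0 := by rw [hy₁]; positivity
  have n₂ : y₂ ≠ 0 := by rw [hy₂]; positivity
  have n₃ : y₃ ≠ 0 := by rw [hy₃]; positivity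
  have hκ : b * c * d / a ≠ 0 := by positivity
  set α := -(thetaRes w a b c d * gauss w y₁ + thetaRes w a c b d * gauss w y₂ +
    thetaRes w a d b c * gauss w y₃) with hα
  set β := -(thetaRes w a b c d * (b * (w / y₁ * gauss w (y₁ / w))) +
    thetaRes w a c b d * (c * (w / y₂ * gauss w (y₂ / w))) +
    thetaRes w a d b c * (d * (w / y₃ * gauss w (y₃ / w))))
  have hfe : ∀ t, t ≠ 0 → ∀ᶠ s in 𝓝[≠] t, pfDefect w a b c d (w * s) =
      (b * c * d / a) * s ^ 2 * pfDefect w a b c d s + α + β * s := by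
    intro t ht
    filter_upwards [eventually_theta_mul_ne_zero h0 h1 hb ht,
      eventually_theta_mul_ne_zero h0 h1 hc ht, eventually_theta_mul_ne_zero h0 h1 hd ht,
      (eventually_ne_nhds ht).filter_mono nhdsWithin_le_nhds] with s e1 e2 e3 hs
    have q : thetaQuot w a b c d (w * s) = (b * c * d / a) * s ^ 2 * thetaQuot w a b c d s := by
      simp only [thetaQuot, mul_left_comm _ w s]
      rw [theta_w_mul h0 h1 (mul_ne_zero ha hs), theta_w_mul h0 h1 (mul_ne_zero hb hs),
        theta_w_mul h0 h1 (mul_ne_zero hc hs), theta_w_mul h0 h1 (mul_ne_zero hd hs)]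
      field_simp
    have l : ∀ x y : ℂ, x ≠ 0 → y = w * x ^ 2 * a / (b * c * d) → theta w (x * s) ≠ 0 →
        lam w (x * (w * s)) y = (b * c * d / a) * s ^ 2 * lam w (x * s) y + gauss w y +
        s * (x * (w / y * gauss w (y / w))) := by
      intro x y hx hy h
      have hy0 : y ≠ 0 := by rw [hy]; positivity
      rw [mul_left_comm, lam_w_mul h0 h1 (mul_ne_zero hx hs) hy0 h]
      have : w / y * (x * s) ^ 2 = (b * c * d / a) * s ^ 2 := by
        rw [hy]; field_simp
      rw [this]
      ring
    rw [pfDefect, pfDefect, ← hy₁, ← hy₂, ← hy₃, q, l b y₁ hb hy₁ e1, l c y₂ hc hy₂ e2,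
      l d y₃ hd hy₃ e3]
    ring
  have ext0 : ∀ b c d : ℂ, ∀ y₁ y₂ y₃ C₂ C₃ : ℂ, b ≠ 0 → c ≠ 0 → d ≠ 0 → theta w (c / b) ≠ 0 →
      theta w (d / b) ≠ 0 → y₁ ≠ 0 → y₂ ≠ 0 → y₃ ≠ 0 →
      Extends (fun t => thetaQuot w a b c d t - thetaRes w a b c d * lam w (b * t) y₁ +
        (-(C₂ * lam w (c * t) y₂) + -(C₃ * lam w (d * t) y₃))) b⁻¹ := by
    intro b c d y₁ y₂ y₃ C₂ C₃ hb hc hd hcb hdb hy₁ hy₂ hy₃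
    obtain ⟨g, hg1, hg2, -⟩ := thetaQuot_local h0 h1 ha hb hc hd hcb hdb hy₁
    refine Extends.add ⟨g, hg1, hg2⟩ (Extends.of_analyticAt (AnalyticAt.fun_add
      (analyticAt_const.fun_mul (analyticAt_lam_mul h0 h1 hc (inv_ne_zero hb) hy₂ ?_)).fun_neg
      (analyticAt_const.fun_mul (analyticAt_lam_mul h0 h1 hd (inv_ne_zero hb) hy₃ ?_)).fun_neg))
    · rwa [← div_eq_mul_inv]
    · rwa [← div_eq_mul_inv]
  have E1 : Extends (pfDefect w a b c d) b⁻¹ :=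
    (ext0 b c d y₁ y₂ y₃ (thetaRes w a c b d) (thetaRes w a d b c) hb hc hd hcb hdb n₁ n₂ n₃).congr fun s => by
      rw [pfDefect, ← hy₁, ← hy₂, ← hy₃]; ring
  have E2 : Extends (pfDefect w a b c d) c⁻¹ :=
    (ext0 c b d y₂ y₁ y₃ (thetaRes w a b c d) (thetaRes w a d b c) hc hb hd hbc hdc n₂ n₁ n₃).congr fun s => by
      rw [pfDefect, ← hy₁, ← hy₂, ← hy₃, thetaQuot_swap]; ring
  have E3 : Extends (pfDefect w a b c d) d⁻¹ :=
    (ext0 d b c y₃ y₁ y₂ (thetaRes w a b c d) (thetaRes w a c b d) hd hb hc hbd hcd n₃ n₁ n₂).congr fun s => by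
      rw [pfDefect, ← hy₁, ← hy₂, ← hy₃, thetaQuot_rot a b c d]; ring
  have trans : ∀ x t : ℂ, x ≠ 0 → t ≠ 0 → theta w (x * t) = 0 →
      Extends (pfDefect w a b c d) x⁻¹ → Extends (pfDefect w a b c d) t := by
    intro x t hx ht h hE
    obtain ⟨n, hn⟩ := exists_zpow_of_theta_eq_zero h1 (mul_ne_zero hx ht) h
    have := Extends.zpow_mul h0 hκ hfe (inv_ne_zero hx) hE (-n)
    rwa [show w ^ (-n) * x⁻¹ = t by
      rw [zpow_neg]
      have hwn : w ^ n ≠ 0 := zpow_ne_zero _ h0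
      field_simp
      rw [← hn]; ring] at this
  have hext : ∀ t, t ≠ 0 → Extends (pfDefect w a b c d) t := by
    intro t ht
    by_cases hbt : theta w (b * t) = 0
    · exact trans b t hb ht hbt E1
    by_cases hct : theta w (c * t) = 0
    · exact trans c t hc ht hct E2
    by_cases hdt : theta w (d * t) = 0
    · exact trans d t hd ht hdt E3
    exact Extends.of_analyticAt ((((analyticAt_thetaQuot h1 ha hb hc hd ht hbt hct hdt).fun_sub
      (analyticAt_const.fun_mul (analyticAt_lam_mul h0 h1 hb ht n₁ hbt))).fun_sub
      (analyticAt_const.fun_mul (analyticAt_lam_mul h0 h1 hc ht n₂ hct))).fun_sub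
      (analyticAt_const.fun_mul (analyticAt_lam_mul h0 h1 hd ht n₃ hdt)))
  obtain ⟨r1, r2⟩ := zero_of_quasiperiodic h0 h1 hκ hext hfe
  exact ⟨r1, by rw [hα, neg_eq_zero] at r2; exact r2⟩

/-- The partial fraction expansion at `t = 1`. -/
lemma partial_fractions (h0 : w ≠ 0) (h1 : ‖w‖ < 1) {a b c d : ℂ} (ha : a ≠ 0)
    (hb : b ≠ 0) (hc : c ≠ 0) (hd : d ≠ 0) (hcb : theta w (c / b) ≠ 0)
    (hdb : theta w (d / b) ≠ 0) (hdc : theta w (d / c) ≠ 0)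
    (tb : theta w b ≠ 0) (tc : theta w c ≠ 0) (td : theta w d ≠ 0) :
    thetaRes w a b c d * lam w b (w * b ^ 2 * a / (b * c * d))
    + thetaRes w a c b d * lam w c (w * c ^ 2 * a / (b * c * d))
    + thetaRes w a d b c * lam w d (w * d ^ 2 * a / (b * c * d))
    = thetaR w 1 * theta w a / (theta w b * theta w c * theta w d) := by
  have h := (pfDefect_eq_zero h0 h1 ha hb hc hd hcb hdb hdc).1 1 one_ne_zero
  have n : ∀ x : ℂ, x ≠ 0 → w * x ^ 2 * a / (b * c * d) ≠ 0 := fun x hx => by positivity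
  have hA : AnalyticAt ℂ (pfDefect w a b c d) 1 := by
    have tb' : theta w (b * 1) ≠ 0 := by rwa [mul_one]
    have tc' : theta w (c * 1) ≠ 0 := by rwa [mul_one]
    have td' : theta w (d * 1) ≠ 0 := by rwa [mul_one]
    exact ((((analyticAt_thetaQuot h1 ha hb hc hd one_ne_zero tb' tc' td').fun_sub
      (analyticAt_const.fun_mul (analyticAt_lam_mul h0 h1 hb one_ne_zero (n b hb) tb'))).fun_sub
      (analyticAt_const.fun_mul (analyticAt_lam_mul h0 h1 hc one_ne_zero (n c hc) tc'))).fun_sub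
      (analyticAt_const.fun_mul (analyticAt_lam_mul h0 h1 hd one_ne_zero (n d hd) td')))
  have := eq_of_eventuallyEq_ne hA.continuousAt (continuousAt_const (y := (0:ℂ))) h
  simp only [pfDefect, thetaQuot, mul_one] at this
  linear_combination -this

/-- The logarithmic derivative `x θ'(x) / θ(x)`. -/
noncomputable def ld (w x : ℂ) : ℂ := x * deriv (theta w) x / theta w x

/-- `thetaR` is invariant under `x ↦ x⁻¹`, so its derivative vanishes at the fixed point `1`. -/
lemma deriv_thetaR_one (h1 : ‖w‖ < 1) : deriv (thetaR w) 1 = 0 := by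
  have h : HasDerivAt (thetaR w) (deriv (thetaR w) 1) 1 :=
    (analyticAt_thetaR h1 one_ne_zero).differentiableAt.hasDerivAt
  have hi : HasDerivAt (fun x : ℂ => x⁻¹) (-1) 1 := by
    simpa using hasDerivAt_inv (one_ne_zero : (1:ℂ) ≠ 0)
  have h2 : HasDerivAt (fun x => thetaR w x⁻¹) (deriv (thetaR w) 1 * (-1)) 1 :=
    HasDerivAt.comp (h₂ := thetaR w) (h := fun x : ℂ => x⁻¹) 1 (by simpa using h) hi
  simp only [thetaR_inv] at h2
  have := h.unique h2
  linear_combination this / 2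

lemma hasDerivAt_theta_mul (h1 : ‖w‖ < 1) {b t : ℂ} (h : b * t ≠ 0) :
    HasDerivAt (fun t => theta w (b * t)) (deriv (theta w) (b * t) * b) t := by
  have := (analyticAt_theta h1 h).differentiableAt.hasDerivAt
  have h2 : HasDerivAt (fun t => b * t) b t := by simpa using (hasDerivAt_id t).const_mul b
  exact HasDerivAt.comp (h₂ := theta w) (h := fun t : ℂ => b * t) t this h2

/-- The partial fraction expansion in the limit `t → 1` when one of the poles sits at `1`. -/
lemma partial_fractions_one (h0 : w ≠ 0) (h1 : ‖w‖ < 1) {a c d : ℂ} (ha : a ≠ 0)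
    (hc : c ≠ 0) (hd : d ≠ 0) (hdc : theta w (d / c) ≠ 0) (ta : theta w a ≠ 0)
    (tc : theta w c ≠ 0) (td : theta w d ≠ 0) :
    thetaRes w a 1 c d * lamReg w 1 (w * a / (c * d))
    + thetaRes w a c 1 d * lam w c (w * c ^ 2 * a / (c * d))
    + thetaRes w a d 1 c * lam w d (w * d ^ 2 * a / (c * d))
    = - thetaRes w a 1 c d * (ld w a - ld w c - ld w d) := by
  have tc1 : theta w (c / 1) ≠ 0 := by rwa [div_one]
  have td1 : theta w (d / 1) ≠ 0 := by rwa [div_one]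
  have h := (pfDefect_eq_zero h0 h1 ha one_ne_zero hc hd tc1 td1 hdc).1 1 one_ne_zero
  have n : ∀ x : ℂ, x ≠ 0 → w * x ^ 2 * a / (1 * c * d) ≠ 0 := fun x hx => by
    rw [one_mul]; positivity
  obtain ⟨g, hg1, hg2, hg3⟩ := thetaQuot_local h0 h1 ha one_ne_zero hc hd tc1 td1
    (n 1 one_ne_zero)
  rw [inv_one] at hg1 hg2 hg3
  have tc' : theta w (c * 1) ≠ 0 := by rwa [mul_one]
  have td' : theta w (d * 1) ≠ 0 := by rwa [mul_one]
  have hB := (hg1.fun_sub (analyticAt_const (v := thetaRes w a c 1 d) |>.fun_mul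
      (analyticAt_lam_mul h0 h1 hc one_ne_zero (n c hc) tc'))).fun_sub
      (analyticAt_const (v := thetaRes w a d 1 c) |>.fun_mul
      (analyticAt_lam_mul h0 h1 hd one_ne_zero (n d hd) td'))
  have := eq_of_eventuallyEq_ne hB.continuousAt (continuousAt_const (y := (0:ℂ))) (by
    filter_upwards [h, hg2] with s e1 e2
    rw [← e2, ← e1, pfDefect])
  have hder : deriv (thetaQuotReg w a 1 c d) 1 =
      thetaRes w a 1 c d * (ld w a - ld w c - ld w d) := by
    have r0 := thetaR_one_ne_zero h1
    have e1 : HasDerivAt (fun t => thetaR w (1 * t)) 0 1 := by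
      simp only [one_mul]
      rw [← deriv_thetaR_one h1]
      exact (analyticAt_thetaR h1 one_ne_zero).differentiableAt.hasDerivAt
    have ea := hasDerivAt_theta_mul h1 (mul_ne_zero ha one_ne_zero)
    have ec := hasDerivAt_theta_mul h1 (mul_ne_zero hc one_ne_zero)
    have ed := hasDerivAt_theta_mul h1 (mul_ne_zero hd one_ne_zero)
    have := ((ea.const_mul (thetaR w 1)).fun_div ((e1.fun_mul ec).fun_mul ed) (by
      simpa using ⟨⟨r0, tc⟩, td⟩)).deriv
    change deriv (fun t => thetaQuotReg w a 1 c d t) 1 = _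
    simp only [thetaQuotReg]
    rw [this]
    simp only [mul_one, thetaRes, ld, div_one]
    field_simp
    ring
  rw [hg3, hder] at this
  simp only [mul_one, one_mul, one_pow] at this
  linear_combination -this
end

/-! ### Weierstrass' three-term relation and logarithmic derivatives -/

section
variable {w : ℂ}

/-- The difference of the two sides of Weierstrass' three-term relation, as a function of `x`. -/
noncomputable def weierDefect (w u y x : ℂ) : ℂ :=
  theta w (x * y) * theta w (x / y) * theta w u ^ 2 -
    theta w x ^ 2 * theta w (u * y) * theta w (u / y) -
    u / y * theta w y ^ 2 * theta w (x * u) * theta w (x / u)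

lemma analyticAt_theta_mul' (h1 : ‖w‖ < 1) {b t : ℂ} (hb : b ≠ 0) (ht : t ≠ 0) :
    AnalyticAt ℂ (fun t => theta w (t * b)) t := by
  simpa only [mul_comm] using analyticAt_theta_mul h1 hb ht

lemma analyticAt_weierDefect (h1 : ‖w‖ < 1) {u y x : ℂ} (hu : u ≠ 0) (hy : y ≠ 0) (hx : x ≠ 0) :
    AnalyticAt ℂ (weierDefect w u y) x := by
  have a1 := analyticAt_theta_mul' h1 hy hx
  have a2 := analyticAt_theta_mul' h1 (inv_ne_zero hy) hx
  have a3 := analyticAt_theta_mul' h1 hu hx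
  have a4 := analyticAt_theta_mul' h1 (inv_ne_zero hu) hx
  have a5 := analyticAt_theta h1 hx
  change AnalyticAt ℂ (fun x => weierDefect w u y x) x
  simp only [weierDefect, div_eq_mul_inv]
  fun_prop

lemma weierDefect_w_mul (h0 : w ≠ 0) (h1 : ‖w‖ < 1) {u y x : ℂ} (hu : u ≠ 0) (hy : y ≠ 0)
    (hx : x ≠ 0) : weierDefect w u y (w * x) = weierDefect w u y x / x ^ 2 := by
  simp only [weierDefect, mul_assoc w x, mul_div_assoc w x]
  rw [theta_w_mul h0 h1 (mul_ne_zero hx hy), theta_w_mul h0 h1 (div_ne_zero hx hy),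
    theta_w_mul h0 h1 (mul_ne_zero hx hu), theta_w_mul h0 h1 (div_ne_zero hx hu),
    theta_w_mul h0 h1 hx]
  field_simp

lemma weierDefect_inv (h1 : ‖w‖ < 1) {u y x : ℂ} (hu : u ≠ 0) (hy : y ≠ 0)
    (hx : x ≠ 0) : weierDefect w u y x⁻¹ = weierDefect w u y x / x ^ 2 := by
  have e : ∀ z : ℂ, z ≠ 0 → x⁻¹ * z = (x / z)⁻¹ ∧ x⁻¹ / z = (x * z)⁻¹ := fun z hz => by
    constructor <;> field_simp
  simp only [weierDefect, (e y hy).1, (e y hy).2, (e u hu).1, (e u hu).2]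
  rw [theta_inv h1 (mul_ne_zero hx hy), theta_inv h1 (div_ne_zero hx hy),
    theta_inv h1 (mul_ne_zero hx hu), theta_inv h1 (div_ne_zero hx hu), theta_inv h1 hx]
  field_simp

lemma weierDefect_one (h1 : ‖w‖ < 1) {u y : ℂ} (hu : u ≠ 0) (hy : y ≠ 0) :
    weierDefect w u y 1 = 0 := by
  simp only [weierDefect, one_mul, one_div, theta_inv h1 hy, theta_inv h1 hu, theta_one h1]
  field_simp
  ring

/-- The symmetry `weierDefect_inv` forces the zero at `x = 1` to be double. -/
lemma deriv_weierDefect_one (h1 : ‖w‖ < 1) {u y : ℂ} (hu : u ≠ 0) (hy : y ≠ 0) :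
    deriv (weierDefect w u y) 1 = 0 := by
  set N := weierDefect w u y
  have h : HasDerivAt N (deriv N 1) 1 :=
    (analyticAt_weierDefect h1 hu hy one_ne_zero).differentiableAt.hasDerivAt
  have hi : HasDerivAt (fun x : ℂ => x⁻¹) (-1) 1 := by
    simpa using hasDerivAt_inv (one_ne_zero : (1:ℂ) ≠ 0)
  have h2 : HasDerivAt (fun x => N x⁻¹) (deriv N 1 * (-1)) 1 :=
    HasDerivAt.comp (h₂ := N) (h := fun x : ℂ => x⁻¹) 1 (by simpa using h) hi
  have h3 : HasDerivAt (fun x => N x / x ^ 2) (deriv N 1) 1 := by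
    have := h.fun_div (hasDerivAt_pow 2 (1:ℂ)) (by norm_num)
    have hN : N 1 = 0 := weierDefect_one h1 hu hy
    simpa [hN] using this
  have h4 := h3.congr_of_eventuallyEq (f₁ := fun x => N x⁻¹) (by
    filter_upwards [eventually_ne_nhds (one_ne_zero : (1:ℂ) ≠ 0)] with x hx
    exact weierDefect_inv h1 hu hy hx)
  have := h4.unique h2
  linear_combination this / 2

/-- Weierstrass' three-term relation, with one of the four parameters equal to `1`. -/
lemma weierstrass (h0 : w ≠ 0) (h1 : ‖w‖ < 1) {u y x : ℂ} (hy : y ≠ 0) (hx : x ≠ 0) (hu : u ≠ 0)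
    (tu : theta w u ≠ 0) :
    theta w (x * y) * theta w (x / y) * theta w u ^ 2 -
      theta w x ^ 2 * theta w (u * y) * theta w (u / y) =
    u / y * theta w y ^ 2 * theta w (x * u) * theta w (x / u) := by
  set N := weierDefect w u y with hN
  set Φ : ℂ → ℂ := fun x => N x / theta w x ^ 2 with hΦ
  have hper : ∀ t, t ≠ 0 → Φ (w * t) = Φ t := by
    intro t ht
    simp only [hΦ]
    rw [hN, weierDefect_w_mul h0 h1 hu hy ht, theta_w_mul h0 h1 ht]
    field_simp
  have hperz : ∀ n : ℤ, ∀ t, t ≠ 0 → Φ (w ^ n * t) = Φ t := by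
    intro n
    induction n using Int.induction_on with
    | zero => simp
    | succ n ih =>
      intro t ht
      rw [zpow_add_one₀ h0, mul_assoc, ih _ (mul_ne_zero h0 ht), hper t ht]
    | pred n ih =>
      intro t ht
      rw [zpow_sub_one₀ h0, mul_assoc, ih _ (mul_ne_zero (inv_ne_zero h0) ht),
        ← hper _ (mul_ne_zero (inv_ne_zero h0) ht), mul_inv_cancel_left₀ h0]
  have E1 : Extends Φ 1 := by
    refine ⟨fun t => dslope (dslope N 1) 1 t / thetaR w t ^ 2, ?_, ?_⟩
    · exact (analyticAt_dslope (analyticAt_dslope (analyticAt_weierDefect h1 hu hy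
        one_ne_zero))).fun_div ((analyticAt_thetaR h1 one_ne_zero).fun_pow 2)
        (pow_ne_zero 2 (thetaR_one_ne_zero h1))
    · filter_upwards [self_mem_nhdsWithin] with t ht
      have e1 := sub_smul_dslope N 1 t
      have e2 := sub_smul_dslope (dslope N 1) 1 t
      rw [smul_eq_mul] at e1 e2
      rw [dslope_same, hN, deriv_weierDefect_one h1 hu hy, sub_zero] at e2
      rw [hN, weierDefect_one h1 hu hy, sub_zero, ← e2] at e1
      have ht' : 1 - t ≠ 0 := sub_ne_zero.mpr (Ne.symm ht)
      simp only [hΦ]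
      rw [hN, ← e1, theta_eq h1, mul_pow, ← mul_assoc,
        show (t - 1) * (t - 1) = (1 - t) ^ 2 by ring, mul_div_mul_left _ _ (pow_ne_zero 2 ht')]
  have hext : ∀ t, t ≠ 0 → Extends Φ t := by
    intro t ht
    by_cases h : theta w t = 0
    · obtain ⟨n, hn⟩ := exists_zpow_of_theta_eq_zero h1 ht h
      obtain ⟨g, hg1, hg2⟩ := E1
      have hwn : w ^ n ≠ 0 := zpow_ne_zero _ h0
      refine ⟨fun s => g (w ^ n * s), ?_, ?_⟩
      · exact AnalyticAt.fun_comp (g := g) (f := fun s => w ^ n * s) (by rwa [hn]) (by fun_prop)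
      · have := tendsto_mul_punctured hwn t
        rw [hn] at this
        filter_upwards [this.eventually hg2,
          (eventually_ne_nhds ht).filter_mono nhdsWithin_le_nhds] with s e1 e2
        rw [← e1, hperz n s e2]
    · exact Extends.of_analyticAt ((analyticAt_weierDefect h1 hu hy ht).fun_div
        ((analyticAt_theta h1 ht).fun_pow 2) (pow_ne_zero 2 h))
  obtain ⟨c, hc⟩ := const_of_periodic h0 h1 hext fun t ht => by
    filter_upwards [(eventually_ne_nhds ht).filter_mono nhdsWithin_le_nhds] with s hs
    exact hper s hs
  have hc0 : c = 0 := by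
    have hA : AnalyticAt ℂ Φ u := (analyticAt_weierDefect h1 hu hy hu).fun_div
      ((analyticAt_theta h1 hu).fun_pow 2) (pow_ne_zero 2 tu)
    have := eq_of_eventuallyEq_ne hA.continuousAt (continuousAt_const (y := c)) (hc u hu)
    rw [← this]
    simp only [hΦ, hN, weierDefect, div_self hu, theta_one h1]
    ring
  have hzero : N x = 0 := by
    refine eq_of_eventuallyEq_ne (analyticAt_weierDefect h1 hu hy hx).continuousAt
      (continuousAt_const (y := (0:ℂ))) ?_
    filter_upwards [hc x hx, eventually_theta_ne_zero h0 h1 hx] with s e1 e2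
    rw [hc0] at e1
    exact (div_eq_zero_iff.mp e1).resolve_right (pow_ne_zero 2 e2)
  rw [hN, weierDefect] at hzero
  linear_combination hzero

lemma ld_inv (h1 : ‖w‖ < 1) {x : ℂ} (hx : x ≠ 0) (tx : theta w x ≠ 0) :
    ld w x⁻¹ = 1 - ld w x := by
  have hx' : x⁻¹ ≠ 0 := inv_ne_zero hx
  have h : HasDerivAt (theta w) (deriv (theta w) x⁻¹) x⁻¹ :=
    (analyticAt_theta h1 hx').differentiableAt.hasDerivAt
  have h2 : HasDerivAt (fun x => theta w x⁻¹) (deriv (theta w) x⁻¹ * (-(x ^ 2)⁻¹)) x :=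
    HasDerivAt.comp (h₂ := theta w) (h := fun x : ℂ => x⁻¹) x h (hasDerivAt_inv hx)
  have h3 := ((analyticAt_theta h1 hx).differentiableAt.hasDerivAt.fun_div (hasDerivAt_id x)
    hx).fun_neg.congr_of_eventuallyEq (f₁ := fun x => theta w x⁻¹) (by
    filter_upwards [eventually_ne_nhds hx] with z hz
    exact theta_inv h1 hz)
  have h4 := h2.unique h3
  simp only [id, mul_one] at h4
  rw [ld, ld, theta_inv h1 hx]
  field_simp at h4 ⊢
  linear_combination h4

lemma ld_w_mul (h0 : w ≠ 0) (h1 : ‖w‖ < 1) {x : ℂ} (hx : x ≠ 0) (tx : theta w x ≠ 0) :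
    ld w (w * x) = ld w x - 1 := by
  have h2 := hasDerivAt_theta_mul h1 (mul_ne_zero h0 hx)
  have h3 := ((analyticAt_theta h1 hx).differentiableAt.hasDerivAt.fun_div (hasDerivAt_id x)
    hx).fun_neg.congr_of_eventuallyEq (f₁ := fun x => theta w (w * x)) (by
    filter_upwards [eventually_ne_nhds hx] with z hz
    exact theta_w_mul h0 h1 hz)
  have h4 := h2.unique h3
  simp only [id, mul_one] at h4
  rw [ld, ld, theta_w_mul h0 h1 hx]
  field_simp at h4 ⊢
  linear_combination -h4

/-- The infinitesimal form of Weierstrass' relation. -/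
lemma weierstrass_deriv (h0 : w ≠ 0) (h1 : ‖w‖ < 1) {y x : ℂ} (hy : y ≠ 0) (hx : x ≠ 0)
    (tx : theta w x ≠ 0) (txy : theta w (x * y) ≠ 0) (txy' : theta w (x / y) ≠ 0) :
    2 * ld w x - ld w (x * y) - ld w (x / y) =
      thetaR w 1 * (x / y * theta w y ^ 2 * theta w (x * x)) /
        (theta w (x * y) * theta w (x / y) * theta w x ^ 2) := by
  have d1 : HasDerivAt (theta w) (deriv (theta w) x) x :=
    (analyticAt_theta h1 hx).differentiableAt.hasDerivAt
  have d2 : HasDerivAt (fun u => theta w (u * y)) (deriv (theta w) (x * y) * y) x := by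
    simpa only [mul_comm y] using hasDerivAt_theta_mul (b := y) (t := x) h1 (mul_ne_zero hy hx)
  have d3 : HasDerivAt (fun u => theta w (u / y)) (deriv (theta w) (x / y) * y⁻¹) x := by
    simpa only [mul_comm y⁻¹, ← div_eq_mul_inv] using
      hasDerivAt_theta_mul (b := y⁻¹) (t := x) h1 (mul_ne_zero (inv_ne_zero hy) hx)
  have d4 : HasDerivAt (fun u => theta w (x * u)) (deriv (theta w) (x * x) * x) x :=
    hasDerivAt_theta_mul h1 (mul_ne_zero hx hx)
  have d5 : HasDerivAt (fun u => theta w (x / u)) (thetaR w 1 / x) x := by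
    have e1 : HasDerivAt (fun u : ℂ => x / u) (-x⁻¹) x := by
      have := (hasDerivAt_inv hx).const_mul x
      rw [show x * -(x ^ 2)⁻¹ = -x⁻¹ by field_simp] at this
      simpa only [div_eq_mul_inv] using this
    have e2 : HasDerivAt (thetaR w) 0 (x / x) := by
      rw [div_self hx, ← deriv_thetaR_one h1]
      exact (analyticAt_thetaR h1 one_ne_zero).differentiableAt.hasDerivAt
    have e3 : HasDerivAt (fun u => thetaR w (x / u)) (0 * (-x⁻¹)) x :=
      HasDerivAt.comp (h₂ := thetaR w) (h := fun u : ℂ => x / u) x e2 e1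
    have e4 := (e1.const_sub 1).fun_mul e3
    simp only [← theta_eq h1, div_self hx] at e4
    rw [show thetaR w 1 / x = - -x⁻¹ * thetaR w 1 + (1 - 1) * (0 * -x⁻¹) by ring]
    exact e4
  have L := ((d1.fun_pow 2).const_mul (theta w (x * y) * theta w (x / y))).fun_sub
    ((d2.const_mul (theta w x ^ 2)).fun_mul d3)
  have R := ((((hasDerivAt_id x).div_const y).mul_const (theta w y ^ 2)).fun_mul d4).fun_mul d5
  have L' := L.congr_of_eventuallyEq (f₁ := fun u => id u / y * theta w y ^ 2 *
      theta w (x * u) * theta w (x / u)) (by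
    filter_upwards [eventually_ne_nhds hx, d1.continuousAt.eventually_ne tx] with u h2 h3
    rw [id, ← weierstrass h0 h1 hy hx h2 h3])
  have := L'.unique R
  simp only [id, div_self hx, theta_one h1] at this
  rw [ld, ld, ld]
  field_simp at this ⊢
  linear_combination this
end

/-! ### Theta values, theta series and Lambert series at powers of `Q` -/

/-- The theta function of nome `Q¹⁰` at the point `Qᵏ`. -/
noncomputable def th (Q : ℂ) (k : ℤ) : ℂ := theta (Q ^ 10) (Q ^ k)

/-- The residue `thetaRes` at integral powers of `Q`. -/
noncomputable def thRes (Q : ℂ) (A b c d : ℤ) : ℂ := th Q (A - b) / (th Q (c - b) * th Q (d - b))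

section
variable {Q : ℂ}

lemma w_ne (h0 : Q ≠ 0) : Q ^ 10 ≠ 0 := pow_ne_zero _ h0

lemma w_lt (h1 : ‖Q‖ < 1) : ‖Q ^ 10‖ < 1 := by
  rw [norm_pow]; exact pow_lt_one₀ (norm_nonneg _) h1 (by norm_num)

lemma th_ne_zero (h0 : Q ≠ 0) (h1 : ‖Q‖ < 1) {k : ℤ} (hk : k % 10 ≠ 0) : th Q k ≠ 0 := by
  intro h
  obtain ⟨n, hn⟩ := exists_zpow_of_theta_eq_zero (w_lt h1) (zpow_ne_zero k h0) h
  rw [← zpow_natCast, ← zpow_mul, ← zpow_add₀ h0] at hn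
  have := congrArg norm hn
  rw [norm_zpow, norm_one, zpow_eq_one_iff_right₀ (norm_nonneg _) h1.ne] at this
  push_cast at this
  omega

lemma th_neg (h0 : Q ≠ 0) (h1 : ‖Q‖ < 1) (k : ℤ) : th Q (-k) = -(th Q k / Q ^ k) := by
  rw [th, th, zpow_neg, theta_inv (w_lt h1) (zpow_ne_zero k h0)]

lemma th_refl (h0 : Q ≠ 0) (k : ℤ) : th Q (10 - k) = th Q k := by
  rw [th, th, zpow_sub₀ h0]
  exact theta_w_div _ (w_ne h0)

/-- Weierstrass' relation at powers of `Q`. -/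
lemma weier_th (h0 : Q ≠ 0) (h1 : ‖Q‖ < 1) {a b c : ℤ} (hc : c % 10 ≠ 0) :
    th Q (b + a) * th Q (b - a) * th Q c ^ 2 - th Q b ^ 2 * th Q (c + a) * th Q (c - a)
      + Q ^ (b - a) * th Q a ^ 2 * th Q (b + c) * th Q (c - b) = 0 := by
  have h := weierstrass (w_ne h0) (w_lt h1) (zpow_ne_zero a h0) (zpow_ne_zero b h0)
    (zpow_ne_zero c h0) (th_ne_zero h0 h1 hc)
  simp only [← zpow_sub₀ h0, ← zpow_add₀ h0, ← th.eq_def] at h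
  have e := th_neg h0 h1 (c - b)
  rw [neg_sub] at e
  rw [h, e]
  have : Q ^ (c - a) = Q ^ (b - a) * Q ^ (c - b) := by rw [← zpow_add₀ h0]; congr 1; ring
  rw [this]
  have := zpow_ne_zero (c - b) h0
  field_simp
  ring

/-- Values `θ(Qᵏ)` reduced to those with `1 ≤ k ≤ 5`. -/
lemma th_values (h0 : Q ≠ 0) (h1 : ‖Q‖ < 1) :
    (th Q 6 = th Q 4 ∧ th Q 7 = th Q 3 ∧ th Q 8 = th Q 2 ∧ th Q 9 = th Q 1) ∧
    th Q (-1) = -(th Q 1 / Q) ∧ th Q (-2) = -(th Q 2 / Q ^ 2) ∧ th Q (-3) = -(th Q 3 / Q ^ 3) ∧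
    th Q (-4) = -(th Q 4 / Q ^ 4) ∧ th Q (-5) = -(th Q 5 / Q ^ 5) ∧
    th Q (-6) = -(th Q 4 / Q ^ 6) ∧ th Q (-7) = -(th Q 3 / Q ^ 7) ∧
    th Q (-8) = -(th Q 2 / Q ^ 8) ∧ th Q (-9) = -(th Q 1 / Q ^ 9) ∧
    th Q (-11) = th Q 1 / Q ^ 12 ∧ th Q (-13) = th Q 3 / Q ^ 16 := by
  have r6 := th_refl h0 4
  have r7 := th_refl h0 3
  have r8 := th_refl h0 2
  have r9 := th_refl h0 1
  norm_num at r6 r7 r8 r9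
  have r11 := th_refl h0 (-1)
  have r13 := th_refl h0 (-3)
  norm_num at r11 r13
  refine ⟨⟨r6, r7, r8, r9⟩, ?_, ?_, ?_, ?_, ?_, ?_, ?_, ?_, ?_, ?_, ?_⟩
  · rw [th_neg h0 h1, zpow_one]
  · rw [th_neg h0 h1]; norm_cast
  · rw [th_neg h0 h1]; norm_cast
  · rw [th_neg h0 h1]; norm_cast
  · rw [th_neg h0 h1]; norm_cast
  · rw [th_neg h0 h1, r6]; norm_cast
  · rw [th_neg h0 h1, r7]; norm_cast
  · rw [th_neg h0 h1, r8]; norm_cast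
  · rw [th_neg h0 h1, r9]; norm_cast
  · rw [th_neg h0 h1, r11, th_neg h0 h1, zpow_one, show Q ^ (11:ℤ) = Q ^ 11 by norm_cast]
    field_simp
  · rw [th_neg h0 h1, r13, th_neg h0 h1, show Q ^ (13:ℤ) = Q ^ 13 by norm_cast,
      show Q ^ (3:ℤ) = Q ^ 3 by norm_cast]
    field_simp

/-- The three-term relations between the five theta values. -/
lemma th_relations (h0 : Q ≠ 0) (h1 : ‖Q‖ < 1) :
    (Q * th Q 1 ^ 3 * th Q 5 + th Q 1 * th Q 3 ^ 3 - th Q 2 ^ 3 * th Q 4 = 0) ∧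
    (Q * th Q 1 ^ 2 * th Q 2 * th Q 4 + th Q 1 * th Q 3 * th Q 4 ^ 2
      - th Q 2 ^ 2 * th Q 3 * th Q 5 = 0) ∧
    (Q * th Q 1 ^ 2 * th Q 3 ^ 2 + th Q 1 * th Q 3 * th Q 5 ^ 2 - th Q 2 ^ 2 * th Q 4 ^ 2 = 0) ∧
    (Q ^ 2 * th Q 1 ^ 2 * th Q 2 ^ 2 + th Q 2 * th Q 4 * th Q 5 ^ 2
      - th Q 3 ^ 2 * th Q 4 ^ 2 = 0) ∧
    (Q ^ 3 * th Q 1 ^ 4 + th Q 3 * th Q 5 ^ 3 - th Q 4 ^ 4 = 0) ∧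
    (Q * th Q 1 * th Q 2 ^ 2 * th Q 3 + th Q 1 * th Q 4 ^ 2 * th Q 5
      - th Q 2 * th Q 3 ^ 2 * th Q 4 = 0) := by
  obtain ⟨⟨r6, r7, r8, r9⟩, -⟩ := th_values h0 h1
  have R123 := weier_th h0 h1 (a := 1) (b := 2) (c := 3) (by norm_num)
  have R124 := weier_th h0 h1 (a := 1) (b := 2) (c := 4) (by norm_num)
  have R125 := weier_th h0 h1 (a := 1) (b := 2) (c := 5) (by norm_num)
  have R135 := weier_th h0 h1 (a := 1) (b := 3) (c := 5) (by norm_num)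
  have R145 := weier_th h0 h1 (a := 1) (b := 4) (c := 5) (by norm_num)
  have R234 := weier_th h0 h1 (a := 2) (b := 3) (c := 4) (by norm_num)
  norm_num [r6, r7, r8, r9] at R123 R124 R125 R135 R145 R234
  norm_cast at R135 R145
  refine ⟨?_, ?_, ?_, ?_, ?_, ?_⟩
  · linear_combination R123
  · linear_combination R124
  · linear_combination R125
  · linear_combination R135
  · linear_combination R145
  · linear_combination R234

lemma th_div {b c : ℤ} (h0 : Q ≠ 0) : theta (Q ^ 10) (Q ^ c / Q ^ b) = th Q (c - b) := by
  rw [th, zpow_sub₀ h0]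

lemma thetaRes_zpow (h0 : Q ≠ 0) (A b c d : ℤ) :
    thetaRes (Q ^ 10) (Q ^ A) (Q ^ b) (Q ^ c) (Q ^ d) = thRes Q A b c d := by
  rw [thetaRes, thRes, th_div h0, th_div h0, th_div h0]

lemma pf_exponent (h0 : Q ≠ 0) (A b c d x : ℤ) :
    Q ^ 10 * (Q ^ x) ^ 2 * Q ^ A / (Q ^ b * Q ^ c * Q ^ d) =
      Q ^ (10 + 2 * x + A - b - c - d) := by
  rw [← zpow_natCast Q 10, ← zpow_natCast (Q ^ x) 2, ← zpow_mul, ← zpow_add₀ h0, ← zpow_add₀ h0,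
    ← zpow_add₀ h0, ← zpow_add₀ h0, ← zpow_sub₀ h0]
  congr 1
  push_cast
  ring

/-- The linear relation between theta series in `pfDefect_eq_zero`, at powers of `Q`. -/
lemma pf_gauss (h0 : Q ≠ 0) (h1 : ‖Q‖ < 1) {A b c d : ℤ} (hcb : (c - b) % 10 ≠ 0)
    (hdb : (d - b) % 10 ≠ 0) (hdc : (d - c) % 10 ≠ 0) :
    thRes Q A b c d * gauss (Q ^ 10) (Q ^ (10 + 2 * b + A - b - c - d))
    + thRes Q A c b d * gauss (Q ^ 10) (Q ^ (10 + 2 * c + A - b - c - d))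
    + thRes Q A d b c * gauss (Q ^ 10) (Q ^ (10 + 2 * d + A - b - c - d)) = 0 := by
  have h := (pfDefect_eq_zero (w_ne h0) (w_lt h1) (zpow_ne_zero A h0) (zpow_ne_zero b h0)
    (zpow_ne_zero c h0) (zpow_ne_zero d h0) (by rw [th_div h0]; exact th_ne_zero h0 h1 hcb)
    (by rw [th_div h0]; exact th_ne_zero h0 h1 hdb)
    (by rw [th_div h0]; exact th_ne_zero h0 h1 hdc)).2
  simpa only [thetaRes_zpow h0, pf_exponent h0] using h

/-- The expansion `partial_fractions` at powers of `Q`. -/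
lemma pf_lam (h0 : Q ≠ 0) (h1 : ‖Q‖ < 1) {A b c d : ℤ} (hcb : (c - b) % 10 ≠ 0)
    (hdb : (d - b) % 10 ≠ 0) (hdc : (d - c) % 10 ≠ 0) (hb : b % 10 ≠ 0) (hc : c % 10 ≠ 0)
    (hd : d % 10 ≠ 0) :
    thRes Q A b c d * lam (Q ^ 10) (Q ^ b) (Q ^ (10 + 2 * b + A - b - c - d))
    + thRes Q A c b d * lam (Q ^ 10) (Q ^ c) (Q ^ (10 + 2 * c + A - b - c - d))
    + thRes Q A d b c * lam (Q ^ 10) (Q ^ d) (Q ^ (10 + 2 * d + A - b - c - d))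
    = thetaR (Q ^ 10) 1 * th Q A / (th Q b * th Q c * th Q d) := by
  have h := partial_fractions (w_ne h0) (w_lt h1) (zpow_ne_zero A h0) (zpow_ne_zero b h0)
    (zpow_ne_zero c h0) (zpow_ne_zero d h0) (by rw [th_div h0]; exact th_ne_zero h0 h1 hcb)
    (by rw [th_div h0]; exact th_ne_zero h0 h1 hdb)
    (by rw [th_div h0]; exact th_ne_zero h0 h1 hdc) (th_ne_zero h0 h1 hb) (th_ne_zero h0 h1 hc)
    (th_ne_zero h0 h1 hd)
  simpa only [thetaRes_zpow h0, pf_exponent h0, ← th.eq_def] using h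

/-- The expansion `partial_fractions_one` at powers of `Q`. -/
lemma pf_lamReg (h0 : Q ≠ 0) (h1 : ‖Q‖ < 1) {A c d : ℤ} (hdc : (d - c) % 10 ≠ 0)
    (hA : A % 10 ≠ 0) (hc : c % 10 ≠ 0) (hd : d % 10 ≠ 0) :
    thRes Q A 0 c d * lamReg (Q ^ 10) 1 (Q ^ (10 + 2 * 0 + A - 0 - c - d))
    + thRes Q A c 0 d * lam (Q ^ 10) (Q ^ c) (Q ^ (10 + 2 * c + A - 0 - c - d))
    + thRes Q A d 0 c * lam (Q ^ 10) (Q ^ d) (Q ^ (10 + 2 * d + A - 0 - c - d))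
    = - thRes Q A 0 c d * (ld (Q ^ 10) (Q ^ A) - ld (Q ^ 10) (Q ^ c) - ld (Q ^ 10) (Q ^ d)) := by
  have h := partial_fractions_one (w_ne h0) (w_lt h1) (zpow_ne_zero A h0)
    (zpow_ne_zero c h0) (zpow_ne_zero d h0)
    (by rw [th_div h0]; exact th_ne_zero h0 h1 hdc) (th_ne_zero h0 h1 hA) (th_ne_zero h0 h1 hc)
    (th_ne_zero h0 h1 hd)
  simp only [← thetaRes_zpow h0, ← pf_exponent h0]
  simpa using h

/-- Shorthand for the theta series `gauss` at integral powers of `Q`. -/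
noncomputable def gaussQ (Q : ℂ) (k : ℤ) : ℂ := gauss (Q ^ 10) (Q ^ k)

/-- Shorthand for the Lambert series `lam` at integral powers of `Q`. -/
noncomputable def lamQ (Q : ℂ) (k j : ℤ) : ℂ := lam (Q ^ 10) (Q ^ k) (Q ^ j)

/-- Shorthand for `lamReg` at integral powers of `Q`. -/
noncomputable def lamRegQ (Q : ℂ) (j : ℤ) : ℂ := lamReg (Q ^ 10) 1 (Q ^ j)

/-- The theta quotient multiplying `q⁰` in the 5-dissection of `∑ q^{2n²+n}`. -/
noncomputable def alphaQ (Q : ℂ) : ℂ := th Q 4 * th Q 5 / (th Q 2 * th Q 3)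

/-- The theta quotient multiplying `q¹` in the 5-dissection of `∑ q^{2n²+n}`. -/
noncomputable def betaQ (Q : ℂ) : ℂ := th Q 2 * th Q 5 / (th Q 1 * th Q 4)

lemma th_ne (h0 : Q ≠ 0) (h1 : ‖Q‖ < 1) :
    th Q 1 ≠ 0 ∧ th Q 2 ≠ 0 ∧ th Q 3 ≠ 0 ∧ th Q 4 ≠ 0 ∧ th Q 5 ≠ 0 := by
  refine ⟨?_, ?_, ?_, ?_, ?_⟩ <;> exact th_ne_zero h0 h1 (by norm_num)

/-- The terms with exponents `≡ 0 mod 5` of `∑ q^{2n²+n}`. -/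
lemma gauss_rel0 (h0 : Q ≠ 0) (h1 : ‖Q‖ < 1) :
    gaussQ Q 1 + Q ^ 2 * gaussQ Q 9 = alphaQ Q * gaussQ Q 5 := by
  obtain ⟨⟨r6, r7, r8, r9⟩, m1, m2, m3, m4, m5, m6, m7, m8, m9, m11, m13⟩ := th_values h0 h1
  obtain ⟨t1, t2, t3, t4, t5⟩ := th_ne h0 h1
  have h := pf_gauss h0 h1 (A := -3) (b := 0) (c := 4) (d := 2) (by norm_num) (by norm_num) (by norm_num)
  norm_num only [← gaussQ.eq_def, thRes, r6, r7, r8, r9, m1, m2, m3, m4, m5, m6, m7, m8, m9,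
    m11, m13] at h
  rw [alphaQ]
  field_simp at h ⊢
  linear_combination -h

/-- The terms with exponents `≡ 1 mod 5` of `∑ q^{2n²+n}`. -/
lemma gauss_rel1 (h0 : Q ≠ 0) (h1 : ‖Q‖ < 1) :
    gaussQ Q (-3) + Q ^ 4 * gaussQ Q 13 = betaQ Q * gaussQ Q 5 := by
  obtain ⟨⟨r6, r7, r8, r9⟩, m1, m2, m3, m4, m5, m6, m7, m8, m9, m11, m13⟩ := th_values h0 h1
  obtain ⟨t1, t2, t3, t4, t5⟩ := th_ne h0 h1
  have h := pf_gauss h0 h1 (A := -3) (b := 2) (c := -2) (d := 6) (by norm_num) (by norm_num) (by norm_num)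
  norm_num only [← gaussQ.eq_def, thRes, r6, r7, r8, r9, m1, m2, m3, m4, m5, m6, m7, m8, m9,
    m11, m13] at h
  rw [betaQ]
  field_simp at h ⊢
  linear_combination -h

/-- The terms with exponents `≡ 1 mod 5` of the Lambert series with `a = 1` (see `lamSummand`). -/
lemma lam_rel1 (h0 : Q ≠ 0) (h1 : ‖Q‖ < 1) :
    lamQ Q (-2) (-3) + Q ^ 4 * lamQ Q 6 13 =
      betaQ Q * lamQ Q 2 5 - thetaR (Q ^ 10) 1 * th Q 3 / (th Q 1 * th Q 2) := by
  obtain ⟨⟨r6, r7, r8, r9⟩, m1, m2, m3, m4, m5, m6, m7, m8, m9, m11, m13⟩ := th_values h0 h1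
  obtain ⟨t1, t2, t3, t4, t5⟩ := th_ne h0 h1
  have h := pf_lam h0 h1 (A := -3) (b := 2) (c := -2) (d := 6) (by norm_num) (by norm_num) (by norm_num) (by norm_num) (by norm_num) (by norm_num)
  norm_num only [← lamQ.eq_def, thRes, r6, r7, r8, r9, m1, m2, m3, m4, m5, m6, m7, m8, m9,
    m11, m13] at h
  rw [betaQ]
  field_simp at h ⊢
  linear_combination -h

/-- The terms with exponents `≡ 4 mod 5` of the Lambert series with `a = 3`. -/
lemma lam_rel4 (h0 : Q ≠ 0) (h1 : ‖Q‖ < 1) :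
    lamQ Q (-2) (-1) + Q ^ 3 * lamQ Q 4 11 = alphaQ Q * lamQ Q (-4) (-5)
      - thetaR (Q ^ 10) 1 * Q ^ 2 * th Q 1 / (th Q 3 * th Q 4) := by
  obtain ⟨⟨r6, r7, r8, r9⟩, m1, m2, m3, m4, m5, m6, m7, m8, m9, m11, m13⟩ := th_values h0 h1
  obtain ⟨t1, t2, t3, t4, t5⟩ := th_ne h0 h1
  have h := pf_lam h0 h1 (A := -9) (b := -4) (c := 4) (d := -2) (by norm_num) (by norm_num) (by norm_num) (by norm_num) (by norm_num) (by norm_num)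
  norm_num only [← lamQ.eq_def, thRes, r6, r7, r8, r9, m1, m2, m3, m4, m5, m6, m7, m8, m9,
    m11, m13] at h
  rw [alphaQ]
  field_simp at h ⊢
  linear_combination h

/-- Shorthand for the logarithmic derivative `ld` at integral powers of `Q`. -/
noncomputable def ldQ (Q : ℂ) (k : ℤ) : ℂ := ld (Q ^ 10) (Q ^ k)

/-- The terms with exponents `≡ 0 mod 5` of the Lambert series with `a = 1`. -/
lemma lam_rel0a (h0 : Q ≠ 0) (h1 : ‖Q‖ < 1) :
    lamRegQ Q 1 + Q ^ 2 * lamQ Q 4 9 =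
      alphaQ Q * lamQ Q 2 5 - (ldQ Q (-3) - ldQ Q 4 - ldQ Q 2) := by
  obtain ⟨⟨r6, r7, r8, r9⟩, m1, m2, m3, m4, m5, m6, m7, m8, m9, m11, m13⟩ := th_values h0 h1
  obtain ⟨t1, t2, t3, t4, t5⟩ := th_ne h0 h1
  have h := pf_lamReg h0 h1 (A := -3) (c := 4) (d := 2) (by norm_num) (by norm_num) (by norm_num) (by norm_num)
  norm_num only [← lamQ.eq_def, ← lamRegQ.eq_def, ← ldQ.eq_def, thRes, r6, r7, r8, r9, m1, m2, m3, m4, m5, m6, m7, m8, m9,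
    m11, m13] at h
  rw [alphaQ]
  field_simp at h ⊢
  linear_combination -h

/-- The terms with exponents `≡ 0 mod 5` of the Lambert series with `a = 3`. -/
lemma lam_rel0b (h0 : Q ≠ 0) (h1 : ‖Q‖ < 1) :
    lamRegQ Q 3 + Q * lamQ Q 2 7 =
      betaQ Q * lamQ Q (-4) (-5) - (ldQ Q (-9) - ldQ Q 2 - ldQ Q (-4)) := by
  obtain ⟨⟨r6, r7, r8, r9⟩, m1, m2, m3, m4, m5, m6, m7, m8, m9, m11, m13⟩ := th_values h0 h1
  obtain ⟨t1, t2, t3, t4, t5⟩ := th_ne h0 h1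
  have h := pf_lamReg h0 h1 (A := -9) (c := 2) (d := -4) (by norm_num) (by norm_num) (by norm_num) (by norm_num)
  norm_num only [← lamQ.eq_def, ← lamRegQ.eq_def, ← ldQ.eq_def, thRes, r6, r7, r8, r9, m1, m2, m3, m4, m5, m6, m7, m8, m9,
    m11, m13] at h
  rw [betaQ]
  field_simp at h ⊢
  linear_combination h

lemma ldQ_neg (h0 : Q ≠ 0) (h1 : ‖Q‖ < 1) {k : ℤ} (hk : k % 10 ≠ 0) :
    ldQ Q (-k) = 1 - ldQ Q k := by
  rw [ldQ, ldQ, zpow_neg, ld_inv (w_lt h1) (zpow_ne_zero k h0) (th_ne_zero h0 h1 hk)]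

lemma ldQ_add (h0 : Q ≠ 0) (h1 : ‖Q‖ < 1) {k : ℤ} (hk : k % 10 ≠ 0) :
    ldQ Q (10 + k) = ldQ Q k - 1 := by
  rw [ldQ, ldQ, zpow_add₀ h0, ← ld_w_mul (w_ne h0) (w_lt h1) (zpow_ne_zero k h0)
    (th_ne_zero h0 h1 hk)]
  norm_cast

/-- The relation `weierstrass_deriv` at powers of `Q`. -/
lemma weier_ld (h0 : Q ≠ 0) (h1 : ‖Q‖ < 1) {a b : ℤ} (ha : a % 10 ≠ 0)
    (hs : (a + b) % 10 ≠ 0) (hd : (a - b) % 10 ≠ 0) :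
    2 * ldQ Q a - ldQ Q (a + b) - ldQ Q (a - b) =
      thetaR (Q ^ 10) 1 * (Q ^ (a - b) * th Q b ^ 2 * th Q (a + a)) /
        (th Q (a + b) * th Q (a - b) * th Q a ^ 2) := by
  have h := weierstrass_deriv (w_ne h0) (w_lt h1) (zpow_ne_zero b h0) (zpow_ne_zero a h0)
    (th_ne_zero h0 h1 ha) (by rw [← zpow_add₀ h0]; exact th_ne_zero h0 h1 hs)
    (by rw [← zpow_sub₀ h0]; exact th_ne_zero h0 h1 hd)
  simpa only [← zpow_sub₀ h0, ← zpow_add₀ h0, ← th.eq_def, ← ldQ.eq_def] using h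

/-- The combination of logarithmic derivatives left over by `lam_rel0a` and `lam_rel0b` is a sum
of theta quotients. -/
lemma ld_combination (h0 : Q ≠ 0) (h1 : ‖Q‖ < 1) :
    (ldQ Q (-3) - ldQ Q 4 - ldQ Q 2) - 2 * (ldQ Q (-9) - ldQ Q 2 - ldQ Q (-4)) =
      thetaR (Q ^ 10) 1 * (th Q 2 * th Q 4 ^ 2 / (th Q 1 ^ 2 * th Q 3 * th Q 5)
        - Q ^ 2 * th Q 2 ^ 2 / th Q 4 ^ 3) := by
  obtain ⟨⟨r6, r7, r8, r9⟩, m1, m2, m3, m4, m5, m6, m7, m8, m9, m11, m13⟩ := th_values h0 h1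
  obtain ⟨t1, t2, t3, t4, t5⟩ := th_ne h0 h1
  have a1 := weier_ld h0 h1 (a := 1) (b := 4) (by norm_num) (by norm_num) (by norm_num)
  have a2 := weier_ld h0 h1 (a := 4) (b := 8) (by norm_num) (by norm_num) (by norm_num)
  have n1 := ldQ_neg h0 h1 (k := 1) (by norm_num)
  have n3 := ldQ_neg h0 h1 (k := 3) (by norm_num)
  have n4 := ldQ_neg h0 h1 (k := 4) (by norm_num)
  have n5 := ldQ_neg h0 h1 (k := 5) (by norm_num)
  have p1 := ldQ_add h0 h1 (k := -9) (by norm_num)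
  have p5 := ldQ_add h0 h1 (k := -5) (by norm_num)
  have p2 := ldQ_add h0 h1 (k := 2) (by norm_num)
  have v12 : th Q 12 = -(th Q 2 / Q ^ 2) := by
    have := th_refl h0 (-2)
    norm_num only [m2] at this
    exact this
  have z3 : Q ^ (-3 : ℤ) = (Q ^ 3)⁻¹ := by rw [zpow_neg]; norm_cast
  have z4 : Q ^ (-4 : ℤ) = (Q ^ 4)⁻¹ := by rw [zpow_neg]; norm_cast
  norm_num only [r6, r7, r8, r9, m3, m4, v12, z3, z4] at a1 a2 n1 n3 n4 n5 p1 p5 p2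
  have b1 : 2 * ldQ Q 1 - ldQ Q 5 - ldQ Q (-3) =
      - (thetaR (Q ^ 10) 1 * (th Q 2 * th Q 4 ^ 2 / (th Q 1 ^ 2 * th Q 3 * th Q 5))) := by
    rw [a1]
    field_simp
  have b2 : 2 * ldQ Q 4 - ldQ Q 12 - ldQ Q (-4) =
      thetaR (Q ^ 10) 1 * (Q ^ 2 * th Q 2 ^ 2 / th Q 4 ^ 3) := by
    rw [a2]
    field_simp
  linear_combination -b1 - b2 + 2 * p1 + n4 - p2 - p5 / 2 - n5 / 2

/-- The coefficient identities behind the 5-dissection. -/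
lemma theta_identities (h0 : Q ≠ 0) (h1 : ‖Q‖ < 1) {x0 x2 x3 x4 : ℂ}
    (hx2 : x2 = -Q * th Q 1 / (th Q 4 * th Q 5)) (hx3 : x3 = -1 / th Q 4)
    (hx4 : x4 = alphaQ Q * (th Q 1 / (th Q 4 * th Q 5)))
    (hx0 : x0 = -alphaQ Q * x3 - betaQ Q * x2) :
    (th Q 2 * th Q 4 ^ 2 / (th Q 1 ^ 2 * th Q 3 * th Q 5) - Q ^ 2 * th Q 2 ^ 2 / th Q 4 ^ 3
      = alphaQ Q * x0 + Q * (betaQ Q * x4 + x2)) ∧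
    (th Q 3 / (th Q 1 * th Q 2) = betaQ Q * x0 + Q * x3) ∧
    (-2 * Q * th Q 1 / (th Q 3 * th Q 4) = alphaQ Q * x4 + betaQ Q * x3) := by
  obtain ⟨t1, t2, t3, t4, t5⟩ := th_ne h0 h1
  obtain ⟨R123, R124, R125, R135, R145, R234⟩ := th_relations h0 h1
  subst hx0 hx4 hx3 hx2
  simp only [alphaQ, betaQ]
  generalize th Q 1 = u1 at *
  generalize th Q 2 = u2 at *
  generalize th Q 3 = u3 at *
  generalize th Q 4 = u4 at *
  generalize th Q 5 = u5 at *
  refine ⟨?_, ?_, ?_⟩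
  -- The coefficients express each identity in the ideal generated by the three-term relations.
  · field_simp
    linear_combination -Q^2*u1^3*u5^2*R123 + Q*u2^3*u4*u5*R123 - Q*u1*u2^2*u5^2*R124
      + Q*u1*u2*u3^2*u4*R124 + Q*u1^2*u3*u5^2*R125 - u1*u5^4*R125 - Q*u2^4*u5*R125
      - u2*u3*u4^3*R125 - u1*u2*u4*u5^2*R135 + u1^2*u5^3*R145
  · field_simp
    linear_combination Q*u2*R124 - u4*R135
  · field_simp
    linear_combination -u2*u3*R124 - u1*u4*R234
end

/-! ### The 5-dissection -/

section
variable {q : ℂ}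

/-- Summation over `ℤ` by residue classes modulo `5`, with arbitrary class representatives. -/
lemma hasSum_five {f : ℤ → ℂ} {r : Fin 5 → ℤ} (hr : ∀ i, r i % 5 = (i : ℕ)) {a : Fin 5 → ℂ}
    (h : ∀ i, HasSum (fun m : ℤ => f (5 * m + r i)) (a i)) : HasSum f (∑ i, a i) := by
  have key : ∀ i : Fin 5, HasSum (fun n : ℤ => if n % 5 = (i : ℕ) then f n else 0) (a i) := by
    intro i
    have hinj : Function.Injective fun m : ℤ => 5 * m + r i := fun a b hab => by
      simp only at hab; omega
    rw [← hinj.hasSum_iff]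
    · convert h i using 2 with m
      have := hr i
      have h2 : (5 * m + r i) % 5 = (i : ℕ) := by omega
      simp [h2]
    · intro n hn
      rw [if_neg]
      intro h2
      refine hn ⟨(n - r i) / 5, ?_⟩
      have := hr i
      simp only
      omega
  convert hasSum_sum (s := Finset.univ) fun i _ => key i with n
  have : n % 5 = 0 ∨ n % 5 = 1 ∨ n % 5 = 2 ∨ n % 5 = 3 ∨ n % 5 = 4 := by omega
  rw [Fin.sum_univ_five]
  rcases this with h | h | h | h | h <;> simp [h]

lemma hasSum_section (h0 : q ≠ 0) (h1 : ‖q‖ < 1) (a r : ℤ) :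
    HasSum (fun m : ℤ => q ^ (2 * (5 * m + r) ^ 2 + a * (5 * m + r)))
      (q ^ (2 * r ^ 2 + a * r) * gaussQ (q ^ 5) (4 * r + a)) := by
  have h5 : q ^ 5 ≠ 0 := pow_ne_zero _ h0
  have h51 : ‖q ^ 5‖ < 1 := by
    rw [norm_pow]; exact pow_lt_one₀ (norm_nonneg _) h1 (by norm_num)
  have := ((summable_gaussC (w_ne h5) (w_lt h51)
    (zpow_ne_zero (4 * r + a) h5)).of_norm.hasSum).mul_left (q ^ (2 * r ^ 2 + a * r))
  refine this.congr_fun ?_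
  intro m
  simp only [← zpow_natCast, ← zpow_mul, ← zpow_add₀ h0]
  congr 1
  push_cast
  ring

/-- The `n`-th summand of the Lambert series `∑_{n ≠ 0} q^{2n²+an} / (1 - q^{10n})`. -/
noncomputable def lamSummand (q : ℂ) (a n : ℤ) : ℂ :=
  if n = 0 then 0 else q ^ (2 * n ^ 2 + a * n) / (1 - q ^ (10 * n))

lemma lamSummand_section (h0 : q ≠ 0) (a r m : ℤ) :
    q ^ (2 * (5 * m + r) ^ 2 + a * (5 * m + r)) / (1 - q ^ (10 * (5 * m + r))) =
      q ^ (2 * r ^ 2 + a * r) *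
        lamTerm ((q ^ 5) ^ 10) ((q ^ 5) ^ (2 * r)) ((q ^ 5) ^ (4 * r + a)) m := by
  rw [lamTerm, ← mul_div_assoc]
  simp only [← zpow_natCast, ← zpow_mul, ← zpow_add₀ h0]
  congr 1
  · congr 1
    push_cast
    ring
  · congr 2
    push_cast
    ring

lemma hasSum_lam_section (h0 : q ≠ 0) (h1 : ‖q‖ < 1) (a : ℤ) {r : ℤ} (hr : r % 5 ≠ 0) :
    HasSum (fun m : ℤ => lamSummand q a (5 * m + r))
      (q ^ (2 * r ^ 2 + a * r) * lamQ (q ^ 5) (2 * r) (4 * r + a)) := by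
  have h5 : q ^ 5 ≠ 0 := pow_ne_zero _ h0
  have h51 : ‖q ^ 5‖ < 1 := by
    rw [norm_pow]; exact pow_lt_one₀ (norm_nonneg _) h1 (by norm_num)
  have := ((summable_lam (w_ne h5) (w_lt h51) (zpow_ne_zero (2 * r) h5)
    (zpow_ne_zero (4 * r + a) h5) fun m _ => ne_one_of_theta (w_ne h5) (w_lt h51)
      (th_ne_zero h5 h51 (k := 2 * r) (by omega)) m).hasSum).mul_left (q ^ (2 * r ^ 2 + a * r))
  refine this.congr_fun ?_
  intro m
  rw [lamSummand, if_neg (by omega), lamSummand_section h0]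

lemma hasSum_lam_section_zero (h0 : q ≠ 0) (h1 : ‖q‖ < 1) (a : ℤ) :
    HasSum (fun m : ℤ => lamSummand q a (5 * m + 0)) (lamRegQ (q ^ 5) a) := by
  have h5 : q ^ 5 ≠ 0 := pow_ne_zero _ h0
  have h51 : ‖q ^ 5‖ < 1 := by
    rw [norm_pow]; exact pow_lt_one₀ (norm_nonneg _) h1 (by norm_num)
  have := (summable_lamReg (w_ne h5) (w_lt h51) one_ne_zero
    (zpow_ne_zero a h5) (fun m hm h => ?_)).hasSum
  · refine this.congr_fun ?_
    intro m
    rcases eq_or_ne m 0 with rfl | hm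
    · simp [lamSummand]
    · rw [lamSummand, if_neg (by omega), lamSummand_section h0, if_neg hm]
      simp
  · have := congrArg norm h
    rw [mul_one, norm_zpow, norm_one,
      zpow_eq_one_iff_right₀ (norm_nonneg _) (w_lt h51).ne] at this
    exact hm this

/-- The 5-dissection of `∑ q^{2n²+n}`. -/
lemma hasSum_psi (h0 : q ≠ 0) (h1 : ‖q‖ < 1) :
    HasSum (fun n : ℤ => q ^ (2 * n ^ 2 + n))
      (gaussQ (q ^ 5) 5 * (alphaQ (q ^ 5) + q * betaQ (q ^ 5) + q ^ 3)) := by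
  have h5 : q ^ 5 ≠ 0 := pow_ne_zero _ h0
  have h51 : ‖q ^ 5‖ < 1 := by
    rw [norm_pow]; exact pow_lt_one₀ (norm_nonneg _) h1 (by norm_num)
  have h := hasSum_five (f := fun n : ℤ => q ^ (2 * n ^ 2 + n)) (r := ![0, 1, 2, 3, -1])
    (by decide)
    (a := ![gaussQ (q ^ 5) 1, q ^ 3 * gaussQ (q ^ 5) 5, q ^ 10 * gaussQ (q ^ 5) 9,
      q ^ 21 * gaussQ (q ^ 5) 13, q * gaussQ (q ^ 5) (-3)]) ?_
  · have e0 := gauss_rel0 h5 h51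
    have e1 := gauss_rel1 h5 h51
    convert h using 1
    simp [Fin.sum_univ_five]
    linear_combination -e0 - q * e1
  · intro i
    fin_cases i
    · simpa using hasSum_section h0 h1 1 0
    · simpa using hasSum_section h0 h1 1 1
    · simpa using hasSum_section h0 h1 1 2
    · simpa using hasSum_section h0 h1 1 3
    · simpa using hasSum_section h0 h1 1 (-1)

/-- The Lambert series with `a = 1`, split by the residue of `n` modulo `5`. -/
lemma hasSum_lam0 (h0 : q ≠ 0) (h1 : ‖q‖ < 1) :
    HasSum (lamSummand q 1)
      (lamRegQ (q ^ 5) 1 + q ^ 3 * lamQ (q ^ 5) 2 5 + q ^ 10 * lamQ (q ^ 5) 4 9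
        + q ^ 21 * lamQ (q ^ 5) 6 13 + q * lamQ (q ^ 5) (-2) (-3)) := by
  have h := hasSum_five (f := lamSummand q 1) (r := ![0, 1, 2, 3, -1]) (by decide)
    (a := ![lamRegQ (q ^ 5) 1, q ^ 3 * lamQ (q ^ 5) 2 5, q ^ 10 * lamQ (q ^ 5) 4 9,
      q ^ 21 * lamQ (q ^ 5) 6 13, q * lamQ (q ^ 5) (-2) (-3)]) ?_
  · simpa [Fin.sum_univ_five] using h
  · intro i
    fin_cases i
    · exact hasSum_lam_section_zero h0 h1 1
    · simpa using hasSum_lam_section h0 h1 1 (r := 1) (by norm_num)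
    · simpa using hasSum_lam_section h0 h1 1 (r := 2) (by norm_num)
    · simpa using hasSum_lam_section h0 h1 1 (r := 3) (by norm_num)
    · simpa using hasSum_lam_section h0 h1 1 (r := -1) (by norm_num)

/-- The Lambert series with `a = 3`, split by the residue of `n` modulo `5`. -/
lemma hasSum_lam1 (h0 : q ≠ 0) (h1 : ‖q‖ < 1) :
    HasSum (lamSummand q 3)
      (lamRegQ (q ^ 5) 3 + q ^ 5 * lamQ (q ^ 5) 2 7 + q ^ 14 * lamQ (q ^ 5) 4 11
        + q ^ 2 * lamQ (q ^ 5) (-4) (-5) + q⁻¹ * lamQ (q ^ 5) (-2) (-1)) := by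
  have h := hasSum_five (f := lamSummand q 3) (r := ![0, 1, 2, -2, -1]) (by decide)
    (a := ![lamRegQ (q ^ 5) 3, q ^ 5 * lamQ (q ^ 5) 2 7, q ^ 14 * lamQ (q ^ 5) 4 11,
      q ^ 2 * lamQ (q ^ 5) (-4) (-5), q⁻¹ * lamQ (q ^ 5) (-2) (-1)]) ?_
  · simpa [Fin.sum_univ_five] using h
  · intro i
    fin_cases i
    · exact hasSum_lam_section_zero h0 h1 3
    · simpa using hasSum_lam_section h0 h1 3 (r := 1) (by norm_num)
    · simpa using hasSum_lam_section h0 h1 3 (r := 2) (by norm_num)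
    · simpa using hasSum_lam_section h0 h1 3 (r := -2) (by norm_num)
    · simpa using hasSum_lam_section h0 h1 3 (r := -1) (by norm_num)

/-- The 5-dissection: the quotient of `2 ∑ q^{2n²+3n}/(1-q^{10n}) - ∑ q^{2n²+n}/(1-q^{10n})`
(sums over `n ≠ 0`) by `∑ q^{2n²+n}` has no component with exponents `≡ 1 mod 5`. -/
theorem dissection : ∃ c0 c2 c3 c4 : ℂ → ℂ, ∀ q : ℂ, q ≠ 0 → ‖q‖ < 1 →
    gaussQ (q ^ 5) 5 * (2 * (∑' n, lamSummand q 3 n) - ∑' n, lamSummand q 1 n) =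
      (∑' n : ℤ, q ^ (2 * n ^ 2 + n)) *
        (c0 (q ^ 5) + q ^ 2 * c2 (q ^ 5) + q ^ 3 * c3 (q ^ 5) + q ^ 4 * c4 (q ^ 5)) := by
  let e : ℂ → ℂ := fun Q => thetaR (Q ^ 10) 1
  let x2 : ℂ → ℂ := fun Q => -Q * th Q 1 / (th Q 4 * th Q 5)
  let x3 : ℂ → ℂ := fun Q => -1 / th Q 4
  let x4 : ℂ → ℂ := fun Q => alphaQ Q * (th Q 1 / (th Q 4 * th Q 5))
  let x0 : ℂ → ℂ := fun Q => -alphaQ Q * x3 Q - betaQ Q * x2 Q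
  -- The Lambert series attached to the class `n ≡ 1` (for `a = 1`) and `n ≡ -2` (for `a = 3`) are
  -- the two that do not cancel; they enter only the components `q⁰` and `q⁴`.
  refine ⟨fun Q => e Q * x0 Q - lamQ Q 2 5, fun Q => e Q * x2 Q, fun Q => e Q * x3 Q,
    fun Q => e Q * x4 Q + 2 * lamQ Q (-4) (-5) / Q, fun q h0 h1 => ?_⟩
  have h5 : q ^ 5 ≠ 0 := pow_ne_zero _ h0
  have h51 : ‖q ^ 5‖ < 1 := by
    rw [norm_pow]; exact pow_lt_one₀ (norm_nonneg _) h1 (by norm_num)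
  rw [(hasSum_psi h0 h1).tsum_eq, (hasSum_lam0 h0 h1).tsum_eq, (hasSum_lam1 h0 h1).tsum_eq]
  have r1 := lam_rel1 h5 h51
  have r4 := lam_rel4 h5 h51
  have r0a := lam_rel0a h5 h51
  have r0b := lam_rel0b h5 h51
  have hl := ld_combination h5 h51
  obtain ⟨i0, i1, i4⟩ := theta_identities h5 h51 (x0 := x0 (q ^ 5)) (x2 := x2 (q ^ 5))
    (x3 := x3 (q ^ 5)) (x4 := x4 (q ^ 5)) rfl rfl rfl rfl
  have i2 : alphaQ (q ^ 5) * x2 (q ^ 5) + q ^ 5 * x4 (q ^ 5) = 0 := by simp only [x2, x4]; ring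
  have i3 : x0 (q ^ 5) + alphaQ (q ^ 5) * x3 (q ^ 5) + betaQ (q ^ 5) * x2 (q ^ 5) = 0 := by
    simp only [x0]; ring
  rw [i0] at hl
  have r1' : lamQ (q ^ 5) (-2) (-3) + (q ^ 5) ^ 4 * lamQ (q ^ 5) 6 13 =
      betaQ (q ^ 5) * lamQ (q ^ 5) 2 5
        - e (q ^ 5) * (betaQ (q ^ 5) * x0 (q ^ 5) + q ^ 5 * x3 (q ^ 5)) := by
    rw [r1, ← i1]; simp only [e]; ring
  have r4' : 2 * (lamQ (q ^ 5) (-2) (-1) + (q ^ 5) ^ 3 * lamQ (q ^ 5) 4 11) =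
      2 * alphaQ (q ^ 5) * lamQ (q ^ 5) (-4) (-5)
      + e (q ^ 5) * q ^ 5 * (alphaQ (q ^ 5) * x4 (q ^ 5) + betaQ (q ^ 5) * x3 (q ^ 5)) := by
    rw [r4, ← i4]; simp only [e]; ring
  simp only [← show e (q ^ 5) = thetaR ((q ^ 5) ^ 10) 1 from rfl] at hl
  beta_reduce
  clear_value x0 x2 x3 x4 e
  clear i0 i1 i4 r1 r4
  generalize e (q ^ 5) = E at *
  generalize x0 (q ^ 5) = X0 at *
  generalize x2 (q ^ 5) = X2 at *
  generalize x3 (q ^ 5) = X3 at *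
  generalize x4 (q ^ 5) = X4 at *
  generalize alphaQ (q ^ 5) = α at *
  generalize betaQ (q ^ 5) = β at *
  rw [mul_assoc]
  congr 1
  field_simp
  linear_combination q * 2 * r0b - q * r0a - q ^ 2 * r1' + r4' + q * hl - E * q ^ 3 * i2 - E * q ^ 4 * i3

end

/-! ### The bijection on partitions without repeated odd parts -/

/-- Partitions without repeated odd parts, of any size, as multisets of positive integers. -/
abbrev NRO : Type := {s : Multiset ℕ // 0 ∉ s ∧ ∀ i, Odd i → s.count i ≤ 1}

/-- The M₂-rank of a multiset of parts. -/
def mrank (s : Multiset ℕ) : ℤ := (((s.sup + 1) / 2 : ℕ) : ℤ) - (Multiset.card s : ℤ)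

/-- A partition without repeated odd parts split into its largest part `2K + 1 - ε` and the
multiset `ρ` of the remaining parts. The triple `K = 0`, `ε = 1`, `ρ = 0` stands for the empty
partition. -/
structure Trip where
  K : ℕ
  ε : ℕ
  ρ : Multiset ℕ
  hε : ε ≤ 1
  h0 : 0 ∉ ρ
  hodd : ∀ i, Odd i → ρ.count i ≤ 1
  hle : ∀ i ∈ ρ, i ≤ 2 * K

lemma Trip.ext' {t t' : Trip} (h1 : t.K = t'.K) (h2 : t.ε = t'.ε) (h3 : t.ρ = t'.ρ) : t = t' := by
  cases t; cases t'; simp_all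

lemma Trip.rho_zero (t : Trip) (h : t.K = 0) : t.ρ = 0 := by
  refine Multiset.eq_zero_of_forall_notMem fun i hi => ?_
  have := t.hle i hi
  rw [h] at this
  exact t.h0 ((by omega : i = 0) ▸ hi)

/-- The partition described by a triple. -/
def Trip.parts (t : Trip) : Multiset ℕ :=
  if 2 * t.K + 1 - t.ε = 0 then 0 else (2 * t.K + 1 - t.ε) ::ₘ t.ρ

lemma Trip.parts_sup (t : Trip) : t.parts.sup = 2 * t.K + 1 - t.ε := by
  rw [Trip.parts]
  split_ifs with h
  · simp [h]
  · rw [Multiset.sup_cons, sup_eq_left]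
    refine Multiset.sup_le.mpr fun i hi => ?_
    have := t.hle i hi
    have := t.hε
    omega

lemma Trip.parts_mem (t : Trip) : 0 ∉ t.parts ∧ ∀ i, Odd i → t.parts.count i ≤ 1 := by
  rw [Trip.parts]
  split_ifs with h
  · simp
  · refine ⟨fun hm => ?_, fun i hi => ?_⟩
    · rcases Multiset.mem_cons.mp hm with h' | h'
      · exact h h'.symm
      · exact t.h0 h'
    · rw [Multiset.count_cons]
      split_ifs with h2
      · have : t.ρ.count i = 0 := by
          refine Multiset.count_eq_zero_of_notMem fun hm => ?_
          have := t.hle i hm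
          have := t.hε
          obtain ⟨j, hj⟩ := hi
          omega
        omega
      · simpa using t.hodd i hi

lemma Trip.parts_sum (t : Trip) : t.parts.sum + t.ε = 2 * t.K + 1 + t.ρ.sum := by
  have := t.hε
  rw [Trip.parts]
  split_ifs with h
  · rw [t.rho_zero (by omega)]
    simp
    omega
  · rw [Multiset.sum_cons]
    omega

/-- `Trip.parts` as a map to `NRO`. -/
def Trip.toNRO (t : Trip) : NRO := ⟨t.parts, t.parts_mem⟩

/-- A triple is recovered from its partition, whose largest part determines `K` and `ε`. -/
lemma Trip.toNRO_bijective : Function.Bijective Trip.toNRO := by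
  constructor
  · intro t t' h
    have h : t.parts = t'.parts := congrArg Subtype.val h
    have hs := congrArg Multiset.sup h
    rw [t.parts_sup, t'.parts_sup] at hs
    have e1 := t.hε
    have e2 := t'.hε
    have hK : t.K = t'.K := by omega
    have hE : t.ε = t'.ε := by omega
    refine Trip.ext' hK hE ?_
    by_cases h0 : 2 * t.K + 1 - t.ε = 0
    · rw [t.rho_zero (by omega), t'.rho_zero (by omega)]
    · rw [Trip.parts, Trip.parts, if_neg h0, if_neg (hs ▸ h0), hs] at h
      exact (Multiset.cons_inj_right _).mp h
  · rintro ⟨s, hs0, hs1⟩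
    by_cases hs : s = 0
    · subst hs
      exact ⟨⟨0, 1, 0, le_rfl, by simp, by simp, by simp⟩, rfl⟩
    · obtain ⟨l, hl, hmax⟩ : ∃ l ∈ s, ∀ i ∈ s, i ≤ l := by
        obtain ⟨l, hl, h⟩ := Finset.exists_max_image s.toFinset id (by simpa using hs)
        exact ⟨l, by simpa using hl, fun i hi => h i (by simpa using hi)⟩
      have hl0 : l ≠ 0 := fun h => hs0 (h ▸ hl)
      refine ⟨⟨l / 2, 1 - l % 2, s.erase l, by omega,
        fun h => hs0 (Multiset.mem_of_mem_erase h), fun i hi =>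
          (Multiset.count_le_of_le i (Multiset.erase_le l s)).trans (hs1 i hi),
          fun i hi => ?_⟩, ?_⟩
      · have h1 := hmax i (Multiset.mem_of_mem_erase hi)
        rcases Nat.even_or_odd l with he | ho
        · obtain ⟨j, hj⟩ := he
          omega
        · have : i ≠ l := by
            rintro rfl
            have := hs1 i ho
            have h2 := Multiset.count_pos.mpr hi
            rw [Multiset.count_erase_self] at h2
            omega
          obtain ⟨j, hj⟩ := ho
          omega
      · refine Subtype.ext ?_
        change Trip.parts _ = s
        have e : 2 * (l / 2) + 1 - (1 - l % 2) = l := by omega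
        simp only [Trip.parts, e, if_neg hl0]
        exact Multiset.cons_erase hl

/-- Removing the largest part, adding `2` to each of the remaining parts and padding with parts
equal to `1` and `2` up to `k` parts. -/
def Trip.pad (t : Trip) (k : ℕ) : Multiset ℕ :=
  t.ρ.map (· + 2) + Multiset.replicate (k - t.ε - Multiset.card t.ρ) 2
    + Multiset.replicate t.ε 1

lemma Trip.pad_card (t : Trip) {k : ℕ} (h : Multiset.card t.ρ + t.ε ≤ k) :
    Multiset.card (t.pad k) = k := by
  simp [Trip.pad]; omega

lemma Trip.pad_sum (t : Trip) {k : ℕ} (h : Multiset.card t.ρ + t.ε ≤ k) :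
    (t.pad k).sum + t.ε = t.ρ.sum + 2 * k := by
  simp [Trip.pad, Multiset.sum_map_add]; omega

lemma count_map_add_two (s : Multiset ℕ) (a : ℕ) : (s.map (· + 2)).count (a + 2) = s.count a :=
  Multiset.count_map_eq_count' _ _ (add_left_injective 2) a

lemma Trip.pad_count_one (t : Trip) (k : ℕ) : (t.pad k).count 1 = t.ε := by
  simp [Trip.pad, Multiset.count_replicate]

lemma Trip.pad_count_two (t : Trip) (k : ℕ) :
    (t.pad k).count 2 = k - t.ε - Multiset.card t.ρ := by
  have := count_map_add_two t.ρ 0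
  rw [Multiset.count_eq_zero_of_notMem t.h0] at this
  simp only [zero_add] at this
  simp [Trip.pad, this, Multiset.count_replicate]

lemma Trip.pad_count_zero (t : Trip) (k : ℕ) : (t.pad k).count 0 = 0 := by
  simp [Trip.pad, Multiset.count_replicate]

lemma Trip.pad_count_add (t : Trip) (k a : ℕ) : (t.pad k).count (a + 3) = t.ρ.count (a + 1) := by
  have := count_map_add_two t.ρ (a + 1)
  simp only [add_assoc, Nat.reduceAdd] at this
  simp [Trip.pad, this, Multiset.count_replicate]

lemma Trip.pad_mem (t : Trip) (k : ℕ) :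
    0 ∉ t.pad k ∧ ∀ i, Odd i → (t.pad k).count i ≤ 1 := by
  refine ⟨Multiset.count_eq_zero.mp (t.pad_count_zero k), fun i hi => ?_⟩
  match i, hi with
  | 1, _ => rw [t.pad_count_one]; exact t.hε
  | i + 3, hi =>
    rw [t.pad_count_add]
    refine t.hodd _ ?_
    obtain ⟨j, hj⟩ := hi
    exact ⟨j - 1, by omega⟩
  | 0, hi => simp at hi
  | 2, hi => exact absurd hi (by decide)

lemma Trip.pad_le (t : Trip) (k : ℕ) {i : ℕ} (hi : i ∈ t.pad k) : i ≤ 2 * t.K + 2 := by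
  simp only [Trip.pad, Multiset.mem_add, Multiset.mem_map, Multiset.mem_replicate] at hi
  rcases hi with (⟨a, ha, rfl⟩ | h) | h
  · have := t.hle a ha
    omega
  · omega
  · omega

lemma card_split {s : Multiset ℕ} (h : 0 ∉ s) :
    Multiset.card s = s.count 1 + s.count 2 + Multiset.card (s.filter (2 < ·)) := by
  induction s using Multiset.induction with
  | empty => simp
  | cons a s ih =>
    simp only [Multiset.mem_cons, not_or] at h
    have := ih h.2
    rw [Multiset.card_cons, Multiset.count_cons, Multiset.count_cons, this]
    by_cases ha : 2 < a
    · rw [Multiset.filter_cons_of_pos (p := fun x => 2 < x) _ ha, Multiset.card_cons, if_neg (by omega),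
        if_neg (by omega)]
      omega
    · rw [Multiset.filter_cons_of_neg (p := fun x => 2 < x) _ ha]
      have h0 : a ≠ 0 := fun h' => h.1 h'.symm
      have : a = 1 ∨ a = 2 := by omega
      rcases this with rfl | rfl
      · simp; omega
      · simp; omega

/-- Every partition without repeated odd parts and with parts `≤ 2K + 2` arises by padding. -/
lemma exists_pad {s : Multiset ℕ} (h0 : 0 ∉ s) (h1 : ∀ i, Odd i → s.count i ≤ 1) {K : ℕ}
    (hK : ∀ i ∈ s, i ≤ 2 * K + 2) : ∃ t : Trip, t.K = K ∧
      Multiset.card t.ρ + t.ε ≤ Multiset.card s ∧ t.pad (Multiset.card s) = s := by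
  set ρ := (s.filter (2 < ·)).map (· - 2) with hρ
  have hmap : ρ.map (· + 2) = s.filter (2 < ·) := by
    rw [hρ, Multiset.map_map]
    conv_rhs => rw [← Multiset.map_id (s.filter (2 < ·))]
    refine Multiset.map_congr rfl fun x hx => ?_
    have := (Multiset.mem_filter.mp hx).2
    simp
    omega
  have hcount : ∀ a, ρ.count (a + 1) = s.count (a + 3) := fun a => by
    rw [← count_map_add_two, hmap, Multiset.count_filter_of_pos (by omega)]
  have hρ0 : 0 ∉ ρ := fun h => by
    obtain ⟨a, ha, h⟩ := Multiset.mem_map.mp h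
    have := (Multiset.mem_filter.mp ha).2
    omega
  have hcard : Multiset.card ρ = Multiset.card (s.filter (2 < ·)) := by rw [hρ, Multiset.card_map]
  have hs := card_split h0
  let t : Trip := ⟨K, s.count 1, ρ, h1 1 odd_one, hρ0, fun i hi => by
      match i, hi with
      | i + 1, hi =>
        rw [hcount]
        refine h1 _ ?_
        obtain ⟨j, hj⟩ := hi
        exact ⟨j + 1, by omega⟩
      | 0, hi => simp at hi, fun i hi => by
      obtain ⟨a, ha, h⟩ := Multiset.mem_map.mp hi
      have := hK a (Multiset.mem_filter.mp ha).1
      omega⟩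
  refine ⟨t, rfl, ?_, ?_⟩
  · change Multiset.card ρ + s.count 1 ≤ _
    omega
  · ext a
    match a with
    | 0 => rw [t.pad_count_zero, Multiset.count_eq_zero_of_notMem h0]
    | 1 => rw [t.pad_count_one]
    | 2 =>
      rw [t.pad_count_two]
      change _ - s.count 1 - Multiset.card ρ = _
      omega
    | a + 3 => rw [t.pad_count_add]; exact hcount a

lemma Trip.pad_inj {t t' : Trip} {k : ℕ} (hK : t.K = t'.K) (h : t.pad k = t'.pad k) : t = t' := by
  refine Trip.ext' hK ?_ ?_
  · rw [← t.pad_count_one k, h, t'.pad_count_one]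
  · ext a
    match a with
    | 0 => rw [Multiset.count_eq_zero_of_notMem t.h0, Multiset.count_eq_zero_of_notMem t'.h0]
    | a + 1 => rw [← t.pad_count_add k, h, t'.pad_count_add]

/-! ### Generating functions for the M₂-rank -/

/-- The M₂-rank, with the value `-1` at the empty partition. -/
def mrankLow (s : Multiset ℕ) : ℤ := if s = 0 then -1 else mrank s

/-- The M₂-rank, with the value `1` at the empty partition. -/
def mrankHigh (s : Multiset ℕ) : ℤ := if s = 0 then 1 else mrank s

lemma Trip.mrankLow_parts (t : Trip) :
    mrankLow t.parts = t.K - t.ε - Multiset.card t.ρ := by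
  have := t.hε
  rw [mrankLow, mrank, t.parts_sup, Trip.parts]
  split_ifs with h1 h2 h3
  · rw [t.rho_zero (by omega)]
    simp
    omega
  · simp at h2
  · simp at h3
  · rw [Multiset.card_cons]
    omega

/-- A partition with `k` parts has rank `≤ -m` iff `K = k - m - 1` is nonnegative and all parts are
at most `2K + 2`, which is the condition for it to arise by padding from a triple with this `K`. -/
lemma mrankHigh_le_iff {s : Multiset ℕ} (hs : 0 ∉ s) (m : ℤ) :
    mrankHigh s ≤ -m ↔ ∃ K : ℕ, (K : ℤ) = Multiset.card s - m - 1 ∧ ∀ i ∈ s, i ≤ 2 * K + 2 := by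
  rw [mrankHigh]
  split_ifs with h
  · subst h
    simp only [Multiset.card_zero, Multiset.notMem_zero, false_imp_iff, implies_true, and_true]
    constructor
    · intro h
      exact ⟨(-m - 1).toNat, by simp; omega⟩
    · rintro ⟨K, hK⟩
      simp at hK
      omega
  · rw [mrank]
    constructor
    · intro h'
      obtain ⟨a, ha⟩ := Multiset.exists_mem_of_ne_zero h
      have ha0 : a ≠ 0 := fun h => hs (h ▸ ha)
      have := Multiset.le_sup ha
      refine ⟨(Multiset.card s - m - 1).toNat, by omega, fun i hi => ?_⟩
      have := Multiset.le_sup hi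
      omega
    · rintro ⟨K, hK, hi⟩
      have := Multiset.sup_le.mpr hi
      omega

open Classical in
/-- The generating function of the partitions in `NRO` satisfying `p`. -/
noncomputable def gf (x : ℂ) (p : Multiset ℕ → Prop) : ℂ :=
  ∑' s : NRO, if p s.1 then x ^ s.1.sum else 0

lemma gf_def (x : ℂ) (p : Multiset ℕ → Prop) [DecidablePred p] :
    gf x p = ∑' s : NRO, if p s.1 then x ^ s.1.sum else 0 := by
  rw [gf]
  congr! 3

lemma card_partition_le (n : ℕ) : Fintype.card n.Partition ≤ 2 ^ n := by
  refine (Fintype.card_le_of_surjective _ Nat.Partition.ofComposition_surj).trans ?_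
  rw [composition_card]
  exact Nat.pow_le_pow_right (by norm_num) (Nat.sub_le _ _)

/-- Partitions in `NRO` of size `n` as partitions of `n`. -/
def NRO.toPartition (s : NRO) : (s.1.sum).Partition :=
  ⟨s.1, fun {i} hi => Nat.pos_of_ne_zero fun h => s.2.1 (h ▸ hi), rfl⟩

lemma card_fiber_le (u : Finset NRO) (n : ℕ) : (u.filter fun s => s.1.sum = n).card ≤ 2 ^ n := by
  refine le_trans ?_ (card_partition_le n)
  rw [← Finset.card_univ]
  refine Finset.card_le_card_of_injOn (fun s => if h : s.1.sum = n then h ▸ s.toPartition else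
    Nat.Partition.indiscrete n) (fun _ _ => Finset.mem_coe.mpr (Finset.mem_univ _)) ?_
  intro a ha b hb hab
  simp only [Finset.coe_filter, Set.mem_ofPred_eq] at ha hb
  obtain ⟨-, rfl⟩ := ha
  simp only [hb.2, dif_pos] at hab
  have hp : ∀ (k : ℕ) (h : b.1.sum = k), (h ▸ b.toPartition : k.Partition).parts = b.1 := by
    rintro _ rfl; rfl
  refine Subtype.ext ?_
  have := congrArg Nat.Partition.parts hab
  rw [hp] at this
  exact this

/-- There are at most `2ⁿ` partitions of `n`, so the generating functions converge for `r < 1/2`. -/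
lemma summable_NRO_real {r : ℝ} (h0 : 0 ≤ r) (h1 : r < 1 / 2) :
    Summable fun s : NRO => r ^ s.1.sum := by
  refine summable_of_sum_le (c := ∑' n : ℕ, (2 * r) ^ n) (fun s => pow_nonneg h0 _) fun u => ?_
  rw [← Finset.sum_fiberwise_of_maps_to (t := u.image fun s => s.1.sum) (g := fun s => s.1.sum)
    (fun s hs => Finset.mem_image_of_mem _ hs)]
  refine le_trans (Finset.sum_le_sum fun n _ => ?_)
    ((summable_geometric_of_lt_one (by positivity) (by linarith)).sum_le_tsum _
      fun n _ => by positivity)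
  calc ∑ s ∈ u with s.1.sum = n, r ^ s.1.sum = ∑ s ∈ u with s.1.sum = n, r ^ n :=
        Finset.sum_congr rfl fun s hs => by rw [(Finset.mem_filter.mp hs).2]
    _ = ((u.filter fun s => s.1.sum = n).card : ℝ) * r ^ n := by simp
    _ ≤ 2 ^ n * r ^ n := by
        gcongr
        exact_mod_cast card_fiber_le u n
    _ = (2 * r) ^ n := (mul_pow _ _ _).symm

section
variable {x : ℂ}

lemma summable_NRO (h1 : ‖x‖ < 1 / 2) : Summable fun s : NRO => x ^ s.1.sum := by
  refine Summable.of_norm ?_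
  simpa only [norm_pow] using summable_NRO_real (norm_nonneg x) h1

open Classical in
lemma summable_gf (h1 : ‖x‖ < 1 / 2) (p : Multiset ℕ → Prop) :
    Summable fun s : NRO => if p s.1 then x ^ s.1.sum else 0 := by
  refine Summable.of_norm_bounded (summable_NRO_real (norm_nonneg x) h1) fun s => ?_
  split_ifs
  · rw [norm_pow]
  · simp

/-- The generating function of all partitions without repeated odd parts. -/
noncomputable def gfAll (x : ℂ) : ℂ := ∑' s : NRO, x ^ s.1.sum

lemma gf_not (h1 : ‖x‖ < 1 / 2) (p : Multiset ℕ → Prop) :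
    gf x (fun s => ¬ p s) = gfAll x - gf x p := by
  classical
  rw [gf, gf, gfAll, ← (summable_NRO h1).tsum_sub (summable_gf h1 p)]
  congr 1
  ext s
  by_cases h : p s.1 <;> simp [h]

lemma norm_gf_le (h1 : ‖x‖ < 1 / 2) (p : Multiset ℕ → Prop) :
    ‖gf x p‖ ≤ ∑' s : NRO, ‖x‖ ^ s.1.sum := by
  classical
  refine tsum_of_norm_bounded (summable_NRO_real (norm_nonneg x) h1).hasSum fun s => ?_
  split_ifs
  · rw [norm_pow]
  · simp

/-- The bijection at the heart of the generating functions for the M₂-rank: removing the largest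
part and padding sends the partitions with rank `≥ -m-1` to those with rank `≤ -m`, and changes
the size by `2m+1`. -/
lemma gf_shift (h0 : x ≠ 0) (m : ℤ) :
    x ^ (2 * m + 1) * gf x (fun s => -m - 1 ≤ mrankLow s) = gf x fun s => mrankHigh s ≤ -m := by
  classical
  let H : Set Trip := {t | -m - 1 ≤ mrankLow t.parts}
  have hH : ∀ t ∈ H, Multiset.card t.ρ + t.ε ≤ (t.K + m + 1).toNat ∧ 0 ≤ t.K + m + 1 := by
    intro t ht
    have : -m - 1 ≤ mrankLow t.parts := ht
    rw [t.mrankLow_parts] at this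
    omega
  let g : H → NRO := fun t => ⟨t.1.pad (t.1.K + m + 1).toNat, t.1.pad_mem _⟩
  have hg : Function.Injective g := by
    rintro ⟨t, ht⟩ ⟨t', ht'⟩ h
    have h : t.pad (t.K + m + 1).toNat = t'.pad (t'.K + m + 1).toNat := congrArg Subtype.val h
    have hc := congrArg Multiset.card h
    obtain ⟨a1, a2⟩ := hH t ht
    obtain ⟨b1, b2⟩ := hH t' ht'
    rw [t.pad_card a1, t'.pad_card b1] at hc
    have hK : t.K = t'.K := by omega
    rw [← hc] at h
    exact Subtype.ext (Trip.pad_inj hK h)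
  have hrange : ∀ s : NRO, mrankHigh s.1 ≤ -m → s ∈ Set.range g := by
    rintro ⟨s, hs0, hs1⟩ h
    obtain ⟨K, hK, hi⟩ := (mrankHigh_le_iff hs0 m).mp h
    obtain ⟨t, rfl, ht, hp⟩ := exists_pad hs0 hs1 hi
    have hk : (t.K + m + 1).toNat = Multiset.card s := by omega
    refine ⟨⟨t, ?_⟩, Subtype.ext ?_⟩
    · change -m - 1 ≤ mrankLow t.parts
      rw [t.mrankLow_parts]
      omega
    · simp only [g, hk]
      exact hp
  have hmem : ∀ t : H, mrankHigh (g t).1 ≤ -m := by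
    rintro ⟨t, ht⟩
    obtain ⟨a1, a2⟩ := hH t ht
    refine (mrankHigh_le_iff (g ⟨t, ht⟩).2.1 m).mpr ⟨t.K, ?_, fun i hi => t.pad_le _ hi⟩
    simp only [g, t.pad_card a1]
    omega
  have hsupp : Function.support (fun s : NRO => if mrankHigh s.1 ≤ -m then x ^ s.1.sum else 0)
      ⊆ Set.range g := fun s hs => hrange s (by
    by_contra h
    exact hs (if_neg h))
  rw [gf_def, gf_def, ← hg.tsum_eq hsupp, ← (Equiv.ofBijective _ Trip.toNRO_bijective).tsum_eq, ← tsum_mul_left]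
  have : (fun t : H => if mrankHigh (g t).1 ≤ -m then x ^ (g t).1.sum else 0) = fun t : H =>
      (fun t : Trip => x ^ (2 * m + 1) * x ^ t.parts.sum) t := by
    ext t
    rw [if_pos (hmem t)]
    beta_reduce
    obtain ⟨a1, a2⟩ := hH t.1 t.2
    rw [← zpow_natCast, ← zpow_natCast, ← zpow_add₀ h0]
    congr 1
    have e1 := t.1.pad_sum a1
    have e2 := t.1.parts_sum
    change ((t.1.pad (t.1.K + m + 1).toNat).sum : ℤ) = _
    omega
  rw [this, tsum_subtype H fun t : Trip => x ^ (2 * m + 1) * x ^ t.parts.sum]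
  congr 1
  ext t
  change x ^ (2 * m + 1) * (if -m - 1 ≤ mrankLow t.parts then x ^ t.parts.sum else 0) = _
  by_cases ht : -m - 1 ≤ mrankLow t.parts
  · rw [if_pos ht, Set.indicator_of_mem (show t ∈ H from ht)]
  · rw [if_neg ht, Set.indicator_of_notMem (show t ∉ H from ht), mul_zero]

/-- The generating function of the partitions with M₂-rank at most `-M`. -/
noncomputable def gfLe (x : ℂ) (M : ℕ) : ℂ := gf x fun s => mrank s ≤ -M

/-- The generating function of the partitions with M₂-rank at least `M`. -/
noncomputable def gfGe (x : ℂ) (M : ℕ) : ℂ := gf x fun s => M ≤ mrank s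

lemma mrank_zero : mrank 0 = 0 := by simp [mrank]

lemma gf_congr {p p' : Multiset ℕ → Prop} (h : ∀ s, p s ↔ p' s) : gf x p = gf x p' :=
  congrArg _ (funext fun s => propext (h s))

lemma gfLe_rec (h0 : x ≠ 0) (h1 : ‖x‖ < 1 / 2) {M : ℕ} (hM : 1 ≤ M) :
    gfLe x M = x ^ (2 * M + 1) * (gfAll x - gfLe x (M + 2)) := by
  have h := gf_shift h0 (M : ℤ)
  rw [gfLe, gfLe, ← gf_not h1]
  have e1 : gf x (fun s => mrank s ≤ -(M : ℤ)) = gf x fun s => mrankHigh s ≤ -(M : ℤ) := by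
    refine gf_congr fun s => ?_
    rw [mrankHigh]
    split_ifs with hs
    · subst hs; rw [mrank_zero]; omega
    · rfl
  have e2 : gf x (fun s => ¬ mrank s ≤ -((M + 2 : ℕ) : ℤ)) =
      gf x fun s => -(M : ℤ) - 1 ≤ mrankLow s := by
    refine gf_congr fun s => ?_
    rw [mrankLow]
    split_ifs with hs
    · subst hs; rw [mrank_zero]; omega
    · omega
  rw [e1, e2, ← h]
  norm_cast

lemma gfGe_rec_aux (h0 : x ≠ 0) (h1 : ‖x‖ < 1 / 2) (M : ℕ) :
    gf x (fun s => M ≤ mrankLow s) = x ^ (2 * M + 1) * (gfAll x - gfGe x (M + 2)) := by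
  have h := gf_shift h0 (-(M : ℤ) - 1)
  rw [gfGe, ← gf_not h1]
  have e1 : gf x (fun s => ¬ ((M + 2 : ℕ) : ℤ) ≤ mrank s) =
      gf x fun s => mrankHigh s ≤ -(-(M : ℤ) - 1) := by
    refine gf_congr fun s => ?_
    rw [mrankHigh]
    split_ifs with hs
    · subst hs; rw [mrank_zero]; omega
    · omega
  have e2 : gf x (fun s => (M : ℤ) ≤ mrankLow s) =
      gf x fun s => -(-(M : ℤ) - 1) - 1 ≤ mrankLow s := gf_congr fun s => by omega
  rw [e1, e2, ← h, ← mul_assoc, ← zpow_natCast, ← zpow_add₀ h0]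
  push_cast
  ring_nf
  simp

lemma gfGe_rec (h0 : x ≠ 0) (h1 : ‖x‖ < 1 / 2) {M : ℕ} (hM : 1 ≤ M) :
    gfGe x M = x ^ (2 * M + 1) * (gfAll x - gfGe x (M + 2)) := by
  rw [← gfGe_rec_aux h0 h1, gfGe]
  refine gf_congr fun s => ?_
  rw [mrankLow]
  split_ifs with hs
  · subst hs; rw [mrank_zero]; omega
  · rfl

lemma gfGe_zero (h0 : x ≠ 0) (h1 : ‖x‖ < 1 / 2) :
    gfGe x 0 = 1 + x * (gfAll x - gfGe x 2) := by
  classical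
  have h := gfGe_rec_aux h0 h1 0
  simp only [Nat.cast_zero, mul_zero, zero_add, pow_one] at h
  rw [← h, gfGe, gf, gf]
  have hz : 0 ∉ (0 : Multiset ℕ) ∧ ∀ i, Odd i → (0 : Multiset ℕ).count i ≤ 1 := by simp
  have hone : HasSum (fun s : NRO => if s = ⟨0, hz⟩ then (1 : ℂ) else 0) 1 :=
    hasSum_ite_eq _ _
  rw [← hone.tsum_eq, ← hone.summable.tsum_add (summable_gf h1 fun s => 0 ≤ mrankLow s)]
  congr 1
  ext s
  by_cases hs : s = ⟨0, hz⟩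
  · subst hs
    simp [mrank_zero, mrankLow]
  · have : s.1 ≠ 0 := fun h => hs (Subtype.ext h)
    simp [hs, mrankLow, this]

end

/-! ### The generating function of the rank differences -/

/-- The `k`-th summand of the partial theta series `rankSeries`. -/
noncomputable def rankTerm (x : ℂ) (M k : ℕ) : ℂ :=
  (-1) ^ k * x ^ (2 * k ^ 2 + 3 * k + 1 + 2 * M * (k + 1))

/-- The partial theta series `∑_{k ≥ 1} (-1)^{k+1} x^{2k²-k+2Mk}`, with `k` shifted by one. -/
noncomputable def rankSeries (x : ℂ) (M : ℕ) : ℂ := ∑' k : ℕ, rankTerm x M k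

section
variable {x : ℂ}

lemma norm_rankTerm_le (h1 : ‖x‖ < 1) (M k : ℕ) : ‖rankTerm x M k‖ ≤ ‖x‖ ^ M * ‖x‖ ^ k := by
  rw [rankTerm, norm_mul, norm_pow, norm_pow, norm_neg, norm_one, one_pow, one_mul, ← pow_add]
  exact pow_le_pow_of_le_one (norm_nonneg _) h1.le (by nlinarith)

lemma summable_norm_geom (h1 : ‖x‖ < 1) : Summable fun k : ℕ => ‖x‖ ^ k :=
  summable_geometric_of_lt_one (norm_nonneg _) h1

lemma summable_rankTerm (h1 : ‖x‖ < 1) (M : ℕ) : Summable (rankTerm x M) :=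
  Summable.of_norm_bounded ((summable_norm_geom h1).mul_left _) (norm_rankTerm_le h1 M)

lemma norm_rankSeries_le (h1 : ‖x‖ < 1) (M : ℕ) : ‖rankSeries x M‖ ≤ ∑' k : ℕ, ‖x‖ ^ k := by
  refine tsum_of_norm_bounded (summable_norm_geom h1).hasSum fun k => ?_
  refine (norm_rankTerm_le h1 M k).trans ?_
  exact mul_le_of_le_one_left (by positivity) (pow_le_one₀ (norm_nonneg _) h1.le)

/-- The recurrence satisfied by `gfLe` and `gfGe`, up to the factor `gfAll`. -/
lemma rankSeries_rec (h1 : ‖x‖ < 1) (M : ℕ) :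
    rankSeries x M = x ^ (2 * M + 1) * (1 - rankSeries x (M + 2)) := by
  rw [rankSeries, (summable_rankTerm h1 M).tsum_eq_zero_add, mul_sub, rankSeries, ← tsum_mul_left,
    sub_eq_add_neg, ← tsum_neg]
  congr 1
  · simp [rankTerm]; ring
  · congr 1
    ext k
    simp only [rankTerm]
    ring

/-- A bounded solution of the homogeneous recurrence vanishes. -/
lemma rec_unique (h1 : ‖x‖ < 1 / 2) {d : ℕ → ℂ} {B : ℝ} (hB : ∀ M, ‖d M‖ ≤ B)
    (hd : ∀ M, 1 ≤ M → d M = -(x ^ (2 * M + 1) * d (M + 2))) {M : ℕ} (hM : 1 ≤ M) : d M = 0 := by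
  have key : ∀ n : ℕ, ∀ M, 1 ≤ M → ‖d M‖ ≤ (1 / 2) ^ n * B := by
    intro n
    induction n with
    | zero => intro M _; simpa using hB M
    | succ n ih =>
      intro M hM
      rw [hd M hM, norm_neg, norm_mul, norm_pow, pow_succ' (1 / 2 : ℝ), mul_assoc]
      refine mul_le_mul ?_ (ih _ (by omega)) (norm_nonneg _) (by norm_num)
      calc ‖x‖ ^ (2 * M + 1) ≤ ‖x‖ ^ 1 :=
            pow_le_pow_of_le_one (norm_nonneg _) (by linarith) (by omega)
        _ ≤ 1 / 2 := by simpa using h1.le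
  have hlim : Tendsto (fun n : ℕ => (1 / 2 : ℝ) ^ n * B) atTop (𝓝 0) := by
    simpa using (tendsto_pow_atTop_nhds_zero_of_lt_one (by norm_num : (0 : ℝ) ≤ 1 / 2)
      (by norm_num)).mul_const B
  have := ge_of_tendsto' hlim fun n => key n M hM
  exact norm_le_zero_iff.mp this

/-- Bounded solutions of the recurrence of `gfLe_rec` and `gfGe_rec` are unique. -/
lemma eq_rankSeries (h1 : ‖x‖ < 1 / 2) {u : ℕ → ℂ} {B : ℝ} (hB : ∀ M, ‖u M‖ ≤ B)
    (hu : ∀ M, 1 ≤ M → u M = x ^ (2 * M + 1) * (gfAll x - u (M + 2))) {M : ℕ} (hM : 1 ≤ M) :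
    u M = gfAll x * rankSeries x M := by
  have h1' : ‖x‖ < 1 := by linarith
  refine sub_eq_zero.mp (rec_unique h1 (d := fun M => u M - gfAll x * rankSeries x M)
    (B := B + ‖gfAll x‖ * ∑' k : ℕ, ‖x‖ ^ k) (fun M => ?_) (fun M hM => ?_) hM)
  · refine (norm_sub_le _ _).trans (add_le_add (hB M) ?_)
    rw [norm_mul]
    exact mul_le_mul_of_nonneg_left (norm_rankSeries_le h1' M) (norm_nonneg _)
  · have e1 := hu M hM
    have e2 := rankSeries_rec h1' M
    linear_combination e1 - gfAll x * e2

lemma gfGe_eq (h0 : x ≠ 0) (h1 : ‖x‖ < 1 / 2) {M : ℕ} (hM : 1 ≤ M) :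
    gfGe x M = gfAll x * rankSeries x M :=
  eq_rankSeries h1 (fun _ => norm_gf_le h1 _) (fun _ => gfGe_rec h0 h1) hM

lemma gfLe_eq (h0 : x ≠ 0) (h1 : ‖x‖ < 1 / 2) {M : ℕ} (hM : 1 ≤ M) :
    gfLe x M = gfAll x * rankSeries x M :=
  eq_rankSeries h1 (fun _ => norm_gf_le h1 _) (fun _ => gfLe_rec h0 h1) hM

/-- The reciprocal of `gfAll` is a theta series. It comes from the case `m = -1` of `gf_shift`,
where the empty partition contributes the constant `1`. -/
lemma gfAll_mul (h0 : x ≠ 0) (h1 : ‖x‖ < 1 / 2) :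
    gfAll x * (1 - rankSeries x 0 - rankSeries x 1) = 1 := by
  have e1 := gfGe_zero h0 h1
  have e2 : gfGe x 0 = gfAll x - gfLe x 1 := by
    rw [gfGe, gfLe, ← gf_not h1]
    exact gf_congr fun s => by push_cast; omega
  rw [gfLe_eq h0 h1 le_rfl] at e2
  rw [gfGe_eq h0 h1 (M := 2) (by norm_num)] at e1
  have e3 := rankSeries_rec (x := x) (by linarith) 0
  simp only [mul_zero, zero_add, pow_one] at e3
  linear_combination e1 - e2 - gfAll x * e3

lemma gf_eq_sub (h1 : ‖x‖ < 1 / 2) {p p' p'' : Multiset ℕ → Prop}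
    (h : ∀ s, p s ↔ p' s ∧ ¬ p'' s) (h' : ∀ s, p'' s → p' s) :
    gf x p = gf x p' - gf x p'' := by
  classical
  rw [gf, gf, gf, ← (summable_gf h1 p').tsum_sub (summable_gf h1 p'')]
  congr 1
  ext s
  by_cases a : p' s.1 <;> by_cases b : p'' s.1
  · simp [h, a, b]
  · simp [h, a, b]
  · exact absurd (h' _ b) a
  · simp [h, a, b]

lemma gf_rank_eq (h0 : x ≠ 0) (h1 : ‖x‖ < 1 / 2) {M : ℕ} (hM : 1 ≤ M) :
    gf x (fun s => mrank s = M) = gfAll x * (rankSeries x M - rankSeries x (M + 1)) := by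
  rw [mul_sub, ← gfGe_eq h0 h1 hM, ← gfGe_eq h0 h1 (by omega), gfGe, gfGe]
  exact gf_eq_sub h1 (fun s => by push_cast; omega) (fun s => by push_cast; omega)

lemma gf_rank_eq_neg (h0 : x ≠ 0) (h1 : ‖x‖ < 1 / 2) {M : ℕ} (hM : 1 ≤ M) :
    gf x (fun s => mrank s = -M) = gfAll x * (rankSeries x M - rankSeries x (M + 1)) := by
  rw [mul_sub, ← gfLe_eq h0 h1 hM, ← gfLe_eq h0 h1 (by omega), gfLe, gfLe]
  exact gf_eq_sub h1 (fun s => by push_cast; omega) (fun s => by push_cast; omega)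

/-- The weight detecting the difference between the residue classes `1` and `2` modulo `5`. -/
def chi (r : ℤ) : ℂ := if r % 5 = 1 then 1 else if r % 5 = 2 then -1 else 0

lemma norm_chi_le (r : ℤ) : ‖chi r‖ ≤ 1 := by
  rw [chi]; split_ifs <;> simp

/-- The generating function of the number of partitions with M₂-rank `≡ 1` minus the number with
M₂-rank `≡ 2` modulo `5`. -/
noncomputable def gfDiff (x : ℂ) : ℂ := ∑' s : NRO, chi (mrank s.1) * x ^ s.1.sum

lemma summable_gfDiff (h1 : ‖x‖ < 1 / 2) : Summable fun s : NRO => chi (mrank s.1) * x ^ s.1.sum := by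
  refine Summable.of_norm_bounded (summable_NRO_real (norm_nonneg x) h1) fun s => ?_
  rw [norm_mul, norm_pow]
  exact mul_le_of_le_one_left (by positivity) (norm_chi_le _)

lemma hasSum_gfDiff (h1 : ‖x‖ < 1 / 2) :
    HasSum (fun m : ℤ => gf x (fun s => mrank s = 5 * m + 1) - gf x (fun s => mrank s = 5 * m + 2))
      (gfDiff x) := by
  have h := (summable_gfDiff h1).hasSum.tsum_fiberwise fun s : NRO => mrank s.1 / 5
  refine h.congr_fun fun m => ?_
  classical
  rw [tsum_subtype ((fun s : NRO => mrank s.1 / 5) ⁻¹' {m})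
    (fun s : NRO => chi (mrank s.1) * x ^ s.1.sum), gf, gf,

    ← (summable_gf h1 fun s => mrank s = 5 * m + 1).tsum_sub
      (summable_gf h1 fun s => mrank s = 5 * m + 2)]
  congr 1
  ext s
  by_cases hm : mrank s.1 / 5 = m
  · rw [Set.indicator_of_mem (show s ∈ (fun s : NRO => mrank s.1 / 5) ⁻¹' {m} from hm), chi]
    by_cases a : mrank s.1 % 5 = 1
    · rw [if_pos (by omega), if_neg (by omega), if_pos a]; ring
    · by_cases b : mrank s.1 % 5 = 2
      · rw [if_neg (by omega), if_pos (by omega), if_neg a, if_pos b]; ring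
      · rw [if_neg (by omega), if_neg (by omega), if_neg a, if_neg b]; ring
  · rw [Set.indicator_of_notMem (show s ∉ (fun s : NRO => mrank s.1 / 5) ⁻¹' {m} from hm),
      if_neg (by omega), if_neg (by omega), sub_zero]

/-- The summand of the double series for `gfDiff x / gfAll x`. -/
noncomputable def diffTerm (x : ℂ) (j k : ℕ) : ℂ :=
  rankTerm x (5 * j + 1) k - 2 * rankTerm x (5 * j + 2) k + 2 * rankTerm x (5 * j + 4) k
    - rankTerm x (5 * j + 5) k

/-- The ranks `5m + 1` and `5m + 2`, `m ∈ ℤ`, paired by sign: the generating functions of the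
ranks `M` and `-M` coincide. -/
lemma hasSum_gfDiff_nat (h0 : x ≠ 0) (h1 : ‖x‖ < 1 / 2) :
    HasSum (fun j : ℕ => gfAll x * ∑' k, diffTerm x j k) (gfDiff x) := by
  have h1' : ‖x‖ < 1 := by linarith
  refine (hasSum_gfDiff h1).nat_add_neg_add_one.congr_fun fun j => ?_
  have e1 := gf_rank_eq h0 h1 (M := 5 * j + 1) (by omega)
  have e2 := gf_rank_eq h0 h1 (M := 5 * j + 2) (by omega)
  have e3 := gf_rank_eq_neg h0 h1 (M := 5 * j + 3) (by omega)
  have e4 := gf_rank_eq_neg h0 h1 (M := 5 * j + 4) (by omega)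
  push_cast at e1 e2 e3 e4
  rw [e1, e2, show (5 * -((j : ℤ) + 1) + 1) = -(5 * j + 4) by ring,
    show (5 * -((j : ℤ) + 1) + 2) = -(5 * j + 3) by ring, e3, e4]
  have s := summable_rankTerm h1'
  simp only [diffTerm]
  rw [(((s _).sub ((s _).mul_left 2)).add ((s _).mul_left 2)).tsum_sub (s _),
    ((s _).sub ((s _).mul_left 2)).tsum_add ((s _).mul_left 2),
    (s _).tsum_sub ((s _).mul_left 2), tsum_mul_left, tsum_mul_left]
  simp only [← rankSeries.eq_def, add_assoc, Nat.reduceAdd]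
  ring

lemma summable_rankTerm_prod (h1 : ‖x‖ < 1) (i : ℕ) :
    Summable fun p : ℕ × ℕ => rankTerm x (5 * p.1 + i) p.2 := by
  refine Summable.of_norm_bounded ((summable_norm_geom h1).mul_of_nonneg (summable_norm_geom h1)
    (fun _ => by positivity) fun _ => by positivity) fun p => ?_
  refine (norm_rankTerm_le h1 _ _).trans (mul_le_mul_of_nonneg_right ?_ (by positivity))
  exact pow_le_pow_of_le_one (norm_nonneg _) h1.le (by omega)

lemma summable_diffTerm (h1 : ‖x‖ < 1) :
    Summable fun p : ℕ × ℕ => diffTerm x p.1 p.2 := by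
  have s := summable_rankTerm_prod h1
  exact (((s 1).sub ((s 2).mul_left 2)).add ((s 4).mul_left 2)).sub (s 5)

lemma tsum_diffTerm (h1 : ‖x‖ < 1) (k : ℕ) :
    ∑' j, diffTerm x j k = (-1) ^ k * x ^ (2 * k ^ 2 + 3 * k + 1) *
      (x ^ (2 * (k + 1)) - 2 * (x ^ (2 * (k + 1))) ^ 2 + 2 * (x ^ (2 * (k + 1))) ^ 4
        - (x ^ (2 * (k + 1))) ^ 5) / (1 - (x ^ (2 * (k + 1))) ^ 5) := by
  have hy : ‖(x ^ (2 * (k + 1))) ^ 5‖ < 1 := by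
    rw [norm_pow, norm_pow, ← pow_mul]
    exact pow_lt_one₀ (norm_nonneg _) h1 (by omega)
  rw [div_eq_mul_inv, ← tsum_geometric_of_norm_lt_one hy, ← tsum_mul_left]
  congr 1
  ext j
  simp only [diffTerm, rankTerm]
  ring

/-- `gfDiff` as a Lambert series. -/
lemma hasSum_lambert (h0 : x ≠ 0) (h1 : ‖x‖ < 1 / 2) :
    ∃ l : ℂ, gfDiff x = gfAll x * l ∧ HasSum (fun k : ℕ => (-1) ^ k * x ^ (2 * k ^ 2 + 3 * k + 1) *
      (x ^ (2 * (k + 1)) - 2 * (x ^ (2 * (k + 1))) ^ 2 + 2 * (x ^ (2 * (k + 1))) ^ 4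
        - (x ^ (2 * (k + 1))) ^ 5) / (1 - (x ^ (2 * (k + 1))) ^ 5)) l := by
  have h1' : ‖x‖ < 1 := by linarith
  have hs := summable_diffTerm h1'
  refine ⟨∑' k, ∑' j, diffTerm x j k, ?_, ?_⟩
  · rw [← (hasSum_gfDiff_nat h0 h1).tsum_eq, tsum_mul_left]
    congr 1
    exact (Summable.tsum_comm (f := diffTerm x) hs).symm
  · simp only [← tsum_diffTerm h1']
    exact (hs.prod_symm.prod).hasSum

end

section
variable {q : ℂ}

lemma neg_one_sq_pow (k : ℕ) : ((-1 : ℂ) ^ k) * (-1) ^ k = 1 := by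
  rw [← mul_pow]; norm_num

lemma rankTerm_neg (M k : ℕ) :
    rankTerm (-q) M k = -q ^ (2 * k ^ 2 + 3 * k + 1 + 2 * M * (k + 1)) := by
  rw [rankTerm, neg_pow q, show (2 * k ^ 2 + 3 * k + 1 + 2 * M * (k + 1)) =
    2 * (k ^ 2 + k + M * (k + 1)) + k + 1 by ring, pow_succ (-1 : ℂ), pow_add (-1 : ℂ),
    pow_mul (-1 : ℂ)]
  have := neg_one_sq_pow k
  norm_num
  linear_combination (q ^ (2 * (k ^ 2 + k + M * (k + 1)) + k + 1)) * this

lemma psi_eq (h1 : ‖q‖ < 1) :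
    ∑' n : ℤ, q ^ (2 * n ^ 2 + n) = 1 - rankSeries (-q) 0 - rankSeries (-q) 1 := by
  have h1' : ‖-q‖ < 1 := by rwa [norm_neg]
  have a0 := (summable_rankTerm h1' 0).hasSum.neg
  have a1 := (summable_rankTerm h1' 1).hasSum.neg
  refine HasSum.tsum_eq ?_
  rw [show 1 - rankSeries (-q) 0 - rankSeries (-q) 1 =
    (-rankSeries (-q) 1 + 1) + -rankSeries (-q) 0 by ring]
  refine HasSum.of_nat_of_neg_add_one ?_ ?_
  · rw [← hasSum_nat_add_iff' 1]
    simp only [Finset.range_one, Finset.sum_singleton, Nat.cast_zero]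
    norm_num
    refine a1.congr_fun fun k => ?_
    rw [rankTerm_neg, neg_neg, ← zpow_natCast]
    congr 1
    push_cast
    ring
  · refine a0.congr_fun fun k => ?_
    rw [rankTerm_neg, neg_neg, ← zpow_natCast]
    congr 1
    push_cast
    ring

/-- The terms `n = k + 1` and `n = -(k + 1)` of the bilateral series combine to the `k`-th term of
the series in `hasSum_lambert`. -/
lemma lamSummand_pair (h0 : q ≠ 0) (h1 : ‖q‖ < 1) (k : ℕ) :
    (2 * lamSummand q 3 (k + 1 : ℕ) - lamSummand q 1 (k + 1 : ℕ))
      + (2 * lamSummand q 3 (-(k + 1 : ℕ)) - lamSummand q 1 (-(k + 1 : ℕ))) =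
    (-1) ^ k * (-q) ^ (2 * k ^ 2 + 3 * k + 1) *
      ((-q) ^ (2 * (k + 1)) - 2 * ((-q) ^ (2 * (k + 1))) ^ 2 + 2 * ((-q) ^ (2 * (k + 1))) ^ 4
        - ((-q) ^ (2 * (k + 1))) ^ 5) / (1 - ((-q) ^ (2 * (k + 1))) ^ 5) := by
  have e := rankTerm_neg (q := q) 0 k
  simp only [rankTerm, mul_zero, zero_mul, add_zero] at e
  have hz : ‖(q ^ (2 * (k + 1))) ^ 5‖ < 1 := by
    rw [norm_pow, norm_pow, ← pow_mul]
    exact pow_lt_one₀ (norm_nonneg _) h1 (by omega)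
  have hz1 : 1 - (q ^ (2 * (k + 1))) ^ 5 ≠ 0 := by
    intro h
    rw [sub_eq_zero] at h
    rw [← h] at hz
    simp at hz
  rw [e, pow_mul (-q), neg_sq, ← pow_mul]
  have hp : ((k + 1 : ℕ) : ℤ) ≠ 0 := by omega
  have hn : -((k + 1 : ℕ) : ℤ) ≠ 0 := by omega
  simp only [lamSummand, if_neg hp, if_neg hn]
  set z := q ^ (2 * (k + 1)) with hz_def
  set c := q ^ (2 * k ^ 2 + 3 * k + 1) with hc
  have hz0 : z ≠ 0 := pow_ne_zero _ h0
  have t1 : q ^ (10 * ((k + 1 : ℕ) : ℤ)) = z ^ 5 := by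
    rw [hz_def, ← pow_mul, ← zpow_natCast]; congr 1; push_cast; ring
  have t2 : q ^ (10 * -((k + 1 : ℕ) : ℤ)) = (z ^ 5)⁻¹ := by
    rw [← t1, ← zpow_neg, mul_neg]
  have t3 : q ^ (2 * ((k + 1 : ℕ) : ℤ) ^ 2 + 1 * ((k + 1 : ℕ) : ℤ)) = c * z := by
    rw [hz_def, hc, ← pow_add, ← zpow_natCast]; congr 1; push_cast; ring
  have t4 : q ^ (2 * ((k + 1 : ℕ) : ℤ) ^ 2 + 3 * ((k + 1 : ℕ) : ℤ)) = c * z ^ 2 := by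
    rw [hz_def, hc, ← pow_mul, ← pow_add, ← zpow_natCast]; congr 1; push_cast; ring
  have t5 : q ^ (2 * (-((k + 1 : ℕ) : ℤ)) ^ 2 + 1 * -((k + 1 : ℕ) : ℤ)) = c := by
    rw [hc, ← zpow_natCast]; congr 1; push_cast; ring
  have t6 : q ^ (2 * (-((k + 1 : ℕ) : ℤ)) ^ 2 + 3 * -((k + 1 : ℕ) : ℤ)) = c / z := by
    rw [hz_def, hc, ← zpow_natCast, ← zpow_natCast, ← zpow_sub₀ h0]; congr 1; push_cast; ring
  rw [t1, t2, t3, t4, t5, t6]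
  have hz2 : 1 - (z ^ 5)⁻¹ = -(1 - z ^ 5) / z ^ 5 := by field_simp; ring
  rw [hz2]
  field_simp
  ring

/-- The generating function of the rank differences, after `x = -q`. -/
theorem gfDiff_eq (h0 : q ≠ 0) (h1 : ‖q‖ < 1 / 2) :
    (∑' n : ℤ, q ^ (2 * n ^ 2 + n)) ≠ 0 ∧ (∑' n : ℤ, q ^ (2 * n ^ 2 + n)) * gfDiff (-q) =
      2 * (∑' n, lamSummand q 3 n) - ∑' n, lamSummand q 1 n := by
  have h1' : ‖q‖ < 1 := by linarith
  have hx : ‖-q‖ < 1 / 2 := by rwa [norm_neg]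
  have hP := gfAll_mul (neg_ne_zero.mpr h0) hx
  rw [← psi_eq h1'] at hP
  refine ⟨fun h => by simp [h] at hP, ?_⟩
  obtain ⟨l, hl, hsum⟩ := hasSum_lambert (neg_ne_zero.mpr h0) hx
  have hL := ((hasSum_lam1 h0 h1').summable.hasSum.mul_left 2).sub
    (hasSum_lam0 h0 h1').summable.hasSum
  have hL2 := hL.nat_add_neg
  rw [← hasSum_nat_add_iff' 1] at hL2
  simp only [Finset.range_one, Finset.sum_singleton, lamSummand_pair h0 h1'] at hL2
  have := hL2.unique hsum
  have hzero : ∀ a, lamSummand q a 0 = 0 := fun a => if_pos rfl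
  simp only [hzero, Nat.cast_zero, neg_zero, mul_zero, sub_zero, add_zero] at this
  rw [hl, ← this]
  linear_combination (2 * (∑' n, lamSummand q 3 n) - ∑' n, lamSummand q 1 n) * hP

end

/-! ### The coefficients in the progression `5n + 1` -/

/-- The elements of `NRO` of size `n` are the partitions of `n` without repeated odd parts. -/
def fiberEquiv (n : ℕ) :
    ((fun s : NRO => s.1.sum) ⁻¹' {n}) ≃ {p : n.Partition // p.noRepeatedOdd} where
  toFun s := ⟨⟨s.1.1, fun {i} hi => Nat.pos_of_ne_zero fun h => s.1.2.1 (h ▸ hi), s.2⟩, s.1.2.2⟩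
  invFun p := ⟨⟨p.1.parts, fun h => (p.1.parts_pos h).ne' rfl, p.2⟩, p.1.parts_sum⟩
  left_inv _ := rfl
  right_inv _ := rfl

open Classical in
lemma N2_eq_sum (s n : ℕ) :
    (N2 s 5 n : ℂ) = ∑ p : {p : n.Partition // p.noRepeatedOdd},
      if p.1.m2Rank ≡ (s : ℤ) [ZMOD 5] then 1 else 0 := by
  rw [Finset.sum_boole, N2]
  congr 1
  rw [← Fintype.card_subtype, ← Nat.card_eq_fintype_card]
  exact Nat.card_congr (Equiv.subtypeSubtypeEquivSubtypeInter _ _).symm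

lemma tsum_fiber_chi (n : ℕ) :
    ∑' s : ((fun s : NRO => s.1.sum) ⁻¹' {n}), chi (mrank s.1.1) =
      (N2 1 5 n : ℂ) - N2 2 5 n := by
  classical
  rw [← (fiberEquiv n).symm.tsum_eq, tsum_fintype, N2_eq_sum, N2_eq_sum, ← Finset.sum_sub_distrib]
  refine Finset.sum_congr rfl fun p _ => ?_
  change chi p.1.m2Rank = _
  rw [chi]
  simp only [Int.ModEq]
  by_cases h1 : p.1.m2Rank % 5 = 1
  · simp [h1]
  · by_cases h2 : p.1.m2Rank % 5 = 2
    · simp [h2]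
    · simp [h1, h2]

/-- `gfDiff` is the power series of the rank differences. -/
lemma hasSum_gfDiff_pow {x : ℂ} (h1 : ‖x‖ < 1 / 2) :
    HasSum (fun n : ℕ => ((N2 1 5 n : ℂ) - N2 2 5 n) * x ^ n) (gfDiff x) := by
  have h := (summable_gfDiff h1).hasSum.tsum_fiberwise fun s : NRO => s.1.sum
  refine h.congr_fun fun n => ?_
  rw [← tsum_fiber_chi, ← tsum_mul_right]
  congr 1
  ext s
  rw [show s.1.1.sum = n from s.2]

/-- The components of `gfDiff (-q)` in the 5-dissection, as functions of `q⁵`; there is no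
component with exponents `≡ 1 mod 5`. -/
lemma gfDiff_dissection : ∃ F0 F2 F3 F4 : ℂ → ℂ, ∀ q : ℂ, q ≠ 0 → ‖q‖ < 1 / 2 →
    gfDiff (-q) = F0 (q ^ 5) + q ^ 2 * F2 (q ^ 5) + q ^ 3 * F3 (q ^ 5) + q ^ 4 * F4 (q ^ 5) := by
  obtain ⟨c0, c2, c3, c4, h⟩ := dissection
  refine ⟨fun Q => c0 Q / gaussQ Q 5, fun Q => c2 Q / gaussQ Q 5, fun Q => c3 Q / gaussQ Q 5,
    fun Q => c4 Q / gaussQ Q 5, fun q h0 h1 => ?_⟩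
  have h1' : ‖q‖ < 1 := by linarith
  have hq := h q h0 h1'
  obtain ⟨hpsi, hD⟩ := gfDiff_eq h0 h1
  have hC : gaussQ (q ^ 5) 5 ≠ 0 := by
    intro h
    rw [(hasSum_psi h0 h1').tsum_eq, h, zero_mul] at hpsi
    exact hpsi rfl
  rw [← hD, mul_left_comm] at hq
  have := mul_left_cancel₀ hpsi hq
  field_simp
  linear_combination this

lemma sum_root_pow {ζ : ℂ} (hζ : IsPrimitiveRoot ζ 5) (i : ℕ) :
    ∑ k ∈ Finset.range 5, (ζ ^ k) ^ i = if i % 5 = 0 then 5 else 0 := by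
  have e : ∀ k, (ζ ^ k) ^ i = (ζ ^ i) ^ k := fun k => by rw [← pow_mul, ← pow_mul, mul_comm]
  simp only [e]
  split_ifs with h
  · rw [(hζ.pow_eq_one_iff_dvd i).mpr (Nat.dvd_of_mod_eq_zero h)]
    simp
  · have hne : ζ ^ i ≠ 1 := fun h' => h (Nat.mod_eq_zero_of_dvd ((hζ.pow_eq_one_iff_dvd i).mp h'))
    rw [geom_sum_eq hne, ← pow_mul, mul_comm, pow_mul, hζ.pow_eq_one]
    simp

/-- Averaging `gfDiff` over the fifth roots of unity extracts the exponents `≡ 1 mod 5`, and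
`gfDiff_dissection` has no such component. -/
lemma hasSum_class_one {x : ℂ} (h0 : x ≠ 0) (h1 : ‖x‖ < 1 / 2) :
    HasSum (fun n : ℕ => (if n % 5 = 1 then (N2 1 5 n : ℂ) - N2 2 5 n else 0) * x ^ n) 0 := by
  obtain ⟨ζ, hζ⟩ : ∃ ζ : ℂ, IsPrimitiveRoot ζ 5 := ⟨_, Complex.isPrimitiveRoot_exp 5 (by norm_num)⟩
  have hζn : ‖ζ‖ = 1 := hζ.norm'_eq_one (by norm_num)
  obtain ⟨F0, F2, F3, F4, hF⟩ := gfDiff_dissection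
  have hn : ∀ k : ℕ, ‖ζ ^ k * x‖ < 1 / 2 := fun k => by
    rw [norm_mul, norm_pow, hζn, one_pow, one_mul]; exact h1
  have h := (hasSum_sum (s := Finset.range 5) fun k _ =>
    ((hasSum_gfDiff_pow (hn k)).mul_left ((ζ ^ k) ^ 4))).mul_left (1 / 5)
  have hzero : ∑ k ∈ Finset.range 5, (ζ ^ k) ^ 4 * gfDiff (ζ ^ k * x) = 0 := by
    have hk : ∀ k, (ζ ^ k) ^ 4 * gfDiff (ζ ^ k * x) =
        F0 (-x ^ 5) * (ζ ^ k) ^ 4 + x ^ 2 * F2 (-x ^ 5) * (ζ ^ k) ^ 6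
          - x ^ 3 * F3 (-x ^ 5) * (ζ ^ k) ^ 7 + x ^ 4 * F4 (-x ^ 5) * (ζ ^ k) ^ 8 := fun k => by
      have h5 : (ζ ^ k) ^ 5 = 1 := by rw [← pow_mul, mul_comm, pow_mul, hζ.pow_eq_one, one_pow]
      have := hF (-(ζ ^ k * x))
        (neg_ne_zero.mpr (mul_ne_zero (pow_ne_zero _ (hζ.ne_zero (by norm_num))) h0))
        (by rw [norm_neg]; exact hn k)
      have e : (-(ζ ^ k * x)) ^ 5 = -x ^ 5 := by linear_combination -x ^ 5 * h5
      rw [neg_neg, e] at this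
      rw [this]
      ring
    simp only [hk, Finset.sum_add_distrib, Finset.sum_sub_distrib, ← Finset.mul_sum,
      sum_root_pow hζ]
    norm_num
  rw [hzero, mul_zero] at h
  refine h.congr_fun fun n => ?_
  have : ∀ k, (ζ ^ k) ^ 4 * (((N2 1 5 n : ℂ) - N2 2 5 n) * (ζ ^ k * x) ^ n) =
      ((N2 1 5 n : ℂ) - N2 2 5 n) * x ^ n * (ζ ^ k) ^ (n + 4) := fun k => by ring
  simp only [this, ← Finset.mul_sum, sum_root_pow hζ]
  by_cases hn : n % 5 = 1
  · rw [if_pos hn, if_pos (by omega)]; ring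
  · rw [if_neg hn, if_neg (by omega)]; ring

theorem M2_rank_diff_mod5_12_d1 (n : ℕ) : N2 1 5 (5 * n + 1) = N2 2 5 (5 * n + 1) := by
  set e : ℕ → ℂ := fun n => if n % 5 = 1 then (N2 1 5 n : ℂ) - N2 2 5 n else 0 with he
  have hp : HasFPowerSeriesAt (0 : ℂ → ℂ) (FormalMultilinearSeries.ofScalars ℂ e) 0 := by
    rw [hasFPowerSeriesAt_iff]
    filter_upwards [Metric.ball_mem_nhds (0 : ℂ) (by norm_num : (0 : ℝ) < 1 / 2)] with z hz
    rw [mem_ball_zero_iff] at hz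
    simp only [FormalMultilinearSeries.coeff_ofScalars, smul_eq_mul, Pi.zero_apply]
    rcases eq_or_ne z 0 with rfl | h0
    · convert hasSum_zero with m
      rcases Nat.eq_zero_or_pos m with rfl | hm
      · simp [he]
      · simp [hm.ne']
    · simpa only [mul_comm] using hasSum_class_one h0 hz
  have h := congrArg (fun p => p.coeff (5 * n + 1)) hp.eq_zero
  simp only [FormalMultilinearSeries.coeff_ofScalars, he] at h
  rw [if_pos (by omega)] at h
  have h' : (N2 1 5 (5 * n + 1) : ℂ) - N2 2 5 (5 * n + 1) = 0 := h.trans rfl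
  exact_mod_cast sub_eq_zero.mp h'
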